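/- arXiv:2002.11366 — 11 statements merged into one kernel-verified Lean document; each statement's English description precedes it below -/
import Mathlib

section
/- Let p be a prime with p > 3 and p ≡ 3 (mod 4), and let n be a positive integer with pn ≡ ±1 (mod 5). Then the only positive integers x, y, z satisfying (5pn² − 1)^x + (p(p−5)n² + 1)^y = (pn)^z are (x, y, z) = (1, 1, 2). -/
/-!
Write the equation as `A ^ x + B ^ y = C ^ z`, where `C = p * n`, `A + B = C ^ 2`, `A ≡ -1` and
`B ≡ 1` modulo `C`. Reducing modulo `C` and modulo `5` shows that `x` and `y` are odd. If `z ≤ 2`,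
comparing sizes is enough. Otherwise reducing modulo `2 * n ^ 2` shows that `n` is odd, so `B ≡ 3`
modulo `4`. If `x ≥ 2`, then `C ^ z ≡ 3` modulo `4`, so `z` is odd and `C ≡ 3`, but
`C ^ z ≡ C ^ (2 * x)` modulo `B`, contradicting that the Jacobi symbol `(C / B)` is `-1`.

This leaves `A + B ^ y = C ^ z` with `y = 2 * j + 1`. Both `√A + √-B` and `√A + B ^ j √-B` have norm
a power of `C`, and a descent shows that the second is up to sign an odd power of the first. So
`B ^ j` is up to sign the coefficient of `√-B` in `(√A + √-B) ^ (2 * k + 1)`. For a suitable prime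
`q` dividing `B`, the term `(2 * k + 1) * A ^ k` has the smallest `q`-adic valuation there, hence
`q ^ j` divides `2 * k + 1` and `3 ^ j ≤ 2 * k + 1`, whereas comparing sizes gives `k < j` unless
`j = 0`.
-/

open Finset

/-! ### Descent in the order generated by `√A` and `√-B` -/

section Descent

variable {A B C : ℤ}

lemma lt_mul_sq_add_mul_sq (hC : 0 ≤ C) (hA : C < A) (hB : C < B) {X Y : ℤ}
    (hXY : X ≠ 0 ∨ Y ≠ 0) : C < A * X ^ 2 + B * Y ^ 2 := by
  have : 0 < X ^ 2 ∨ 0 < Y ^ 2 := hXY.imp (fun h ↦ by positivity) fun h ↦ by positivity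
  rcases this with h | h
  · nlinarith [mul_nonneg (hC.trans hB.le) (sq_nonneg Y)]
  · nlinarith [mul_nonneg (hC.trans hA.le) (sq_nonneg X)]

lemma not_mul_sq_add_mul_sq_eq_pow (hC : 1 < C) (hA : C < A) (hB : C < B) {z : ℕ} (hz : z ≤ 1)
    (X Y : ℤ) : A * X ^ 2 + B * Y ^ 2 ≠ C ^ z := by
  intro h
  by_cases hXY : X ≠ 0 ∨ Y ≠ 0
  · have hCz : C ^ z ≤ C ^ 1 := pow_le_pow_right₀ hC.le hz
    linarith [lt_mul_sq_add_mul_sq (by linarith) hA hB hXY]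
  · push Not at hXY
    have : 0 < C ^ z := by positivity
    simp only [hXY] at h
    linarith

lemma eq_zero_of_sq_add_mul_sq_eq_pow (hC : 1 < C) (hA : C < A) (hB : C < B) {z : ℕ} (hz : z ≤ 1)
    {U V : ℤ} (h : U ^ 2 + A * B * V ^ 2 = C ^ z) (hUV : IsCoprime (U + A * V) C) :
    z = 0 ∧ IsUnit U ∧ V = 0 := by
  have hCz : C ^ z ≤ C ^ 1 := pow_le_pow_right₀ hC.le hz
  obtain rfl : V = 0 := by
    by_contra hV
    have hV2 : 0 < V ^ 2 := by positivity
    have hAB : C < A * B := by nlinarith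
    nlinarith [sq_nonneg U]
  rw [mul_zero, add_zero] at hUV
  have hUCz : IsCoprime U (C ^ z) := hUV.pow_right
  have hU : IsUnit U :=
    isCoprime_self.mp (hUCz.of_isCoprime_of_dvd_right ⟨U, by linear_combination -h⟩)
  refine ⟨?_, hU, rfl⟩
  by_contra hz0
  obtain rfl : z = 1 := by omega
  rcases Int.isUnit_iff.mp hU with rfl | rfl <;> linarith

lemma exists_of_mul_sq_add_mul_sq_eq_pow_add_two (hABC : A + B = C ^ 2) (hC : C ≠ 0)
    (hAC : IsCoprime A C) {X Y : ℤ} {z : ℕ} (h : A * X ^ 2 + B * Y ^ 2 = C ^ (z + 2))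
    (hXY : IsCoprime (X + Y) C) :
    ∃ U V : ℤ, X = U - B * V ∧ Y = U + A * V ∧ U ^ 2 + A * B * V ^ 2 = C ^ z ∧
      IsCoprime (U + A * V) C := by
  have hdvd : C ^ 2 ∣ (A * (X + Y)) * (Y - X) :=
    ⟨Y ^ 2 - C ^ z, by linear_combination -h + Y ^ 2 * hABC⟩
  obtain ⟨V, hV⟩ : C ^ 2 ∣ Y - X := (hAC.mul_left hXY).symm.pow_left.dvd_of_dvd_mul_left hdvd
  have hX : X = (X + B * V) - B * V := by ring
  have hY : Y = (X + B * V) + A * V := by linear_combination hV - V * hABC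
  have h2Y : IsCoprime (2 * Y) C := by
    rw [show 2 * Y = X + Y + C * (C * V) by linear_combination hV]
    exact hXY.add_mul_left_left _
  refine ⟨X + B * V, V, hX, hY, mul_left_cancel₀ (pow_ne_zero 2 hC) ?_, hY ▸ h2Y.of_mul_left_right⟩
  calc C ^ 2 * ((X + B * V) ^ 2 + A * B * V ^ 2)
      = A * X ^ 2 + B * (X + B * V + A * V) ^ 2 := by rw [← hABC]; ring
    _ = C ^ 2 * C ^ z := by rw [← hY, h]; ring

lemma exists_of_sq_add_mul_sq_eq_pow_add_two (hABC : A + B = C ^ 2) (hC : C ≠ 0)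
    {U V : ℤ} {z : ℕ} (h : U ^ 2 + A * B * V ^ 2 = C ^ (z + 2)) (hUV : IsCoprime (U + A * V) C) :
    ∃ X Y : ℤ, U = A * X - B * Y ∧ V = X + Y ∧ A * X ^ 2 + B * Y ^ 2 = C ^ z ∧
      IsCoprime (X + Y) C := by
  have hdvd : C ^ 2 ∣ (U + A * V) * (A * V - U) :=
    ⟨A * V ^ 2 - C ^ z, by linear_combination -h + A * V ^ 2 * hABC⟩
  obtain ⟨Y, hY⟩ : C ^ 2 ∣ A * V - U := hUV.symm.pow_left.dvd_of_dvd_mul_left hdvd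
  have hU : U = A * (V - Y) - B * Y := by linear_combination -hY + Y * hABC
  have hV : V = (V - Y) + Y := by ring
  have h2V : IsCoprime (2 * A * V) C := by
    rw [show 2 * A * V = U + A * V + C * (C * Y) by linear_combination hY]
    exact hUV.add_mul_left_left _
  refine ⟨V - Y, Y, hU, hV, mul_left_cancel₀ (pow_ne_zero 2 hC) ?_, hV ▸ h2V.of_mul_left_right⟩
  calc C ^ 2 * (A * (V - Y) ^ 2 + B * Y ^ 2)
      = (A * (V - Y) - B * Y) ^ 2 + A * B * V ^ 2 := by rw [← hABC]; ring
    _ = C ^ 2 * C ^ z := by rw [← hU, h]; ring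

/- The norm of `√A + √-B` is `A + B = C ^ 2`, so dividing by it lowers the exponent by two and
exchanges the shapes `X √A + Y √-B` and `U + V √A √-B`; coprimality singles out this divisor
from its conjugate. -/
theorem exists_eq_units_smul_add_pow (hABC : A + B = C ^ 2) (hC : 1 < C) (hA : C < A) (hB : C < B)
    (hAC : IsCoprime A C) {R : Type*} [CommRing R] {a b : R} (ha : a ^ 2 = A) (hb : b ^ 2 = -B)
    (z : ℕ) :
    (∀ X Y : ℤ, A * X ^ 2 + B * Y ^ 2 = C ^ z → IsCoprime (X + Y) C →
      ∃ t, z = 2 * t ∧ Odd t ∧ ∃ ε : ℤˣ, X * a + Y * b = ε • (a + b) ^ t) ∧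
    (∀ U V : ℤ, U ^ 2 + A * B * V ^ 2 = C ^ z → IsCoprime (U + A * V) C →
      ∃ t, z = 2 * t ∧ Even t ∧ ∃ ε : ℤˣ, U + V * (a * b) = ε • (a + b) ^ t) := by
  induction z using Nat.strong_induction_on with
  | _ z ih =>
  obtain hz | ⟨w, rfl⟩ : z ≤ 1 ∨ ∃ w, z = w + 2 := by
    rcases z with _ | _ | w <;> simp
  · refine ⟨fun X Y h _ ↦ absurd h (not_mul_sq_add_mul_sq_eq_pow hC hA hB hz X Y),
      fun U V h hUV ↦ ?_⟩
    obtain ⟨rfl, ⟨ε, rfl⟩, rfl⟩ := eq_zero_of_sq_add_mul_sq_eq_pow hC hA hB hz h hUV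
    exact ⟨0, rfl, Even.zero, ε, by simp [Units.smul_def]⟩
  · obtain ⟨ih_odd, ih_even⟩ := ih w (by omega)
    have hC0 : C ≠ 0 := by positivity
    refine ⟨fun X Y h hXY ↦ ?_, fun U V h hUV ↦ ?_⟩
    · obtain ⟨U, V, rfl, rfl, hUV, hco⟩ :=
        exists_of_mul_sq_add_mul_sq_eq_pow_add_two hABC hC0 hAC h hXY
      obtain ⟨t, rfl, ht, ε, hε⟩ := ih_even U V hUV hco
      refine ⟨t + 1, by ring, ht.add_one, ε, ?_⟩
      rw [pow_succ, ← smul_mul_assoc, ← hε]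
      push_cast
      linear_combination -V * b * ha - V * a * hb
    · obtain ⟨X, Y, rfl, rfl, hXY, hco⟩ :=
        exists_of_sq_add_mul_sq_eq_pow_add_two hABC hC0 h hUV
      obtain ⟨t, rfl, ht, ε, hε⟩ := ih_odd X Y hXY hco
      refine ⟨t + 1, by ring, ht.add_one, ε, ?_⟩
      rw [pow_succ, ← smul_mul_assoc, ← hε]
      push_cast
      linear_combination -X * ha - Y * hb

end Descent

/-! ### The coefficient of `b` in `(a + b) ^ (2 * k + 1)` -/

/-- The coefficient of `b` in `(a + b) ^ (2 * k + 1)` when `a ^ 2 = A` and `b ^ 2 = D`: the odd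
powers of `b` in the binomial expansion, with one factor `b` taken out of each. -/
def oddPowCoeff (A D : ℤ) (k : ℕ) : ℤ :=
  ∑ i ∈ range (k + 1), ((2 * k + 1).choose (2 * i + 1) : ℤ) * A ^ (k - i) * D ^ i

lemma sum_range_two_mul {M : Type*} [AddCommMonoid M] (f : ℕ → M) (n : ℕ) :
    ∑ m ∈ range (2 * n), f m = ∑ i ∈ range n, f (2 * i) + ∑ i ∈ range n, f (2 * i + 1) := by
  induction n with
  | zero => simp
  | succ n ih =>
    rw [Nat.mul_succ, sum_range_succ, sum_range_succ, ih, sum_range_succ, sum_range_succ]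
    abel

theorem add_pow_two_mul_add_one_eq {R : Type*} [CommRing R] {a b : R} {A D : ℤ}
    (ha : a ^ 2 = A) (hb : b ^ 2 = D) (k : ℕ) :
    (a + b) ^ (2 * k + 1) = oddPowCoeff D A k * a + oddPowCoeff A D k * b := by
  rw [add_pow, show 2 * k + 1 + 1 = 2 * (k + 1) by ring, sum_range_two_mul, ← sum_range_reflect,
    add_comm, oddPowCoeff, oddPowCoeff]
  push_cast
  rw [sum_mul, sum_mul]
  congr 1 <;> refine sum_congr rfl fun i hi ↦ ?_
  all_goals obtain ⟨l, rfl⟩ := Nat.exists_eq_add_of_le (Nat.lt_succ_iff.mp (mem_range.mp hi))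
  · rw [show 2 * (i + l) - 2 * i = 2 * l by omega, Nat.add_sub_cancel_left, ← ha, ← hb]
    ring
  · rw [Nat.add_sub_cancel_left, show 2 * (i + l) + 1 - 2 * l = 2 * i + 1 by omega, ← ha, ← hb,
      ← Nat.choose_symm_of_eq_add (show 2 * (i + l) + 1 = 2 * i + 1 + 2 * l by ring)]
    ring

/-! ### Divisibility of `oddPowCoeff` by powers of a prime -/

lemma exists_isPrimePow_dvd_five_le {B : ℕ} (hB : Odd B) (h5 : 5 ≤ B) :
    ∃ Q, IsPrimePow Q ∧ Q ∣ B ∧ 5 ≤ Q := by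
  obtain ⟨k, m, hm, rfl⟩ := Nat.exists_eq_pow_mul_and_not_dvd (by omega : B ≠ 0) 3 (by norm_num)
  obtain rfl | hm1 := eq_or_ne m 1
  · rw [mul_one] at h5 ⊢
    have hk : k ≠ 0 := by rintro rfl; omega
    exact ⟨3 ^ k, Nat.prime_three.isPrimePow.pow hk, dvd_rfl, h5⟩
  · have hq : m.minFac.Prime := Nat.minFac_prime hm1
    have hodd : Odd m.minFac := (Nat.odd_mul.mp hB).2.of_dvd_nat m.minFac_dvd
    have h3 : m.minFac ≠ 3 := fun h ↦ hm (h ▸ m.minFac_dvd)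
    refine ⟨m.minFac, hq.isPrimePow, Dvd.dvd.mul_left m.minFac_dvd _, ?_⟩
    obtain ⟨r, hr⟩ := hodd
    have := hq.two_le
    omega

lemma pow_succ_dvd_mul_pow_of_dvd_mul {q e g s c : ℕ} (hq : q.Prime) (hs : s ≠ 0)
    (hsq : s < q ^ g) (h : q ^ e ∣ s * c) : q ^ (e + 1) ∣ c * q ^ g := by
  obtain rfl | hc := eq_or_ne c 0
  · simp
  have hqg : q ^ g ≠ 0 := pow_ne_zero g hq.ne_zero
  rw [hq.pow_dvd_iff_le_factorization (mul_ne_zero hs hc), Nat.factorization_mul hs hc,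
    Finsupp.add_apply] at h
  rw [hq.pow_dvd_iff_le_factorization (mul_ne_zero hc hqg), Nat.factorization_mul hc hqg,
    Finsupp.add_apply, hq.factorization_pow, Finsupp.single_eq_same]
  have : s.factorization q < g := (Nat.pow_lt_pow_iff_right hq.one_lt).mp
    ((Nat.le_of_dvd (by omega) (Nat.ordProj_dvd s q)).trans_lt hsq)
  omega

/- `(2 * i + 1) * choose t (2 * i + 1) = t * choose (t - 1) (2 * i)`, and `2 * i + 1 < 5 ^ i` bounds
the power of `q` lost to the factor `2 * i + 1`. -/
lemma pow_succ_dvd_choose_mul_pow {q g e t i : ℕ} (hq : q.Prime) (h5 : 5 ≤ q ^ g)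
    (ht : q ^ e ∣ t) (hi : i ≠ 0) : q ^ (e + 1) ∣ t.choose (2 * i + 1) * (q ^ g) ^ i := by
  obtain _ | s := t
  · simp
  rw [← pow_mul]
  refine pow_succ_dvd_mul_pow_of_dvd_mul hq (2 * i).succ_ne_zero ?_ ?_
  · calc 2 * i + 1 < 1 + i * 4 := by omega
      _ ≤ (1 + 4) ^ i := one_add_mul_le_pow_of_sq_nonneg zero_le zero_le zero_le i
      _ ≤ q ^ (g * i) := by rw [pow_mul]; exact Nat.pow_le_pow_left h5 i
  · rw [mul_comm, Nat.succ_eq_add_one, ← Nat.add_one_mul_choose_eq]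
    exact ht.mul_right _

theorem pow_dvd_of_pow_dvd_oddPowCoeff {A D : ℤ} {q g j k : ℕ} (hq : q.Prime) (h5 : 5 ≤ q ^ g)
    (hD : (q : ℤ) ^ g ∣ D) (hA : IsCoprime (q : ℤ) A) (h : (q : ℤ) ^ j ∣ oddPowCoeff A D k) :
    q ^ j ∣ 2 * k + 1 := by
  induction j with
  | zero => simp
  | succ e ih =>
    have he : q ^ e ∣ 2 * k + 1 := ih ((pow_dvd_pow _ e.le_succ).trans h)
    rw [oddPowCoeff, sum_range_succ'] at h
    have htail : (q : ℤ) ^ (e + 1) ∣ ∑ i ∈ range k,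
        ((2 * k + 1).choose (2 * (i + 1) + 1) : ℤ) * A ^ (k - (i + 1)) * D ^ (i + 1) := by
      refine dvd_sum fun i _ ↦ ?_
      rw [mul_right_comm]
      refine Dvd.dvd.mul_right ?_ _
      have hi : (q : ℤ) ^ (e + 1) ∣
          ((2 * k + 1).choose (2 * (i + 1) + 1) : ℤ) * ((q : ℤ) ^ g) ^ (i + 1) :=
        mod_cast pow_succ_dvd_choose_mul_pow hq h5 he i.succ_ne_zero
      exact hi.trans (mul_dvd_mul_left _ (pow_dvd_pow_of_dvd hD _))
    have hhead := (dvd_add_right htail).mp h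
    simp only [mul_zero, zero_add, Nat.choose_one_right, Nat.sub_zero, pow_zero, mul_one] at hhead
    exact_mod_cast hA.pow.dvd_of_dvd_mul_right hhead

lemma three_pow_le_of_pow_dvd_oddPowCoeff {A D : ℤ} {B j k : ℕ} (hB : Odd B) (h5 : 5 ≤ B)
    (hBA : IsCoprime (B : ℤ) A) (hBD : (B : ℤ) ∣ D) (h : (B : ℤ) ^ j ∣ oddPowCoeff A D k) :
    3 ^ j ≤ 2 * k + 1 := by
  obtain ⟨Q, hQ, hQB, hQ5⟩ := exists_isPrimePow_dvd_five_le hB h5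
  obtain ⟨q, g, hq, hg, rfl⟩ := (isPrimePow_nat_iff Q).mp hQ
  have hqB : q ∣ B := (dvd_pow_self q hg.ne').trans hQB
  have hqB' : (q : ℤ) ∣ B := mod_cast hqB
  have hq3 : 3 ≤ q := by
    obtain ⟨r, hr⟩ := hB.of_dvd_nat hqB
    have := hq.two_le
    omega
  have hdvd : q ^ j ∣ 2 * k + 1 :=
    pow_dvd_of_pow_dvd_oddPowCoeff hq hQ5 ((mod_cast hQB : (q : ℤ) ^ g ∣ B).trans hBD)
      (hBA.of_isCoprime_of_dvd_left hqB') ((pow_dvd_pow_of_dvd hqB' j).trans h)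
  exact (Nat.pow_le_pow_left hq3 j).trans (Nat.le_of_dvd (by omega) hdvd)

/-! ### The equation `A + B ^ y = C ^ z` with `A + B = C ^ 2` -/

lemma exists_complex_sqrts {A B : ℤ} (hA : 0 ≤ A) (hB : 0 < B) :
    ∃ a b : ℂ, a ^ 2 = A ∧ b ^ 2 = -B ∧
      ∀ X Y X' Y' : ℤ, X * a + Y * b = X' * a + Y' * b → Y = Y' := by
  have hA' : (0 : ℝ) ≤ A := mod_cast hA
  have hB' : (0 : ℝ) < B := mod_cast hB
  refine ⟨(√(A : ℝ) : ℝ), (√(B : ℝ) : ℝ) * Complex.I, ?_, ?_, fun X Y X' Y' h ↦ ?_⟩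
  · exact_mod_cast Real.sq_sqrt hA'
  · rw [mul_pow, Complex.I_sq, ← Complex.ofReal_pow, Real.sq_sqrt hB'.le]
    simp
  · have him : (Y : ℝ) * √(B : ℝ) = Y' * √(B : ℝ) := by
      simpa using congrArg Complex.im h
    exact_mod_cast mul_right_cancel₀ (Real.sqrt_pos.mpr hB').ne' him

theorem exists_abs_eq_abs_oddPowCoeff {A B C X Y : ℤ} {z : ℕ} (hABC : A + B = C ^ 2) (hC : 1 < C)
    (hA : C < A) (hB : C < B) (hAC : IsCoprime A C) (h : A * X ^ 2 + B * Y ^ 2 = C ^ z)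
    (hXY : IsCoprime (X + Y) C) :
    ∃ k, z = 2 * (2 * k + 1) ∧ |Y| = |oddPowCoeff A (-B) k| := by
  obtain ⟨a, b, ha, hb, hab⟩ := exists_complex_sqrts (by linarith : 0 ≤ A) (by linarith : 0 < B)
  obtain ⟨t, hz, ⟨k, rfl⟩, ε, hε⟩ :=
    (exists_eq_units_smul_add_pow hABC hC hA hB hAC ha hb z).1 X Y h hXY
  rw [add_pow_two_mul_add_one_eq ha (by rw [hb, Int.cast_neg]) k, Units.smul_def, zsmul_eq_mul,
    mul_add, ← mul_assoc, ← mul_assoc, ← Int.cast_mul, ← Int.cast_mul] at hε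
  refine ⟨k, hz, ?_⟩
  rw [hab _ _ _ _ hε, abs_mul, Int.isUnit_iff_abs_eq.mp ε.isUnit, one_mul]

lemma add_pow_lt_add_pow {A B y : ℕ} (hA : 1 < A) (hy : 1 < y) : A + B ^ y < (A + B) ^ y :=
  calc A + B ^ y < A ^ y + B ^ y := by gcongr; exact lt_self_pow₀ hA hy
    _ ≤ (A + B) ^ y := pow_add_pow_le A.zero_le B.zero_le (by omega)

theorem eq_one_of_add_pow_eq_pow {A B C y z : ℕ} (hABC : A + B = C ^ 2) (hC : 1 < C)
    (hC_odd : Odd C) (hA : C < A) (hB : C < B) (hB_odd : Odd B) (hBC : B ≡ 1 [MOD C])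
    (hy : Odd y) (h : A + B ^ y = C ^ z) : y = 1 := by
  obtain ⟨j, rfl⟩ := hy
  by_contra hj
  have hABC' : (A : ℤ) + B = (C : ℤ) ^ 2 := mod_cast hABC
  have hBC' : (B : ℤ) ≡ 1 [ZMOD C] := mod_cast (Int.natCast_modEq_iff.mpr hBC)
  obtain ⟨r, hr⟩ : (C : ℤ) ∣ 1 - B := hBC'.dvd
  obtain ⟨s, hs⟩ : (C : ℤ) ∣ 1 - B ^ j := by simpa using (hBC'.pow j).dvd
  have hAC : IsCoprime (A : ℤ) C := ⟨-1, C + r, by linear_combination -hABC' - hr⟩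
  have hAB : IsCoprime (A : ℤ) B := by
    rw [eq_sub_of_add_eq' hABC', sub_eq_add_neg, ← mul_neg_one (A : ℤ)]
    exact hAC.pow_right.add_mul_left_right _
  have hco : IsCoprime (1 + (B : ℤ) ^ j) C := by
    have h2C : IsCoprime (2 : ℤ) C := mod_cast Nat.isCoprime_iff_coprime.mpr
      (Nat.coprime_two_left.mpr hC_odd)
    rw [show 1 + (B : ℤ) ^ j = 2 + C * -s by linear_combination -hs]
    exact h2C.add_mul_left_left _
  obtain ⟨k, rfl, hk⟩ := exists_abs_eq_abs_oddPowCoeff (X := 1) (Y := (B : ℤ) ^ j) hABC'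
    (mod_cast hC) (mod_cast hA) (mod_cast hB) hAC
    (by rw [one_pow, mul_one, ← pow_mul, mul_comm j, ← pow_succ']; exact_mod_cast h) hco
  have hB5 : 5 ≤ B := by
    obtain ⟨c, rfl⟩ := hC_odd
    obtain ⟨b, rfl⟩ := hB_odd
    omega
  have h3j : 3 ^ j ≤ 2 * k + 1 := three_pow_le_of_pow_dvd_oddPowCoeff hB_odd hB5 hAB.symm
    (dvd_neg.mpr dvd_rfl) ((abs_dvd_abs _ _).mp hk.dvd)
  have hkj : 2 * k + 1 < 2 * j + 1 := by
    refine (Nat.pow_lt_pow_iff_right (Nat.one_lt_pow two_ne_zero hC)).mp ?_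
    rw [← pow_mul, ← h, ← hABC]
    exact add_pow_lt_add_pow (by omega) (by omega)
  have hbern : 1 + j * 2 ≤ 3 ^ j :=
    one_add_mul_le_pow_of_sq_nonneg zero_le zero_le zero_le j
  omega

/-! ### Congruence conditions -/

lemma odd_of_pow_add_pow_eq_pow {A B C : ℤ} {x y z : ℕ} (hC : 2 < C) (hA : A ≡ -1 [ZMOD C])
    (hB : B ≡ 1 [ZMOD C]) (hz : z ≠ 0) (h : A ^ x + B ^ y = C ^ z) : Odd x := by
  by_contra hx
  have h2 : A ^ x + B ^ y ≡ 2 [ZMOD C] := by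
    simpa [(Nat.not_odd_iff_even.mp hx).neg_one_pow] using (hA.pow x).add (hB.pow y)
  have hdvd : C ∣ A ^ x + B ^ y := h ▸ dvd_pow_self C hz
  exact hC.not_ge (Int.le_of_dvd two_pos ((Int.ModEq.dvd_iff h2).mp hdvd))

/- Squaring gives `(2 ^ y - 1) ^ 2 = 1`, while `2 ^ y = (-1) ^ (y / 2)` for even `y`. -/
lemma odd_of_neg_one_pow_add_two_pow_eq_pow {c : ZMod 5} {x y z : ℕ} (hc : c ^ 2 = 1)
    (hx : Odd x) (h : (-1) ^ x + 2 ^ y = c ^ z) : Odd y := by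
  by_contra hy
  obtain ⟨w, rfl⟩ := even_iff_exists_two_mul.mp (Nat.not_odd_iff_even.mp hy)
  have hsq : ((-1) ^ x + 2 ^ (2 * w) : ZMod 5) ^ 2 = 1 := by
    rw [h, pow_right_comm, hc, one_pow]
  rw [hx.neg_one_pow, pow_mul, show (2 : ZMod 5) ^ 2 = -1 by decide] at hsq
  rcases neg_one_pow_eq_or (ZMod 5) w with hw | hw <;> rw [hw] at hsq <;> revert hsq <;> decide

lemma dvd_add_one_of_dvd_pow_add_pow {M A B : ℤ} {x y : ℕ} (hA : A ^ 2 ≡ 1 [ZMOD M])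
    (hB : B ≡ 1 [ZMOD M]) (hx : Odd x) (h : M ∣ A ^ x + B ^ y) : M ∣ A + 1 := by
  obtain ⟨u, rfl⟩ := hx
  have hmod : A ^ (2 * u + 1) + B ^ y ≡ A + 1 [ZMOD M] := by
    simpa [pow_succ, pow_mul] using ((hA.pow u).mul_right A).add (hB.pow y)
  exact (Int.ModEq.dvd_iff hmod).mp h

/- If `n` is even, then `2 * n ^ 2` divides `(p * n) ^ 3`, and reducing modulo it leaves
`2 * n ^ 2 ∣ a * p * n ^ 2`. -/
lemma odd_of_pow_add_pow_eq_mul_pow {a p n : ℤ} {x y z : ℕ} (ha : Odd a) (hp : Odd p) (hn : n ≠ 0)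
    (hx : Odd x) (hz : 3 ≤ z)
    (h : (a * p * n ^ 2 - 1) ^ x + (p * (p - a) * n ^ 2 + 1) ^ y = (p * n) ^ z) : Odd n := by
  by_contra hne
  obtain ⟨m, rfl⟩ := even_iff_exists_two_mul.mp (Int.not_odd_iff_even.mp hne)
  obtain ⟨r, hr⟩ := even_iff_exists_two_mul.mp (hp.sub_odd ha)
  have hA : (a * p * (2 * m) ^ 2 - 1) ^ 2 ≡ 1 [ZMOD 8 * m ^ 2] :=
    (Int.modEq_of_dvd ⟨2 * (a * p) ^ 2 * m ^ 2 - a * p, by ring⟩).symm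
  have hB : p * (p - a) * (2 * m) ^ 2 + 1 ≡ 1 [ZMOD 8 * m ^ 2] :=
    (Int.modEq_of_dvd ⟨p * r, by rw [hr]; ring⟩).symm
  have hC : 8 * m ^ 2 ∣ (p * (2 * m)) ^ z :=
    Dvd.dvd.trans ⟨p ^ 3 * m, by ring⟩ (pow_dvd_pow (p * (2 * m)) hz)
  obtain ⟨w, hw⟩ := dvd_add_one_of_dvd_pow_add_pow hA hB hx (h ▸ hC)
  have hm : 4 * m ^ 2 ≠ 0 := mul_ne_zero four_ne_zero (pow_ne_zero 2 (right_ne_zero_of_mul hn))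
  have heven : a * p = 2 * w := mul_left_cancel₀ hm (by linear_combination hw)
  exact Int.not_even_iff_odd.mpr (ha.mul hp) (heven ▸ even_two_mul w)

section JacobiSymbol

open scoped NumberTheorySymbols

lemma jacobiSym_eq_neg_one_of_modEq_one {b c : ℕ} (hb : b % 4 = 3) (hc : c % 4 = 3)
    (h : b ≡ 1 [MOD c]) : J(c | b) = -1 := by
  rw [jacobiSym.quadratic_reciprocity_three_mod_four hc hb,
    jacobiSym.mod_left' (mod_cast h : (b : ℤ) % c = 1 % c), jacobiSym.one_left]

lemma even_of_pow_modEq_sq_pow {b : ℕ} {c : ℤ} {x z : ℕ} (hc : J(c | b) = -1)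
    (h : c ^ z ≡ (c ^ 2) ^ x [ZMOD b]) : Even z := by
  have hJ : J(c ^ z | b) = J((c ^ 2) ^ x | b) := jacobiSym.mod_left' h
  rw [jacobiSym.pow_left, jacobiSym.pow_left, jacobiSym.pow_left, hc, neg_one_sq, one_pow] at hJ
  exact (neg_one_pow_eq_one_iff_even (by norm_num)).mp hJ

lemma eq_neg_one_and_odd_of_pow_eq_neg_one {c : ZMod 4} {z : ℕ} (h : c ^ z = -1) :
    c = -1 ∧ Odd z := by
  have hz : Odd z := by
    by_contra hz
    obtain ⟨w, rfl⟩ := even_iff_exists_two_mul.mp (Nat.not_odd_iff_even.mp hz)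
    have hsq : ∀ d : ZMod 4, d ^ 2 ≠ -1 := by decide
    exact hsq (c ^ w) (by rw [← h, pow_right_comm, pow_mul])
  have hc : c ^ 2 = 1 := by
    have hunit : ∀ u : (ZMod 4)ˣ, u ^ 2 = 1 := by decide
    obtain ⟨u, rfl⟩ : IsUnit c := (isUnit_pow_iff hz.pos.ne').mp (h ▸ isUnit_one.neg)
    exact congrArg Units.val (hunit u)
  obtain ⟨w, rfl⟩ := hz
  rw [pow_succ, pow_mul, hc, one_pow, one_mul] at h
  exact ⟨h, odd_two_mul_add_one w⟩

theorem le_one_of_pow_add_pow_eq_pow {A B C x y z : ℕ} (hABC : A + B = C ^ 2) (hC : Odd C)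
    (hB : B % 4 = 3) (hBC : B ≡ 1 [MOD C]) (hy : Odd y) (h : A ^ x + B ^ y = C ^ z) : x ≤ 1 := by
  by_contra! hx
  have hA : 4 ∣ A ^ x := by
    have hC4 : C ^ 2 % 4 = 1 :=
      mod_cast Int.sq_mod_four_eq_one_of_odd (x := (C : ℤ)) (mod_cast hC)
    calc 2 ^ 2 ∣ A ^ 2 := pow_dvd_pow_of_dvd (by omega) 2
      _ ∣ A ^ x := pow_dvd_pow A hx
  have hB' : (B : ZMod 4) = -1 := (ZMod.natCast_eq_natCast_iff' B 3 4).mpr hB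
  have hCz : (C : ZMod 4) ^ z = -1 := by
    rw [← Nat.cast_pow, ← h, Nat.cast_add, (ZMod.natCast_eq_zero_iff _ _).mpr hA, Nat.cast_pow,
      hB', hy.neg_one_pow, zero_add]
  obtain ⟨hC', hz⟩ := eq_neg_one_and_odd_of_pow_eq_neg_one hCz
  have hC3 : C % 4 = 3 := (ZMod.natCast_eq_natCast_iff' C 3 4).mp hC'
  have hmod : C ^ z ≡ (C ^ 2) ^ x [MOD B] := by
    rw [← h, ← hABC]
    exact (Nat.add_modEq_left_iff.mpr (dvd_pow_self B hy.pos.ne')).trans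
      (Nat.add_modEq_right.symm.pow x)
  exact Nat.not_even_iff_odd.mpr hz
    (even_of_pow_modEq_sq_pow (jacobiSym_eq_neg_one_of_modEq_one hB hC3 hBC)
      (mod_cast Int.natCast_modEq_iff.mpr hmod))

end JacobiSymbol

lemma eq_one_one_two_of_le_two {A B C x y z : ℕ} (hABC : A + B = C ^ 2) (hA : 1 < A) (hB : 1 < B)
    (hC : 1 < C) (hx : x ≠ 0) (hy : y ≠ 0) (hz : z ≤ 2) (h : A ^ x + B ^ y = C ^ z) :
    x = 1 ∧ y = 1 ∧ z = 2 := by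
  have hAx : A ≤ A ^ x := Nat.le_self_pow hx A
  have hBy : B ≤ B ^ y := Nat.le_self_pow hy B
  have hCz : C ^ z ≤ C ^ 2 := Nat.pow_le_pow_right (by omega) hz
  refine ⟨(Nat.pow_eq_self_iff hA).mp ?_, (Nat.pow_eq_self_iff hB).mp ?_,
    (Nat.pow_right_inj hC).mp ?_⟩ <;> omega

theorem eq_one_one_two_of_odd {A B C x y z : ℕ} (hABC : A + B = C ^ 2) (hC : 1 < C)
    (hC_odd : Odd C) (hA : C < A) (hB : C < B) (hB4 : B % 4 = 3) (hBC : B ≡ 1 [MOD C])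
    (hx : x ≠ 0) (hy : Odd y) (h : A ^ x + B ^ y = C ^ z) : x = 1 ∧ y = 1 ∧ z = 2 := by
  obtain rfl : x = 1 := by
    have := le_one_of_pow_add_pow_eq_pow hABC hC_odd hB4 hBC hy h
    omega
  rw [pow_one] at h
  obtain rfl : y = 1 :=
    eq_one_of_add_pow_eq_pow hABC hC hC_odd hA hB (Nat.odd_iff.mpr (by omega)) hBC hy h
  rw [pow_one, hABC] at h
  exact ⟨rfl, rfl, (Nat.pow_right_injective hC h).symm⟩

/-! ### The family `A = a * p * n ^ 2 - 1`, `B = p * (p - a) * n ^ 2 + 1`, `C = p * n` -/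

section Family

variable {a p n : ℕ}

lemma le_mul_mul_sq (ha : a ≠ 0) (hn : n ≠ 0) : p ≤ a * p * n ^ 2 :=
  (Nat.le_mul_of_pos_left p (Nat.pos_of_ne_zero ha)).trans
    (Nat.le_mul_of_pos_right _ (by positivity))

lemma sub_one_add_add_one_eq_sq (ha : a ≠ 0) (hap : a < p) (hn : n ≠ 0) :
    (a * p * n ^ 2 - 1) + (p * (p - a) * n ^ 2 + 1) = (p * n) ^ 2 := by
  have : 1 ≤ a * p * n ^ 2 := (by omega : 1 ≤ p).trans (le_mul_mul_sq ha hn)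
  zify [this, hap.le]
  ring

lemma odd_left_exponent {x y z : ℕ} (ha : a ≠ 0) (hp : 2 < p) (hn : n ≠ 0)
    (h : (a * p * n ^ 2 - 1) ^ x + (p * (p - a) * n ^ 2 + 1) ^ y = (p * n) ^ z) : Odd x := by
  have hpA : p ≤ a * p * n ^ 2 := le_mul_mul_sq ha hn
  have hA1 : 1 ≤ a * p * n ^ 2 := by omega
  have hA : ((a * p * n ^ 2 - 1 : ℕ) : ℤ) ≡ -1 [ZMOD (p * n : ℕ)] :=
    (Int.modEq_of_dvd ⟨a * n, by push_cast [hA1]; ring⟩).symm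
  have hB : ((p * (p - a) * n ^ 2 + 1 : ℕ) : ℤ) ≡ 1 [ZMOD (p * n : ℕ)] :=
    (Int.modEq_of_dvd ⟨(p - a : ℕ) * n, by push_cast; ring⟩).symm
  have hC : 2 < p * n := hp.trans_le (Nat.le_mul_of_pos_right p (Nat.pos_of_ne_zero hn))
  refine odd_of_pow_add_pow_eq_pow (z := z) (mod_cast hC) hA hB ?_ (mod_cast h)
  rintro rfl
  have hAx : 0 < (a * p * n ^ 2 - 1) ^ x := Nat.pow_pos (by omega)
  have hBy : 0 < (p * (p - a) * n ^ 2 + 1) ^ y := by positivity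
  rw [pow_zero] at h
  omega

lemma odd_right_exponent {x y z : ℕ} (ha : a ≠ 0) (ha5 : 5 ∣ a) (hap : a < p)
    (hpn : (p * n) ^ 2 % 5 = 1) (hx : Odd x)
    (h : (a * p * n ^ 2 - 1) ^ x + (p * (p - a) * n ^ 2 + 1) ^ y = (p * n) ^ z) : Odd y := by
  have hn : n ≠ 0 := by rintro rfl; simp at hpn
  have hC : ((p * n : ℕ) : ZMod 5) ^ 2 = 1 :=
    mod_cast (ZMod.natCast_eq_natCast_iff' ((p * n) ^ 2) 1 5).mpr hpn
  have hA : ((a * p * n ^ 2 - 1 : ℕ) : ZMod 5) = -1 := by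
    rw [Nat.cast_sub ((by omega : 1 ≤ p).trans (le_mul_mul_sq ha hn)), mul_assoc, Nat.cast_mul,
      (ZMod.natCast_eq_zero_iff a 5).mpr ha5, zero_mul, Nat.cast_one, zero_sub]
  have hB : ((p * (p - a) * n ^ 2 + 1 : ℕ) : ZMod 5) = 2 := by
    have hABC := congrArg (Nat.cast : ℕ → ZMod 5) (sub_one_add_add_one_eq_sq ha hap hn)
    rw [Nat.cast_add, Nat.cast_pow, hA, hC] at hABC
    linear_combination hABC
  refine odd_of_neg_one_pow_add_two_pow_eq_pow (z := z) hC hx ?_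
  rw [← hA, ← hB]
  exact_mod_cast congrArg (Nat.cast : ℕ → ZMod 5) h

lemma odd_of_three_le_exponent {x y z : ℕ} (ha : Odd a) (hp : Odd p) (hap : a < p) (hn : n ≠ 0)
    (hx : Odd x) (hz : 3 ≤ z)
    (h : (a * p * n ^ 2 - 1) ^ x + (p * (p - a) * n ^ 2 + 1) ^ y = (p * n) ^ z) : Odd n := by
  have hA1 : 1 ≤ a * p * n ^ 2 := hp.pos.trans_le (le_mul_mul_sq ha.pos.ne' hn)
  zify [hA1, hap.le] at h
  exact_mod_cast odd_of_pow_add_pow_eq_mul_pow (a := a) (p := p) (n := n) (mod_cast ha)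
    (mod_cast hp) (mod_cast hn) hx hz h

lemma mul_mul_sq_add_one_mod_four (ha : a % 4 = 1) (hp : p % 4 = 3) (hap : a < p) (hn : Odd n) :
    (p * (p - a) * n ^ 2 + 1) % 4 = 3 := by
  obtain ⟨m, rfl⟩ := hn
  obtain ⟨r, hr⟩ : ∃ r, p - a = 4 * r + 2 := ⟨(p - a) / 4, by omega⟩
  obtain ⟨s, rfl⟩ : ∃ s, p = 4 * s + 3 := ⟨p / 4, by omega⟩
  rw [hr]
  ring_nf
  omega

theorem eq_one_one_two_of_odd_exponents {x y z : ℕ} (ha1 : 1 < a) (ha : a % 4 = 1) (hap : a < p)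
    (hp : p % 4 = 3) (hn : n ≠ 0) (hx : Odd x) (hy : Odd y)
    (h : (a * p * n ^ 2 - 1) ^ x + (p * (p - a) * n ^ 2 + 1) ^ y = (p * n) ^ z) :
    x = 1 ∧ y = 1 ∧ z = 2 := by
  have hABC := sub_one_add_add_one_eq_sq (by omega : a ≠ 0) hap hn
  have hC : 1 < p * n :=
    (by omega : 1 < p).trans_le (Nat.le_mul_of_pos_right p (Nat.pos_of_ne_zero hn))
  have hCsq : p * n ≤ p * n ^ 2 := Nat.mul_le_mul_left p (Nat.le_self_pow two_ne_zero n)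
  have hA : p * n < a * p * n ^ 2 - 1 := by
    have : 2 * (p * n ^ 2) ≤ a * p * n ^ 2 := by rw [mul_assoc]; gcongr; exact ha1
    omega
  have hB : p * n < p * (p - a) * n ^ 2 + 1 := by
    have : p * n ^ 2 ≤ p * (p - a) * n ^ 2 := by
      gcongr; exact Nat.le_mul_of_pos_right p (Nat.sub_pos_of_lt hap)
    omega
  obtain hz | hz := Nat.lt_or_ge z 3
  · exact eq_one_one_two_of_le_two hABC (hC.trans hA) (hC.trans hB) hC hx.pos.ne' hy.pos.ne'
      (by omega) h
  have hp_odd : Odd p := Nat.odd_iff.mpr (by omega)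
  have hn_odd : Odd n := odd_of_three_le_exponent (Nat.odd_iff.mpr (by omega)) hp_odd hap hn hx hz h
  have hBC : p * (p - a) * n ^ 2 + 1 ≡ 1 [MOD p * n] :=
    Nat.add_modEq_right_iff.mpr ⟨(p - a) * n, by ring⟩
  exact eq_one_one_two_of_odd hABC hC (hp_odd.mul hn_odd) hA hB
    (mul_mul_sq_add_one_mod_four ha hp hap hn_odd) hBC hx.pos.ne' hy h

end Family

theorem stmt_0_general (p n : ℕ) (hp3 : 3 < p) (hp4 : p % 4 = 3)
    (h5 : p * n % 5 = 1 ∨ p * n % 5 = 4) (x y z : ℕ)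
    (heq : (5 * p * n ^ 2 - 1) ^ x + (p * (p - 5) * n ^ 2 + 1) ^ y = (p * n) ^ z) :
    x = 1 ∧ y = 1 ∧ z = 2 := by
  have hn : n ≠ 0 := by rintro rfl; omega
  have hap : 5 < p := by omega
  have hpn : (p * n) ^ 2 % 5 = 1 := by rcases h5 with h | h <;> rw [Nat.pow_mod, h]
  have hx : Odd x := odd_left_exponent (by norm_num) (by omega) hn heq
  have hy : Odd y := odd_right_exponent (by norm_num) dvd_rfl hap hpn hx heq
  exact eq_one_one_two_of_odd_exponents (by norm_num) rfl hap hp4 hn hx hy heq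

theorem stmt_0 (p n : ℕ) (hp : p.Prime) (hp3 : 3 < p) (hp4 : p % 4 = 3)
    (hn : 0 < n) (h5 : p * n % 5 = 1 ∨ p * n % 5 = 4)
    (x y z : ℕ) (hx : 0 < x) (hy : 0 < y) (hz : 0 < z)
    (heq : (5 * p * n ^ 2 - 1) ^ x + (p * (p - 5) * n ^ 2 + 1) ^ y = (p * n) ^ z) :
    x = 1 ∧ y = 1 ∧ z = 2 :=
  stmt_0_general p n hp3 hp4 h5 x y z heq
end

section
/- Let n be a positive integer with n ≡ 3 (mod 5), or n ≡ 2 (mod 5), or 5 ∣ n. Then the only positive integers x, y, z satisfying (35n² − 1)^x + (14n² + 1)^y = (7n)^z are (x, y, z) = (1, 1, 2). -/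
/-!
Modulo `7` the exponent `x` is odd, so with `u = 7 * n ^ 2` the equation reads
`(7 * n) ^ z = (1 + 2 * u) ^ y - (1 - 5 * u) ^ x`. The cases `z ≤ 3` are direct. If `4 ≤ z`,
reduction modulo `u ^ 2` gives `u ∣ 5 * x + 2 * y`, so the exponents are large, while a high power
of `7 * u` divides a difference of powers of two numbers that are congruent modulo `7 * u`. Padé
approximants to the power function turn this difference into integers divisible by such a power;
for `13 ≤ n` they are too small for that unless they vanish, and two consecutive approximants
cannot both give `0` since they are not proportional. When `max x y` is much larger than
`min x y`, the same argument with the smaller power treated as a constant and `u` in place of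
`7 * u` is more efficient. The values `n < 13` fall to congruences.
-/

section Pade

open Finset Polynomial

lemma ringChoose_neg_succ (a m : ℕ) :
    Ring.choose (-((a : ℤ) + 1)) m = (-1) ^ m * ((a + m).choose m : ℤ) := by
  rw [Ring.choose_neg, show (a : ℤ) + 1 + m - 1 = (a + m : ℕ) by push_cast; ring,
    Ring.choose_natCast, Units.smul_def, smul_eq_mul, Int.negOnePow_def]
  simp

lemma sum_neg_one_pow_mul_choose_mul_choose (a b k : ℕ) :
    ∑ j ∈ range (b + 1), (-1 : ℤ) ^ j * k.choose j * (a + b - j).choose a =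
      (-1) ^ b * Ring.choose ((k : ℤ) - (a + 1)) b := by
  rw [sub_eq_add_neg, Ring.add_choose_eq b (Commute.all _ _),
    Nat.sum_antidiagonal_eq_sum_range_succ_mk, mul_sum]
  refine sum_congr rfl fun j hj ↦ ?_
  obtain ⟨i, rfl⟩ := Nat.exists_eq_add_of_le (mem_range_succ_iff.mp hj)
  have hsymm : (a + (j + i) - j).choose a = (a + i).choose i := by
    rw [show a + (j + i) - j = a + i by omega, Nat.choose_symm_add]
  have hsign : (-1 : ℤ) ^ i * (-1) ^ i = 1 := by rw [← mul_pow]; simp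
  rw [Ring.choose_natCast, Nat.add_sub_cancel_left, ringChoose_neg_succ, hsymm, pow_add]
  linear_combination (-(-1) ^ j * k.choose j * (a + i).choose i : ℤ) * hsign

lemma ringChoose_sub_succ_of_le {a k : ℕ} (h : k ≤ a) (b : ℕ) :
    (-1) ^ b * Ring.choose ((k : ℤ) - (a + 1)) b = (a + b - k).choose b := by
  obtain ⟨i, rfl⟩ := Nat.exists_eq_add_of_le h
  rw [show (k : ℤ) - ((k + i : ℕ) + 1) = -((i : ℤ) + 1) by push_cast; ring, ringChoose_neg_succ,
    ← mul_assoc, ← mul_pow, show k + i + b - k = i + b by omega]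
  simp

lemma ringChoose_sub_succ_of_lt {a k : ℕ} (h : a < k) (b : ℕ) :
    Ring.choose ((k : ℤ) - (a + 1)) b = (k - a - 1).choose b := by
  rw [← Ring.choose_natCast, Nat.sub_sub, Nat.cast_sub h]
  push_cast
  rfl

variable {R S : Type*} [CommRing R] [CommRing S]

/-- The numerator, homogenized in `α` and `β`, of the Padé approximant of type `[a / b]` at `1` to
the power function with exponent `ν`, up to a scalar. The denominator is `padePoly b a M β α`, and
the parameter `M` stands for `ν + b`. -/
def padePoly (a b M : ℕ) (α β : R) : R :=
  ∑ k ∈ range (a + 1), ((a + b - k).choose b : R) * M.choose k * (α - β) ^ k * β ^ (a - k)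

lemma map_padePoly (f : R →+* S) (a b M : ℕ) (α β : R) :
    f (padePoly a b M α β) = padePoly a b M (f α) (f β) := by
  simp [padePoly]

lemma choose_mul_pow_mul_add_pow {M j : ℕ} (hj : j ≤ M) (h β : R) :
    (M.choose j : R) * h ^ j * (β + h) ^ (M - j) =
      ∑ k ∈ range (M + 1), (M.choose k : R) * k.choose j * h ^ k * β ^ (M - k) := by
  obtain ⟨m, rfl⟩ := Nat.exists_eq_add_of_le hj
  rw [Nat.add_sub_cancel_left, add_assoc, sum_range_add, sum_eq_zero, zero_add, add_comm β,
    add_pow, mul_sum]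
  · refine sum_congr rfl fun i _ ↦ ?_
    have hchoose := Nat.choose_mul (n := j + m) (Nat.le_add_right j i)
    simp only [Nat.add_sub_cancel_left] at hchoose
    rw [← Nat.cast_mul, hchoose, Nat.add_sub_add_left, pow_add]
    push_cast
    ring
  · intro k hk
    rw [Nat.choose_eq_zero_of_lt (mem_range.mp hk)]
    simp

lemma pow_mul_padePoly {b M ν : ℕ} (a : ℕ) (hν : M = ν + b) (α β : R) :
    α ^ ν * padePoly b a M β α = ∑ k ∈ range (M + 1), (M.choose k : R) * (α - β) ^ k *
      β ^ (M - k) * ((-1) ^ b * Ring.choose ((k : ℤ) - (a + 1)) b : ℤ) := by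
  simp only [← sum_neg_one_pow_mul_choose_mul_choose, Int.cast_sum, mul_sum, padePoly]
  rw [sum_comm]
  refine sum_congr rfl fun j hj ↦ ?_
  rw [mem_range_succ_iff] at hj
  have hexpand := choose_mul_pow_mul_add_pow (show j ≤ M by omega) (α - β) β
  rw [add_sub_cancel, show M - j = ν + (b - j) by omega, pow_add] at hexpand
  rw [add_comm b a, ← neg_sub α β, neg_pow]
  calc _ = (-1) ^ j * ((a + b - j).choose a : R) *
        (M.choose j * (α - β) ^ j * (α ^ ν * α ^ (b - j))) := by ring
    _ = _ := by
      rw [hexpand, mul_sum]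
      refine sum_congr rfl fun k _ ↦ ?_
      push_cast
      ring

theorem sub_pow_dvd_pow_mul_padePoly_sub {a b M ν μ : ℕ} (hν : M = ν + b) (hμ : M = μ + a)
    (α β : R) :
    (α - β) ^ (a + b + 1) ∣ α ^ ν * padePoly b a M β α - β ^ μ * padePoly a b M α β := by
  have hlow : ∑ k ∈ range (a + 1), (M.choose k : R) * (α - β) ^ k * β ^ (M - k) *
      ((-1) ^ b * Ring.choose ((k : ℤ) - (a + 1)) b : ℤ) = β ^ μ * padePoly a b M α β := by
    rw [padePoly, mul_sum]
    refine sum_congr rfl fun k hk ↦ ?_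
    rw [mem_range_succ_iff] at hk
    rw [ringChoose_sub_succ_of_le hk, show M - k = μ + (a - k) by omega, pow_add]
    push_cast
    ring
  rw [pow_mul_padePoly a hν, show M + 1 = a + 1 + μ by omega, sum_range_add, hlow,
    add_sub_cancel_left]
  refine dvd_sum fun i _ ↦ ?_
  rcases lt_or_ge i b with hi | hi
  · rw [ringChoose_sub_succ_of_lt (by omega),
      Nat.choose_eq_zero_of_lt (show a + 1 + i - a - 1 < b by omega)]
    simp
  · exact (((pow_dvd_pow _ (by omega)).mul_left _).mul_right _).mul_right _

lemma padePoly_zero_right (a b M : ℕ) (α : R) : padePoly a b M α 0 = M.choose a * α ^ a := by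
  rw [padePoly, sum_range_succ, sum_eq_zero fun k hk ↦ ?_]
  · simp
  · rw [zero_pow (Nat.sub_ne_zero_of_lt (mem_range.mp hk)), mul_zero]

lemma padePoly_zero_left (a : ℕ) {b M : ℕ} (hb : b < M) (β : R) :
    padePoly a b M 0 β = (-1) ^ a * (M - b - 1).choose a * β ^ a := by
  have hsum := congrArg (Int.cast (R := R)) (sum_neg_one_pow_mul_choose_mul_choose b a M)
  rw [ringChoose_sub_succ_of_lt hb] at hsum
  push_cast at hsum
  rw [← hsum, padePoly, sum_mul]
  refine sum_congr rfl fun k hk ↦ ?_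
  rw [zero_sub, neg_pow, ← pow_mul_pow_sub β (mem_range_succ_iff.mp hk), add_comm b a]
  ring

lemma natDegree_padePoly_le (a b M : ℕ) {p q : R[X]} (hp : p.natDegree ≤ 1)
    (hq : q.natDegree ≤ 1) : (padePoly a b M p q).natDegree ≤ a := by
  refine natDegree_sum_le_of_forall_le _ _ fun k hk ↦ ?_
  have hsub : (p - q).natDegree ≤ 1 := (natDegree_sub_le p q).trans (max_le hp hq)
  rw [← Nat.cast_mul, mul_assoc, ← C_eq_natCast]
  refine (natDegree_C_mul_le _ _).trans (natDegree_mul_le.trans ?_)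
  have hka := mem_range_succ_iff.mp hk
  calc _ ≤ k * 1 + (a - k) * 1 :=
        add_le_add (natDegree_pow_le_of_le k hsub) (natDegree_pow_le_of_le _ hq)
    _ = a := by omega

/-- The determinant of the Padé approximants of types `[a / b]` and `[a + 1 / b + 1]`; its
non-vanishing says that they are not proportional. -/
def padeDet (a b M : ℕ) (α β : R) : R :=
  padePoly a b M α β * padePoly (b + 1) (a + 1) (M + 1) β α -
    padePoly (a + 1) (b + 1) (M + 1) α β * padePoly b a M β α

lemma map_padeDet (f : R →+* S) (a b M : ℕ) (α β : R) :
    f (padeDet a b M α β) = padeDet a b M (f α) (f β) := by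
  simp only [padeDet, map_sub, map_mul, map_padePoly]

lemma sub_pow_dvd_pow_mul_padeDet {a b M ν μ : ℕ} (hν : M = ν + b) (hμ : M = μ + a) (α β : R) :
    (α - β) ^ (a + b + 1) ∣ α ^ ν * padeDet a b M α β := by
  have h₀ := sub_pow_dvd_pow_mul_padePoly_sub hν hμ α β
  have h₁ := sub_pow_dvd_pow_mul_padePoly_sub (a := a + 1) (b := b + 1) (M := M + 1)
    (by omega : M + 1 = ν + (b + 1)) (by omega : M + 1 = μ + (a + 1)) α β
  have h₁' := (pow_dvd_pow (α - β) (by omega : a + b + 1 ≤ a + 1 + (b + 1) + 1)).trans h₁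
  convert (h₁'.mul_left (padePoly a b M α β)).sub
    (h₀.mul_left (padePoly (a + 1) (b + 1) (M + 1) α β)) using 1
  rw [padeDet]
  ring

lemma padeDet_zero_left_ne_zero {a b M : ℕ} (hM : a + b < M) {β : ℤ} (hβ : β ≠ 0) :
    padeDet a b M 0 β ≠ 0 := by
  have heval : padeDet a b M 0 β = (-1) ^ a * β ^ (a + b + 1) *
      ((M - b - 1).choose a * (M + 1).choose (b + 1) +
        (M - b - 1).choose (a + 1) * M.choose b : ℕ) := by
    rw [padeDet, padePoly_zero_left a (by omega), padePoly_zero_left (a + 1) (by omega),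
      padePoly_zero_right, padePoly_zero_right, Nat.add_sub_add_right]
    push_cast
    ring
  have hpos : 0 < (M - b - 1).choose a * (M + 1).choose (b + 1) :=
    Nat.mul_pos (Nat.choose_pos (by omega)) (Nat.choose_pos (by omega))
  rw [heval]
  exact mul_ne_zero (mul_ne_zero (by simp) (pow_ne_zero _ hβ)) (by norm_cast; omega)

lemma natDegree_padeDet_X_C_le (a b M : ℕ) (β : ℤ) :
    (padeDet a b M X (C β)).natDegree ≤ a + b + 1 := by
  have hX : (X : ℤ[X]).natDegree ≤ 1 := natDegree_X_le
  have hC : (C β).natDegree ≤ 1 := by simp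
  refine (natDegree_sub_le _ _).trans (max_le ?_ ?_) <;> refine natDegree_mul_le.trans ?_
  · have := natDegree_padePoly_le a b M hX hC
    have := natDegree_padePoly_le (b + 1) (a + 1) (M + 1) hC hX
    omega
  · have := natDegree_padePoly_le (a + 1) (b + 1) (M + 1) hX hC
    have := natDegree_padePoly_le b a M hC hX
    omega

-- As a polynomial in `α`, the determinant is a constant multiple of `(α - β) ^ (a + b + 1)`.
theorem padeDet_ne_zero {a b M ν μ : ℕ} (hν : M = ν + b) (hμ : M = μ + a) (haν : a < ν) {α β : ℤ}
    (hβ : β ≠ 0) (hαβ : α ≠ β) : padeDet a b M α β ≠ 0 := by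
  have heval (γ : ℤ) : (padeDet a b M X (C β)).eval γ = padeDet a b M γ β := by
    simpa using map_padeDet (evalRingHom γ) a b M X (C β)
  have hX : ¬ X - C β ∣ X ^ ν := fun h ↦ by
    rw [dvd_iff_isRoot, IsRoot, eval_pow, eval_X] at h
    exact hβ (eq_zero_of_pow_eq_zero h)
  obtain ⟨q, hq⟩ := (prime_X_sub_C β).pow_dvd_of_dvd_mul_left _ hX
    (sub_pow_dvd_pow_mul_padeDet hν hμ X (C β))
  have hdet0 := padeDet_zero_left_ne_zero (by omega : a + b < M) hβ
  rw [← heval, hq, eval_mul] at hdet0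
  have hq0 : q ≠ 0 := by rintro rfl; simp at hdet0
  have hdeg := natDegree_padeDet_X_C_le a b M β
  rw [hq, ((monic_X_sub_C β).pow _).natDegree_mul' hq0, natDegree_pow, natDegree_X_sub_C] at hdeg
  rw [eq_C_of_natDegree_le_zero (by omega : q.natDegree ≤ 0), eval_C] at hdet0
  rw [← heval, hq, eq_C_of_natDegree_le_zero (by omega : q.natDegree ≤ 0), eval_mul, eval_C]
  refine mul_ne_zero ?_ (right_ne_zero_of_mul hdet0)
  simpa using fun h ↦ absurd (sub_eq_zero.mp h) hαβ

lemma padePoly_mul_eq_padePoly_mul {a b M ν μ : ℕ} (hν : M = ν + b) (hμ : M = μ + a)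
    {W α β η θ : ℤ} (hWβ : IsCoprime W β) (hW : W ∣ α - β)
    (h : W ^ (a + b + 1) ∣ α ^ ν * η - β ^ μ * θ)
    (hη : 2 * |padePoly a b M α β * η| < W ^ (a + b + 1))
    (hθ : 2 * |padePoly b a M β α * θ| < W ^ (a + b + 1)) :
    padePoly a b M α β * η = padePoly b a M β α * θ := by
  obtain ⟨s, hs⟩ := h
  obtain ⟨t, ht⟩ := (pow_dvd_pow_of_dvd hW _).trans (sub_pow_dvd_pow_mul_padePoly_sub hν hμ α β)
  have hdvd : W ^ (a + b + 1) ∣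
      β ^ μ * (padePoly a b M α β * η - padePoly b a M β α * θ) :=
    ⟨padePoly b a M β α * s - η * t, by linear_combination padePoly b a M β α * hs - η * ht⟩
  have hlt : |padePoly a b M α β * η - padePoly b a M β α * θ| < W ^ (a + b + 1) :=
    (abs_sub _ _).trans_lt (by linarith)
  exact sub_eq_zero.mp (Int.eq_zero_of_abs_lt_dvd (hWβ.pow.dvd_of_dvd_mul_left hdvd) hlt)

-- Two consecutive approximants cannot both be proportional to `(θ, η)`, so one of them forces
-- a nonzero multiple of a power of `W`.
theorem exists_pow_le_abs_padePoly_mul {a b M ν μ : ℕ} (hν : M = ν + b) (hμ : M = μ + a)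
    (haν : a < ν) {W α β η θ : ℤ} (hβ : β ≠ 0) (hαβ : α ≠ β) (hη : η ≠ 0) (hWβ : IsCoprime W β)
    (hW : W ∣ α - β) (h : W ^ (a + b + 3) ∣ α ^ ν * η - β ^ μ * θ) :
    ∃ i ≤ 1, W ^ (a + i + (b + i) + 1) ≤ 2 * |padePoly (a + i) (b + i) (M + i) α β * η| ∨
      W ^ (a + i + (b + i) + 1) ≤ 2 * |padePoly (b + i) (a + i) (M + i) β α * θ| := by
  by_contra! hsmall
  have heq (i : ℕ) (hi : i ≤ 1) : padePoly (a + i) (b + i) (M + i) α β * η =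
      padePoly (b + i) (a + i) (M + i) β α * θ :=
    padePoly_mul_eq_padePoly_mul (by omega : M + i = ν + (b + i)) (by omega : M + i = μ + (a + i))
      hWβ hW ((pow_dvd_pow W (by omega)).trans h) (hsmall i hi).1 (hsmall i hi).2
  have h₀ := heq 0 zero_le_one
  have h₁ := heq 1 le_rfl
  simp only [add_zero] at h₀
  refine mul_ne_zero hη (padeDet_ne_zero hν hμ haν hβ hαβ) ?_
  rw [padeDet]
  linear_combination padePoly (b + 1) (a + 1) (M + 1) β α * h₀ - padePoly b a M β α * h₁

end Pade

section Size

open Finset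

variable {R : Type*} [CommRing R] [LinearOrder R] [IsStrictOrderedRing R]

lemma choose_mul_pow_mul_pow_le_add_pow {p q : R} (hp : 0 ≤ p) (hq : 0 ≤ q) (s b : ℕ) :
    (s + b).choose b * p ^ s * q ^ b ≤ (p + q) ^ (s + b) := by
  rw [add_pow, ← Nat.choose_symm_add]
  refine le_trans (le_of_eq ?_) (single_le_sum (fun k _ ↦ by positivity)
    (mem_range.mpr (by omega : s < s + b + 1)))
  rw [Nat.add_sub_cancel_left]
  ring

lemma abs_padePoly_mul_le {a M : ℕ} (b : ℕ) (haM : a ≤ M) {α β γ δ ε : R} (hβ : |β| ≤ γ)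
    (hδ : |α - β| ≤ δ) (hε : 0 ≤ ε) :
    |padePoly a b M α β| * ε ^ b * (γ + ε) ^ M ≤
      (γ + ε) ^ (a + b) * (δ + (γ + ε)) ^ M := by
  have hγ₀ : 0 ≤ γ := (abs_nonneg β).trans hβ
  have hδ₀ : 0 ≤ δ := (abs_nonneg _).trans hδ
  have hterm (k : ℕ) (hk : k ∈ range (a + 1)) :
      |((a + b - k).choose b : R) * M.choose k * (α - β) ^ k * β ^ (a - k)| * ε ^ b *
        (γ + ε) ^ M ≤ (γ + ε) ^ (a + b) * (δ ^ k * (γ + ε) ^ (M - k) * M.choose k) := by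
    obtain ⟨s, rfl⟩ := Nat.exists_eq_add_of_le (mem_range_succ_iff.mp hk)
    obtain ⟨m, rfl⟩ := Nat.exists_eq_add_of_le haM
    rw [show k + s + b - k = s + b by omega, show k + s + m - k = s + m by omega,
      Nat.add_sub_cancel_left, abs_mul, abs_mul, abs_mul, abs_pow, abs_pow, Nat.abs_cast,
      Nat.abs_cast]
    calc _ ≤ ((s + b).choose b : R) * (k + s + m).choose k * δ ^ k * γ ^ s * ε ^ b *
          (γ + ε) ^ (k + s + m) := by gcongr
      _ = ((k + s + m).choose k * δ ^ k * (γ + ε) ^ (k + s + m)) *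
          ((s + b).choose b * γ ^ s * ε ^ b) := by ring
      _ ≤ ((k + s + m).choose k * δ ^ k * (γ + ε) ^ (k + s + m)) * (γ + ε) ^ (s + b) := by
        gcongr
        exact choose_mul_pow_mul_pow_le_add_pow hγ₀ hε s b
      _ = _ := by ring
  calc _ ≤ (∑ k ∈ range (a + 1),
        |((a + b - k).choose b : R) * M.choose k * (α - β) ^ k * β ^ (a - k)|) * ε ^ b *
          (γ + ε) ^ M := by
        gcongr
        exact abs_sum_le_sum_abs _ _
    _ ≤ ∑ k ∈ range (a + 1), (γ + ε) ^ (a + b) * (δ ^ k * (γ + ε) ^ (M - k) * M.choose k) := by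
        rw [sum_mul, sum_mul]
        exact sum_le_sum hterm
    _ ≤ ∑ k ∈ range (M + 1), (γ + ε) ^ (a + b) * (δ ^ k * (γ + ε) ^ (M - k) * M.choose k) :=
        sum_le_sum_of_subset_of_nonneg (by gcongr) fun _ _ _ ↦ by positivity
    _ = _ := by rw [← mul_sum, ← add_pow]

-- The shift `ε` of `γ` is a free parameter balancing the two binomial expansions, and the `k`-th
-- powers allow fractional exponents of `2`.
theorem abs_padePoly_pow_le {a M : ℕ} (b : ℕ) (haM : a ≤ M) {α β γ δ ε U V : R} (hβ : |β| ≤ γ)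
    (hδ : |α - β| ≤ δ) (hε : 0 < ε) (hV : V = γ + ε) {k r s t : ℕ} (hs : V ^ k ≤ 2 ^ s * U ^ k)
    (ht : V ^ k ≤ 2 ^ t * ε ^ k) (hr : (δ + V) ^ k ≤ 2 ^ r * V ^ k) :
    |padePoly a b M α β| ^ k ≤ 2 ^ (s * a + t * b + r * M) * U ^ (k * a) := by
  have hγ₀ : 0 ≤ γ := (abs_nonneg β).trans hβ
  have hδ₀ : 0 ≤ δ := (abs_nonneg _).trans hδ
  have hV₀ : 0 < V := by linarith
  have hU₀ : 0 ≤ 2 ^ s * U ^ k := (pow_pos hV₀ k).le.trans hs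
  have hbound := abs_padePoly_mul_le b haM hβ hδ hε.le
  rw [← hV] at hbound
  refine le_of_mul_le_mul_right ?_ (by positivity : 0 < (ε ^ k) ^ b * (V ^ k) ^ M)
  calc _ = (|padePoly a b M α β| * ε ^ b * V ^ M) ^ k := by ring
    _ ≤ (V ^ (a + b) * (δ + V) ^ M) ^ k := by gcongr
    _ = (V ^ k) ^ a * (V ^ k) ^ b * ((δ + V) ^ k) ^ M := by ring
    _ ≤ (2 ^ s * U ^ k) ^ a * (2 ^ t * ε ^ k) ^ b * (2 ^ r * V ^ k) ^ M := by gcongr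
    _ = _ := by ring

lemma two_mul_abs_mul_lt_pow {W X η : R} {κ k E f a g N : ℕ} (hW : 2 ^ κ ≤ W)
    (hX : |X| ^ k ≤ 2 ^ E * W ^ (k * a)) (hη : |η| ^ k ≤ 2 ^ f * W ^ (k * g))
    (hN : E + f + k + k * κ * (a + g) < k * κ * N) : 2 * |X * η| < W ^ N := by
  have hlt : a + g < N := lt_of_mul_lt_mul_left ((Nat.le_add_left _ _).trans_lt hN) (Nat.zero_le _)
  obtain ⟨e, rfl⟩ := Nat.exists_eq_add_of_le hlt.le
  have hW₀ : 0 < W := lt_of_lt_of_le (by positivity) hW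
  have he : E + f + k < k * κ * e := by linarith [mul_add (k * κ) (a + g) e]
  refine lt_of_pow_lt_pow_left₀ k (by positivity) ?_
  calc (2 * |X * η|) ^ k = 2 ^ k * (|X| ^ k * |η| ^ k) := by rw [abs_mul]; ring
    _ ≤ 2 ^ k * (2 ^ E * W ^ (k * a) * (2 ^ f * W ^ (k * g))) := by gcongr
    _ = 2 ^ (E + f + k) * W ^ (k * (a + g)) := by ring
    _ < 2 ^ (k * κ * e) * W ^ (k * (a + g)) := by gcongr; norm_num
    _ = (2 ^ κ) ^ (k * e) * W ^ (k * (a + g)) := by ring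
    _ ≤ W ^ (k * e) * W ^ (k * (a + g)) := by gcongr
    _ = (W ^ (a + g + e)) ^ k := by ring

lemma abs_pow_pow_le {U α : R} {f k : ℕ} (h : |α| ^ k ≤ 2 ^ f * U ^ k) (m : ℕ) :
    |α ^ m| ^ k ≤ 2 ^ (f * m) * U ^ (k * m) := by
  rw [abs_pow, ← pow_mul, mul_comm m, pow_mul, pow_mul, pow_mul, ← mul_pow]
  gcongr

lemma pow_four_le_two_mul_pow_four {v w : R} (hv : 0 ≤ v) (h : 6 * v ≤ 7 * w) :
    v ^ 4 ≤ 2 * w ^ 4 := by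
  have hpow : (6 * v) ^ 4 ≤ (7 * w) ^ 4 := by gcongr
  have hw : 0 ≤ w ^ 4 := by positivity
  linarith [mul_pow 6 v 4, mul_pow 7 w 4]

end Size

section Gap

variable {u : ℤ} {x y w : ℕ}

-- The type `[b + x / b]` is chosen because `(1 - 5 * u) ^ x` has degree `x` in `u`: both integers
-- being compared with the power of `u` then have the same degree.
theorem not_pow_dvd_of_twelve_mul_le (hu : 2 ^ 10 ≤ u) (hw : 152 ≤ w) (hwy : w ≤ y)
    (hyw : 12 * y < 14 * w + 7) (hxw : 12 * x ≤ 5 * w) :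
    ¬ u ^ w ∣ (1 + 2 * u) ^ y - (1 - 5 * u) ^ x := by
  intro hdvd
  obtain ⟨b, hb⟩ : ∃ b, 2 * b + x + 3 ≤ w ∧ w < 2 * b + x + 5 := ⟨(w - x - 3) / 2, by omega⟩
  have hP (i : ℕ) : |padePoly (b + x + i) (b + i) (y + b + i) (1 + 2 * u) 1| ^ 4 ≤
      2 ^ (4 * (b + x + i) + 1 * (b + i) + 4 * (y + b + i)) * u ^ (4 * (b + x + i)) :=
    abs_padePoly_pow_le (γ := 1) (δ := 2 * u) (ε := 2 * u - 1) (V := 2 * u) (b + i) (by omega)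
      (by simp) (abs_le.mpr ⟨by linarith, by linarith⟩) (by linarith) (by ring) (le_of_eq (by ring))
      (by rw [pow_one]; exact pow_four_le_two_mul_pow_four (by linarith) (by linarith))
      (le_of_eq (by ring))
  have hQ (i : ℕ) : |padePoly (b + i) (b + x + i) (y + b + i) 1 (1 + 2 * u)| ^ 4 ≤
      2 ^ (16 * (b + i) + 1 * (b + x + i) + 1 * (y + b + i)) * u ^ (4 * (b + i)) :=
    abs_padePoly_pow_le (γ := 1 + 2 * u) (δ := 2 * u) (ε := 14 * u - 1) (V := 16 * u) (b + x + i)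
      (by omega) (abs_of_pos (by linarith)).le (abs_le.mpr ⟨by linarith, by linarith⟩)
      (by linarith) (by ring) (le_of_eq (by ring))
      (by rw [pow_one]; exact pow_four_le_two_mul_pow_four (by linarith) (by linarith))
      (by rw [pow_one]; exact pow_four_le_two_mul_pow_four (by linarith) (by linarith))
  have hθ : |(1 - 5 * u) ^ x| ^ 4 ≤ 2 ^ (10 * x) * u ^ (4 * x) := by
    refine abs_pow_pow_le ?_ x
    calc |1 - 5 * u| ^ 4 ≤ (5 * u) ^ 4 := by
          gcongr; exact abs_le.mpr ⟨by linarith, by linarith⟩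
      _ ≤ 2 ^ 10 * u ^ 4 := by rw [mul_pow]; gcongr; norm_num
  obtain ⟨i, hi, h | h⟩ := exists_pow_le_abs_padePoly_mul (a := b + x) (b := b) (M := y + b)
    (ν := y) (μ := y - x) (W := u) (α := 1 + 2 * u) (β := 1) (η := 1) (θ := (1 - 5 * u) ^ x) rfl
    (by omega) (by omega) one_ne_zero (by linarith) one_ne_zero isCoprime_one_right ⟨2, by ring⟩
    (by simpa using (pow_dvd_pow u (by omega)).trans hdvd)
  · exact h.not_gt (two_mul_abs_mul_lt_pow (f := 0) (g := 0) hu (hP i) (by simp) (by omega))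
  · exact h.not_gt (two_mul_abs_mul_lt_pow hu (hQ i) hθ (by omega))

theorem not_pow_dvd_of_three_mul_le (hu : 2 ^ 10 ≤ u) (hw : 152 ≤ w) (hwx : w ≤ x)
    (hxw : 24 * x < 26 * w + 13) (hyw : 3 * y ≤ w) :
    ¬ u ^ w ∣ (1 + 2 * u) ^ y - (1 - 5 * u) ^ x := by
  intro hdvd
  obtain ⟨a, ha⟩ : ∃ a, 2 * a + y + 3 ≤ w ∧ w < 2 * a + y + 5 := ⟨(w - y - 3) / 2, by omega⟩
  have hP (i : ℕ) : |padePoly (a + i) (a + y + i) (x + a + i) 1 (1 - 5 * u)| ^ 4 ≤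
      2 ^ (22 * (a + i) + 1 * (a + y + i) + 1 * (x + a + i)) * u ^ (4 * (a + i)) :=
    abs_padePoly_pow_le (γ := 5 * u) (δ := 5 * u) (ε := 35 * u) (V := 40 * u) (a + y + i)
      (by omega) (abs_le.mpr ⟨by linarith, by linarith⟩) (abs_le.mpr ⟨by linarith, by linarith⟩)
      (by linarith) (by ring) (by rw [mul_pow]; gcongr; norm_num)
      (by rw [pow_one]; exact pow_four_le_two_mul_pow_four (by linarith) (by linarith))
      (by rw [pow_one]; exact pow_four_le_two_mul_pow_four (by linarith) (by linarith))
  have hQ (i : ℕ) : |padePoly (a + y + i) (a + i) (x + a + i) (1 - 5 * u) 1| ^ 4 ≤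
      2 ^ (10 * (a + y + i) + 1 * (a + i) + 4 * (x + a + i)) * u ^ (4 * (a + y + i)) :=
    abs_padePoly_pow_le (γ := 1) (δ := 5 * u) (ε := 5 * u - 1) (V := 5 * u) (a + i) (by omega)
      (by simp) (abs_le.mpr ⟨by linarith, by linarith⟩) (by linarith) (by ring)
      (by rw [mul_pow]; gcongr; norm_num)
      (by rw [pow_one]; exact pow_four_le_two_mul_pow_four (by linarith) (by linarith))
      (le_of_eq (by ring))
  have hη : |(1 + 2 * u) ^ y| ^ 4 ≤ 2 ^ (5 * y) * u ^ (4 * y) := by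
    refine abs_pow_pow_le ?_ y
    calc |1 + 2 * u| ^ 4 = (1 + 2 * u) ^ 4 := by rw [abs_of_pos (by linarith)]
      _ ≤ 2 * (2 * u) ^ 4 := pow_four_le_two_mul_pow_four (by linarith) (by linarith)
      _ = 2 ^ 5 * u ^ 4 := by ring
  obtain ⟨i, hi, h | h⟩ := exists_pow_le_abs_padePoly_mul (a := a) (b := a + y) (M := x + a)
    (ν := x - y) (μ := x) (W := u) (α := 1) (β := 1 - 5 * u) (η := (1 + 2 * u) ^ y) (θ := 1)
    (by omega) rfl (by omega) (by omega) (by linarith) (by positivity) ⟨5, 1, by ring⟩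
    ⟨5, by ring⟩ (by simpa using (pow_dvd_pow u (by omega)).trans hdvd)
  · exact h.not_gt (two_mul_abs_mul_lt_pow hu (hP i) hη (by omega))
  · exact h.not_gt (two_mul_abs_mul_lt_pow (f := 0) (g := 0) hu (hQ i) (by simp) (by omega))

theorem not_seven_mul_pow_dvd {a b : ℕ} (hu : 2 ^ 13 ≤ 7 * u) (h7 : 7 ∣ u) (hab : x + a = y + b)
    (hay : a < y) (hw : a + b + 3 ≤ w) (hya : x < 10 * a + 12) (hyb : y < 10 * b + 12) :
    ¬ (7 * u) ^ w ∣ (1 + 2 * u) ^ y - (1 - 5 * u) ^ x := by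
  intro hdvd
  have hP (i : ℕ) : |padePoly (a + i) (b + i) (x + a + i) (1 + 2 * u) (1 - 5 * u)| ^ 1 ≤
      2 ^ (0 * (a + i) + 2 * (b + i) + 1 * (x + a + i)) * (7 * u) ^ (1 * (a + i)) :=
    abs_padePoly_pow_le (γ := 5 * u) (δ := 7 * u) (ε := 2 * u) (V := 7 * u) (b + i) (by omega)
      (abs_le.mpr ⟨by linarith, by linarith⟩) (abs_le.mpr ⟨by linarith, by linarith⟩)
      (by linarith) (by ring) (by simp) (by linarith) (by linarith)
  have hQ (i : ℕ) : |padePoly (b + i) (a + i) (x + a + i) (1 - 5 * u) (1 + 2 * u)| ^ 1 ≤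
      2 ^ (0 * (b + i) + 2 * (a + i) + 1 * (x + a + i)) * (7 * u) ^ (1 * (b + i)) :=
    abs_padePoly_pow_le (γ := 5 * u) (δ := 7 * u) (ε := 2 * u) (V := 7 * u) (a + i) (by omega)
      (abs_le.mpr ⟨by linarith, by linarith⟩) (abs_le.mpr ⟨by linarith, by linarith⟩)
      (by linarith) (by ring) (by simp) (by linarith) (by linarith)
  have hcop : IsCoprime (7 * u) (1 - 5 * u) := by
    obtain ⟨v, rfl⟩ := h7
    exact ⟨25 * v, 1 + 5 * (7 * v), by ring⟩
  obtain ⟨i, hi, h | h⟩ := exists_pow_le_abs_padePoly_mul (a := a) (b := b) (M := x + a)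
    (ν := y) (μ := x) (W := 7 * u) (α := 1 + 2 * u) (β := 1 - 5 * u) (η := 1) (θ := 1)
    (by omega) rfl hay (by omega) (by linarith) one_ne_zero hcop
    ⟨1, by ring⟩ (by simpa using (pow_dvd_pow (7 * u) (by omega)).trans hdvd)
  · exact h.not_gt (two_mul_abs_mul_lt_pow (f := 0) (g := 0) hu (hP i) (by simp) (by omega))
  · exact h.not_gt (two_mul_abs_mul_lt_pow (f := 0) (g := 0) hu (hQ i) (by simp) (by omega))

end Gap

section Sieve

lemma pow_modEq_pow_of_mod_eq {a m k l x y : ℕ} (h : a ^ (k + l) ≡ a ^ k [MOD m]) (hx : k ≤ x)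
    (hy : k ≤ y) (hxy : x ≡ y [MOD l]) : a ^ x ≡ a ^ y [MOD m] := by
  have hper (r q : ℕ) : a ^ (k + r + l * q) ≡ a ^ (k + r) [MOD m] := by
    induction q with
    | zero => rfl
    | succ q ih =>
      calc a ^ (k + r + l * (q + 1)) = a ^ (k + l) * a ^ (r + l * q) := by ring
        _ ≡ a ^ k * a ^ (r + l * q) [MOD m] := h.mul_right _
        _ = a ^ (k + r + l * q) := by ring
        _ ≡ a ^ (k + r) [MOD m] := ih
  wlog hle : x ≤ y generalizing x y
  · exact (this hy hx hxy.symm (le_of_not_ge hle)).symm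
  obtain ⟨r, rfl⟩ := Nat.exists_eq_add_of_le hx
  obtain ⟨q, hq⟩ := (Nat.modEq_iff_dvd' hle).mp hxy
  rw [show y = k + r + l * q by omega]
  exact (hper r q).symm

variable {A B C P Q e x₀ z₀ x y z : ℕ} {s : List (ℕ × ℕ)}

-- A pair `p = (m, t)` tests the equation modulo `m` after raising it to the power `t`, which makes
-- the right-hand side constant on `z ≡ z₀ [MOD e]`.
theorem add_pow_ne_pow_of_sieve
    (hper : ∀ p ∈ s, B ^ Q ≡ 1 [MOD p.1] ∧ C ^ (z₀ * p.2 + e * p.2) ≡ C ^ (z₀ * p.2) [MOD p.1])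
    (hsieve : ∀ j < Q, ∃ p ∈ s, ¬ (A + B ^ j) ^ p.2 ≡ C ^ (z₀ * p.2) [MOD p.1])
    (hQ : 0 < Q) (hz : z₀ ≤ z) (hze : z ≡ z₀ [MOD e]) : A + B ^ y ≠ C ^ z := by
  intro heq
  obtain ⟨p, hp, hne⟩ := hsieve (y % Q) (Nat.mod_lt _ hQ)
  obtain ⟨hB, hC⟩ := hper p hp
  refine hne ?_
  calc (A + B ^ (y % Q)) ^ p.2 ≡ (A + B ^ y) ^ p.2 [MOD p.1] :=
        ((pow_modEq_pow_of_mod_eq (by simpa using hB) (Nat.zero_le _) (Nat.zero_le _)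
          (Nat.mod_modEq y Q)).add_left A).pow _
    _ = C ^ (z * p.2) := by rw [heq, pow_mul]
    _ ≡ C ^ (z₀ * p.2) [MOD p.1] :=
        pow_modEq_pow_of_mod_eq hC (Nat.mul_le_mul_right _ hz) le_rfl (hze.mul_right' _)

theorem pow_add_pow_ne_pow_of_sieve
    (hper : ∀ p ∈ s, A ^ (x₀ + P) ≡ A ^ x₀ [MOD p.1] ∧ B ^ Q ≡ 1 [MOD p.1] ∧
      C ^ (z₀ * p.2 + e * p.2) ≡ C ^ (z₀ * p.2) [MOD p.1])
    (hsieve : ∀ i < P, ∀ j < Q, ∃ p ∈ s,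
      ¬ (A ^ (x₀ + i) + B ^ j) ^ p.2 ≡ C ^ (z₀ * p.2) [MOD p.1])
    (hP : 0 < P) (hQ : 0 < Q) (hx : x₀ ≤ x) (hz : z₀ ≤ z) (hze : z ≡ z₀ [MOD e]) :
    A ^ x + B ^ y ≠ C ^ z := by
  refine add_pow_ne_pow_of_sieve (s := s) (fun p hp ↦ (hper p hp).2) (fun j hj ↦ ?_) hQ hz hze
  obtain ⟨p, hp, hne⟩ := hsieve ((x - x₀) % P) (Nat.mod_lt _ hP) j hj
  refine ⟨p, hp, fun h ↦ hne (.trans ?_ h)⟩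
  refine ((pow_modEq_pow_of_mod_eq (hper p hp).1 (Nat.le_add_right _ _) hx ?_).add_right _).pow _
  convert (Nat.mod_modEq (x - x₀) P).add_left x₀ using 1
  omega

end Sieve

section SmallCases

variable {x y z : ℕ}

lemma ne_pow_of_one (hx : Odd x) (hz : 6 ≤ z) (hz4 : z ≡ 6 [MOD 4]) :
    34 ^ x + 15 ^ y ≠ 7 ^ z := by
  obtain rfl | hx2 : x = 1 ∨ 2 ≤ x := by have := hx.pos; omega
  · rw [pow_one]
    exact add_pow_ne_pow_of_sieve (Q := 98) (s := [(343, 1), (4, 1), (197, 49)])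
      (by decide +kernel) (by decide +kernel) (by simp) hz hz4
  · exact pow_add_pow_ne_pow_of_sieve (P := 8) (Q := 8) (s := [(7, 1), (4, 1), (17, 4)])
      (by decide +kernel) (by decide +kernel) (by simp) (by simp) hx2 hz hz4

lemma ne_pow_of_three (hz : 4 ≤ z) : 314 ^ x + 127 ^ y ≠ 21 ^ z :=
  pow_add_pow_ne_pow_of_sieve (P := 12) (Q := 12) (s := [(189, 1), (13, 4)])
    (by decide +kernel) (by decide +kernel) (by simp) (by simp) x.zero_le hz Nat.modEq_one

lemma ne_pow_of_five (hz : 4 ≤ z) : 874 ^ x + 351 ^ y ≠ 35 ^ z :=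
  pow_add_pow_ne_pow_of_sieve (P := 200) (Q := 200) (s := [(4375, 1), (401, 40)])
    (by decide +kernel) (by decide +kernel) (by simp) (by simp) x.zero_le hz Nat.modEq_one

lemma ne_pow_of_seven (hx : Odd x) (hz : 4 ≤ z) : 1714 ^ x + 687 ^ y ≠ 49 ^ z := by
  rcases Nat.even_or_odd z with hz2 | hz2
  · replace hz2 : z ≡ 4 [MOD 2] := Nat.even_iff.mp hz2
    obtain rfl | hx2 : x = 1 ∨ 2 ≤ x := by have := hx.pos; omega
    · rw [pow_one]
      exact add_pow_ne_pow_of_sieve (Q := 98) (s := [(16807, 1), (4, 1), (197, 49)])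
        (by decide +kernel) (by decide +kernel) (by simp) hz hz2
    · exact pow_add_pow_ne_pow_of_sieve (P := 4) (Q := 4) (s := [(343, 1), (4, 1), (5, 1)])
        (by decide +kernel) (by decide +kernel) (by simp) (by simp) hx2 hz hz2
  · replace hz2 : z ≡ 1 [MOD 2] := Nat.odd_iff.mp hz2
    exact pow_add_pow_ne_pow_of_sieve (P := 4) (Q := 4) (s := [(7, 1), (5, 1)])
      (by decide +kernel) (by decide +kernel) (by simp) (by simp) x.zero_le (by omega) hz2

lemma ne_pow_of_nine (hx : Odd x) (hz : 6 ≤ z) (hz4 : z ≡ 6 [MOD 4]) :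
    2834 ^ x + 1135 ^ y ≠ 63 ^ z :=
  pow_add_pow_ne_pow_of_sieve (P := 18) (Q := 18) (s := [(5103, 1), (13, 3), (19, 9), (181, 45)])
    (by decide +kernel) (by decide +kernel) (by simp) (by simp) hx.pos hz hz4

lemma ne_pow_of_eleven (hx : Odd x) (hz : 6 ≤ z) (hz4 : z ≡ 6 [MOD 4]) :
    4234 ^ x + 1695 ^ y ≠ 77 ^ z := by
  obtain rfl | hx2 : x = 1 ∨ 2 ≤ x := by have := hx.pos; omega
  · rw [pow_one]
    exact add_pow_ne_pow_of_sieve (Q := 22) (s := [(9317, 1), (4, 1), (89, 2)])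
      (by decide +kernel) (by decide +kernel) (by simp) hz hz4
  · exact pow_add_pow_ne_pow_of_sieve (P := 12) (Q := 12) (s := [(847, 1), (4, 1), (13, 1)])
      (by decide +kernel) (by decide +kernel) (by simp) (by simp) hx2 hz hz4

end SmallCases

section Elementary

lemma dvd_of_sq_dvd_one_add_mul_pow_sub {R : Type*} [CommRing R] [IsDomain R] {c d u : R}
    {k l : ℕ} (hu : u ≠ 0) (h : u ^ 2 ∣ (1 + c * u) ^ k - (1 + d * u) ^ l) :
    u ∣ c * k - d * l := by
  obtain ⟨r, hr⟩ := Polynomial.powAddExpansion 1 (c * u) k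
  obtain ⟨s, hs⟩ := Polynomial.powAddExpansion 1 (d * u) l
  obtain ⟨t, ht⟩ := h
  simp only [one_pow, mul_one] at hr hs
  refine ⟨t - r * c ^ 2 + s * d ^ 2, mul_left_cancel₀ hu ?_⟩
  linear_combination ht - hr + hs

variable {n x y z : ℕ}

lemma int_pow_add_pow_eq (hn : 0 < n)
    (heq : (35 * n ^ 2 - 1) ^ x + (14 * n ^ 2 + 1) ^ y = (7 * n) ^ z) :
    (35 * n ^ 2 - 1 : ℤ) ^ x + (14 * n ^ 2 + 1) ^ y = (7 * n) ^ z := by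
  have hA : 1 ≤ 35 * n ^ 2 := by have := pow_pos hn 2; omega
  simpa [Nat.cast_sub hA] using congrArg (Nat.cast (R := ℤ)) heq

lemma odd_of_pow_add_pow_eq (hn : 0 < n)
    (heq : (35 * n ^ 2 - 1) ^ x + (14 * n ^ 2 + 1) ^ y = (7 * n) ^ z) : Odd x := by
  by_contra! hx
  rw [Nat.not_odd_iff_even] at hx
  obtain rfl | hz := z.eq_zero_or_pos
  · have hA : 0 < (35 * n ^ 2 - 1) ^ x := pow_pos (by have := pow_pos hn 2; omega) x
    have hB : 0 < (14 * n ^ 2 + 1) ^ y := by positivity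
    rw [pow_zero] at heq
    linarith
  · have hmod := congrArg (Int.cast (R := ZMod 7)) (int_pow_add_pow_eq hn heq)
    push_cast at hmod
    rw [show (35 : ZMod 7) = 0 from rfl, show (14 : ZMod 7) = 0 from rfl,
      show (7 : ZMod 7) = 0 from rfl] at hmod
    simp only [zero_mul, zero_sub, zero_add, one_pow, hx.neg_one_pow, zero_pow hz.ne'] at hmod
    exact absurd hmod (by decide)

lemma seven_mul_pow_eq_sub (hn : 0 < n)
    (heq : (35 * n ^ 2 - 1) ^ x + (14 * n ^ 2 + 1) ^ y = (7 * n) ^ z) :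
    (7 * n : ℤ) ^ z = (1 + 2 * (7 * n ^ 2)) ^ y - (1 - 5 * (7 * n ^ 2)) ^ x := by
  rw [← int_pow_add_pow_eq hn heq,
    show (1 - 5 * (7 * n ^ 2) : ℤ) = -(35 * n ^ 2 - 1) by ring,
    (odd_of_pow_add_pow_eq hn heq).neg_pow]
  ring

lemma seven_mul_sq_dvd (hn : 0 < n) (hz : 4 ≤ z)
    (heq : (35 * n ^ 2 - 1) ^ x + (14 * n ^ 2 + 1) ^ y = (7 * n) ^ z) :
    7 * n ^ 2 ∣ 5 * x + 2 * y := by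
  have hdvd : (7 * n ^ 2 : ℤ) ^ 2 ∣ (7 * n : ℤ) ^ z := .trans ⟨49, by ring⟩ (pow_dvd_pow _ hz)
  rw [seven_mul_pow_eq_sub hn heq, sub_eq_add_neg 1, ← neg_mul] at hdvd
  have hlin := dvd_of_sq_dvd_one_add_mul_pow_sub (by positivity) hdvd
  rw [show (2 * y - -5 * x : ℤ) = 5 * x + 2 * y by ring] at hlin
  exact_mod_cast hlin

lemma odd_of_four_le (hn : 0 < n) (hz : 4 ≤ z)
    (heq : (35 * n ^ 2 - 1) ^ x + (14 * n ^ 2 + 1) ^ y = (7 * n) ^ z) : Odd n := by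
  by_contra! heven
  rw [Nat.not_odd_iff_even] at heven
  have h2 : 2 ∣ 5 * x + 2 * y :=
    ((heven.two_dvd.pow two_ne_zero).mul_left 7).trans (seven_mul_sq_dvd hn hz heq)
  have := odd_of_pow_add_pow_eq hn heq
  grind

lemma modEq_six_of_sq_mod_five_eq_one (hn : 0 < n) (hn5 : n ^ 2 % 5 = 1)
    (heq : (35 * n ^ 2 - 1) ^ x + (14 * n ^ 2 + 1) ^ y = (7 * n) ^ z) : z ≡ 6 [MOD 4] := by
  have hsq : (n : ZMod 5) ^ 2 = 1 := by
    exact_mod_cast (ZMod.natCast_eq_natCast_iff' (n ^ 2) 1 5).mpr hn5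
  have hmod := congrArg (Int.cast (R := ZMod 5)) (int_pow_add_pow_eq hn heq)
  push_cast at hmod
  have hC2 : (7 * n : ZMod 5) ^ 2 = -1 := by rw [mul_pow, hsq]; rfl
  have hC4 : (7 * n : ZMod 5) ^ 4 = 1 := by rw [pow_mul _ 2 2, hC2]; rfl
  rw [hsq, show (35 * 1 - 1 : ZMod 5) = -1 from rfl, show (14 * 1 + 1 : ZMod 5) = 0 from rfl,
    (odd_of_pow_add_pow_eq hn heq).neg_one_pow, zero_pow_eq, pow_eq_pow_mod z hC4] at hmod
  have hfin : ∀ C t : ZMod 5, ∀ r < 4, C ^ 2 = -1 → t = 0 ∨ t = 1 → -1 + t = C ^ r → r = 2 := by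
    decide
  exact hfin _ _ _ (Nat.mod_lt z four_pos) hC2 (by split_ifs <;> simp) hmod

lemma exponent_bounds_of_le_three (hn : 0 < n) (hz : z ≤ 3)
    (heq : (35 * n ^ 2 - 1) ^ x + (14 * n ^ 2 + 1) ^ y = (7 * n) ^ z) :
    x = 1 ∧ y ≤ 2 ∧ 2 ≤ z := by
  have hx := odd_of_pow_add_pow_eq hn heq
  have hn2 : n ≤ n ^ 2 := Nat.le_self_pow two_ne_zero n
  have hA : 34 * n ^ 2 ≤ 35 * n ^ 2 - 1 := by omega
  have hC : (7 * n) ^ z ≤ (7 * n) ^ 3 := pow_le_pow_right₀ (by omega) hz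
  have hBpos : 0 < (14 * n ^ 2 + 1) ^ y := by positivity
  obtain rfl : x = 1 := by
    by_contra hx1
    have hA2 : (34 * n ^ 2) ^ 2 ≤ (35 * n ^ 2 - 1) ^ x :=
      (Nat.pow_le_pow_left hA 2).trans (pow_le_pow_right₀ (by omega) (by grind))
    nlinarith
  refine ⟨rfl, ?_, ?_⟩
  · by_contra! hy3
    have hB3 : (14 * n ^ 2 + 1) ^ 3 ≤ (14 * n ^ 2 + 1) ^ y := pow_le_pow_right₀ (by omega) hy3
    nlinarith
  · by_contra! hz1
    have hC1 : (7 * n) ^ z ≤ (7 * n) ^ 1 := pow_le_pow_right₀ (by omega) (by omega)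
    linarith

lemma eq_one_one_two_of_le_three (hn : 0 < n) (hz : z ≤ 3)
    (heq : (35 * n ^ 2 - 1) ^ x + (14 * n ^ 2 + 1) ^ y = (7 * n) ^ z) :
    x = 1 ∧ y = 1 ∧ z = 2 := by
  obtain ⟨rfl, hy, hz2⟩ := exponent_bounds_of_le_three hn hz heq
  have hA : 1 ≤ 35 * n ^ 2 := by have := pow_pos hn 2; omega
  zify [hA] at heq
  have hcancel {c d : ℕ} (h : (7 * n ^ 2 * c : ℤ) = 7 * n ^ 2 * d) : c = d := by
    exact_mod_cast mul_left_cancel₀ (by positivity) h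
  interval_cases y <;> interval_cases z
  · exact absurd (hcancel (c := 5) (d := 7) (by push_cast; linarith)) (by omega)
  · exact absurd (hcancel (c := 5) (d := 49 * n) (by push_cast; linarith)) (by omega)
  · simp
  · exact absurd (hcancel (c := 7) (d := 49 * n) (by push_cast; linarith)) (by omega)
  · exact absurd (hcancel (c := 28 * n ^ 2 + 9) (d := 7) (by push_cast; linarith)) (by omega)
  · exact absurd (hcancel (c := 28 * n ^ 2 + 9) (d := 49 * n) (by push_cast; linarith)) (by omega)

lemma lt_four_of_lt_thirteen (hn : 0 < n) (hn13 : n < 13)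
    (heq : (35 * n ^ 2 - 1) ^ x + (14 * n ^ 2 + 1) ^ y = (7 * n) ^ z) : z < 4 := by
  by_contra! hz
  have hx := odd_of_pow_add_pow_eq hn heq
  have hodd := odd_of_four_le hn hz heq
  have hz4 := fun h ↦ modEq_six_of_sq_mod_five_eq_one hn h heq
  have hz6 (h : z ≡ 6 [MOD 4]) : 6 ≤ z := by rw [Nat.ModEq] at h; omega
  interval_cases n <;> norm_num at heq hodd
  · exact ne_pow_of_one hx (hz6 (hz4 rfl)) (hz4 rfl) heq
  · exact ne_pow_of_three hz heq
  · exact ne_pow_of_five hz heq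
  · exact ne_pow_of_seven hx hz heq
  · exact ne_pow_of_nine hx (hz6 (hz4 rfl)) (hz4 rfl) heq
  · exact ne_pow_of_eleven hx (hz6 (hz4 rfl)) (hz4 rfl) heq

end Elementary

section LargeCase

lemma mul_lt_mul_of_pow_le_of_pow_lt {B C p q y z : ℕ} (hC : 1 < C) (hq : q ≠ 0)
    (h : C ^ p ≤ B ^ q) (hlt : B ^ y < C ^ z) : p * y < q * z := by
  refine (Nat.pow_lt_pow_iff_right hC).mp ?_
  calc C ^ (p * y) = (C ^ p) ^ y := pow_mul ..
    _ ≤ (B ^ q) ^ y := Nat.pow_le_pow_left h y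
    _ = (B ^ y) ^ q := pow_right_comm ..
    _ < (C ^ z) ^ q := Nat.pow_lt_pow_left hlt hq
    _ = C ^ (q * z) := by rw [← pow_mul, mul_comm]

lemma le_mul_or_le_mul_of_pow_add_pow_eq {A B C m x y z : ℕ} (hC : 2 < C) (hA : A ≤ C ^ m)
    (hB : B ≤ C ^ m) (heq : A ^ x + B ^ y = C ^ z) : z ≤ m * x ∨ z ≤ m * y := by
  by_contra! h
  obtain ⟨k, rfl⟩ : ∃ k, z = k + 1 := ⟨z - 1, by omega⟩
  have hbound {D t : ℕ} (hD : D ≤ C ^ m) (ht : m * t < k + 1) : D ^ t ≤ C ^ k :=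
    calc D ^ t ≤ (C ^ m) ^ t := Nat.pow_le_pow_left hD t
      _ = C ^ (m * t) := (pow_mul ..).symm
      _ ≤ C ^ k := Nat.pow_le_pow_right (by omega) (by omega)
  have hCk : 0 < C ^ k := pow_pos (by omega) k
  have : 2 * C ^ k < C * C ^ k := Nat.mul_lt_mul_of_pos_right hC hCk
  rw [pow_succ'] at heq
  linarith [hbound hA h.1, hbound hB h.2]

variable {n x y z : ℕ}

lemma seven_mul_pow_le_fourteen_mul_sq_add_one_pow (hn : 13 ≤ n) :
    (7 * n) ^ 12 ≤ (14 * n ^ 2 + 1) ^ 7 := by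
  have hn2 : 919 ≤ 7 * n ^ 2 := by nlinarith
  calc (7 * n) ^ 12 = 7 ^ 6 * (7 * n ^ 2) ^ 6 := by ring
    _ ≤ 2 ^ 7 * (7 * n ^ 2) * (7 * n ^ 2) ^ 6 := by gcongr; omega
    _ = (14 * n ^ 2) ^ 7 := by ring
    _ ≤ (14 * n ^ 2 + 1) ^ 7 := by gcongr; omega

lemma seven_mul_pow_le_thirtyfive_mul_sq_sub_one_pow (hn : 13 ≤ n) :
    (7 * n) ^ 24 ≤ (35 * n ^ 2 - 1) ^ 13 := by
  have hn2 : 3 ≤ n ^ 2 := by nlinarith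
  calc (7 * n) ^ 24 = 7 ^ 24 * (n ^ 2) ^ 12 := by ring
    _ ≤ 34 ^ 13 * n ^ 2 * (n ^ 2) ^ 12 := by
      gcongr
      calc 7 ^ 24 ≤ 34 ^ 13 * 3 := by norm_num
        _ ≤ 34 ^ 13 * n ^ 2 := by gcongr
    _ = (34 * n ^ 2) ^ 13 := by ring
    _ ≤ (35 * n ^ 2 - 1) ^ 13 := by gcongr; omega

lemma exponent_bounds_of_thirteen_le (hn : 13 ≤ n)
    (heq : (35 * n ^ 2 - 1) ^ x + (14 * n ^ 2 + 1) ^ y = (7 * n) ^ z) :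
    12 * y < 7 * z ∧ 24 * x < 13 * z ∧ (z ≤ 2 * x ∨ z ≤ 2 * y) := by
  have hn2 : n ≤ n ^ 2 := Nat.le_self_pow two_ne_zero n
  have hA : 0 < (35 * n ^ 2 - 1) ^ x := pow_pos (by omega) x
  have hB : 0 < (14 * n ^ 2 + 1) ^ y := by positivity
  have hC2 : (7 * n) ^ 2 = 49 * n ^ 2 := by ring
  exact ⟨mul_lt_mul_of_pow_le_of_pow_lt (by omega) (by omega)
      (seven_mul_pow_le_fourteen_mul_sq_add_one_pow hn) (by linarith),
    mul_lt_mul_of_pow_le_of_pow_lt (by omega) (by omega)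
      (seven_mul_pow_le_thirtyfive_mul_sq_sub_one_pow hn) (by linarith),
    le_mul_or_le_mul_of_pow_add_pow_eq (by omega) (by omega) (by omega) heq⟩

theorem lt_four_of_thirteen_le (hn : 13 ≤ n)
    (heq : (35 * n ^ 2 - 1) ^ x + (14 * n ^ 2 + 1) ^ y = (7 * n) ^ z) : z < 4 := by
  by_contra! hz
  obtain ⟨hyz, hxz, hmax⟩ := exponent_bounds_of_thirteen_le hn heq
  have hx := (odd_of_pow_add_pow_eq (by omega) heq).pos
  have hn2 : 169 ≤ n ^ 2 := by nlinarith
  have hle := Nat.le_of_dvd (by omega) (seven_mul_sq_dvd (by omega) hz heq)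
  obtain ⟨w, hw⟩ : ∃ w, w = z / 2 := ⟨_, rfl⟩
  have hdvd : (7 * (7 * n ^ 2 : ℤ)) ^ w ∣
      (1 + 2 * (7 * n ^ 2)) ^ y - (1 - 5 * (7 * n ^ 2)) ^ x := by
    rw [← seven_mul_pow_eq_sub (by omega) heq,
      show (7 * (7 * n ^ 2) : ℤ) = (7 * n) ^ 2 by ring, ← pow_mul]
    exact pow_dvd_pow _ (by omega)
  have hdvd' : (7 * n ^ 2 : ℤ) ^ w ∣ (1 + 2 * (7 * n ^ 2)) ^ y - (1 - 5 * (7 * n ^ 2)) ^ x :=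
    (pow_dvd_pow_of_dvd (dvd_mul_left _ 7) w).trans hdvd
  rcases le_total x y with hxy | hxy
  · rcases le_or_gt (12 * x) (5 * w) with hxw | hxw
    · exact not_pow_dvd_of_twelve_mul_le (by linarith) (by omega) (by omega) (by omega) hxw hdvd'
    · obtain ⟨b, hb⟩ : ∃ b, 2 * b + (y - x) + 3 ≤ w ∧ w < 2 * b + (y - x) + 5 :=
        ⟨(w - (y - x) - 3) / 2, by omega⟩
      exact not_seven_mul_pow_dvd (a := b + (y - x)) (b := b) (by linarith) ⟨_, rfl⟩ (by omega)
        (by omega) (by omega) (by omega) (by omega) hdvd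
  · rcases le_or_gt (3 * y) w with hyw | hyw
    · exact not_pow_dvd_of_three_mul_le (by linarith) (by omega) (by omega) (by omega) hyw hdvd'
    · obtain ⟨a, ha⟩ : ∃ a, 2 * a + (x - y) + 3 ≤ w ∧ w < 2 * a + (x - y) + 5 :=
        ⟨(w - (x - y) - 3) / 2, by omega⟩
      exact not_seven_mul_pow_dvd (a := a) (b := a + (x - y)) (by linarith) ⟨_, rfl⟩ (by omega)
        (by omega) (by omega) (by omega) (by omega) hdvd

end LargeCase

theorem stmt_1_general (n : ℕ) (hn : 0 < n) (x y z : ℕ)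
    (heq : (35 * n ^ 2 - 1) ^ x + (14 * n ^ 2 + 1) ^ y = (7 * n) ^ z) :
    x = 1 ∧ y = 1 ∧ z = 2 := by
  have hz : z < 4 := (lt_or_ge n 13).elim (fun h ↦ lt_four_of_lt_thirteen hn h heq)
    (fun h ↦ lt_four_of_thirteen_le h heq)
  exact eq_one_one_two_of_le_three hn (Nat.le_of_lt_succ hz) heq

theorem stmt_1 (n : ℕ) (hn : 0 < n)
    (h5 : n % 5 = 3 ∨ n % 5 = 2 ∨ 5 ∣ n)
    (x y z : ℕ) (hx : 0 < x) (hy : 0 < y) (hz : 0 < z)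
    (heq : (35 * n ^ 2 - 1) ^ x + (14 * n ^ 2 + 1) ^ y = (7 * n) ^ z) :
    x = 1 ∧ y = 1 ∧ z = 2 :=
  stmt_1_general n hn x y z heq
end

section
/- Let p be a prime with p > 3 and p ≡ 3 (mod 4), and let n be a positive integer. If positive integers x, y, z satisfy (5pn² − 1)^x + (p(p−5)n² + 1)^y = (pn)^z, then x is odd. -/
theorem odd_of_dvd_pow_add_pow {R : Type*} [CommRing R] {d a b : R} {x y : ℕ} (hd : ¬d ∣ 2)
    (ha : d ∣ a + 1) (hb : d ∣ b - 1) (h : d ∣ a ^ x + b ^ y) : Odd x := by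
  by_contra hodd
  have hx : Even x := Nat.not_odd_iff_even.mp hodd
  have hax : d ∣ a ^ x - 1 := by
    have hdvd : a - -1 ∣ a ^ x - (-1) ^ x := sub_dvd_pow_sub_pow a (-1) x
    rw [sub_neg_eq_add, hx.neg_one_pow] at hdvd
    exact ha.trans hdvd
  have hby : d ∣ b ^ y - 1 := hb.trans (sub_one_dvd_pow_sub_one b y)
  have two_eq : (2 : R) = a ^ x + b ^ y - (a ^ x - 1) - (b ^ y - 1) := by ring
  exact hd (two_eq ▸ dvd_sub (dvd_sub h hax) hby)

theorem stmt_2_general {R : Type*} [CommRing R] {p n : R} {x y z : ℕ} (hp : ¬p ∣ 2) (hz : z ≠ 0)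
    (heq : (5 * p * n ^ 2 - 1) ^ x + (p * (p - 5) * n ^ 2 + 1) ^ y = (p * n) ^ z) : Odd x := by
  have ha : p ∣ 5 * p * n ^ 2 - 1 + 1 := ⟨5 * n ^ 2, by ring⟩
  have hb : p ∣ p * (p - 5) * n ^ 2 + 1 - 1 := ⟨(p - 5) * n ^ 2, by ring⟩
  exact odd_of_dvd_pow_add_pow hp ha hb (heq ▸ dvd_pow (dvd_mul_right p n) hz)

theorem stmt_2 (p n : ℕ) (hp : p.Prime) (hp3 : 3 < p) (hp4 : p % 4 = 3)
    (hn : 0 < n)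
    (x y z : ℕ) (hx : 0 < x) (hy : 0 < y) (hz : 0 < z)
    (heq : (5 * p * n ^ 2 - 1) ^ x + (p * (p - 5) * n ^ 2 + 1) ^ y = (p * n) ^ z) :
    Odd x := by
  have hp_five : 5 ≤ p := by lia
  have h_one : 1 ≤ 5 * p * n ^ 2 := Nat.succ_le_of_lt (by positivity)
  have hp_two : ¬(p : ℤ) ∣ 2 := mod_cast Nat.not_dvd_of_pos_of_lt two_pos (by lia)
  zify [hp_five, h_one] at heq
  exact stmt_2_general hp_two hz.ne' heq
end

section
/- Let p be a prime with p > 3 and p ≡ 3 (mod 4), and let n be an odd positive integer with pn ≡ ±1 (mod 5). If positive integers x, y, z satisfy (5pn² − 1)^x + (p(p−5)n² + 1)^y = (pn)^z, then x = 1. -/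
/-!
Put `a = 5pn² - 1`, `b = p(p - 5)n² + 1` and `c = pn`, so that `a + b = c²`, `a ≡ -1` and `b ≡ 1`
modulo `c`. Reducing the equation modulo `c` makes `x` odd, and reducing it modulo `5`, where it
reads `2 ^ y ≡ 1 ± 1` and `2` is a non-residue, makes `y` odd. If `x ≥ 2`, then `4 ∣ a ^ x`, whence
`c ^ z ≡ b ^ y ≡ 3 (mod 4)`, so that `z` is odd and `c ≡ 3 (mod 4)`. As `b ≡ 3 (mod 4)` as well,
reciprocity gives `(c / b) = -(b / c) = -1`. Modulo `b`, however, `a ≡ c²` and hence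
`c ^ z ≡ a ^ x ≡ c ^ (2x)`, so `(-1) ^ z = 1`, a contradiction. All that matters about `5` is that
it is `5` modulo `8`.
-/

theorem odd_left_exponent_of_modEq_neg_one {a b c : ℤ} {x y z : ℕ} (hc : 2 < c)
    (ha : a ≡ -1 [ZMOD c]) (hb : b ≡ 1 [ZMOD c]) (hz : z ≠ 0) (h : a ^ x + b ^ y = c ^ z) :
    Odd x := by
  have hmod : (-1) ^ x + 1 ≡ 0 [ZMOD c] :=
    calc (-1) ^ x + 1 = (-1) ^ x + 1 ^ y := by rw [one_pow]
      _ ≡ a ^ x + b ^ y [ZMOD c] := ((ha.pow x).add (hb.pow y)).symm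
      _ = c ^ z := h
      _ ≡ 0 [ZMOD c] := Int.modEq_zero_iff_dvd.mpr (dvd_pow_self c hz)
  by_contra hx
  rw [(Nat.not_odd_iff_even.mp hx).neg_one_pow] at hmod
  exact hc.not_ge (Int.le_of_dvd two_pos (Int.modEq_zero_iff_dvd.mp hmod))

theorem jacobiSym_two_eq_neg_one_of_mod_eight_eq_five {m : ℕ} (hm : m % 8 = 5) :
    jacobiSym 2 m = -1 := by
  rw [jacobiSym.at_two (Nat.odd_iff.mpr (by omega)), ZMod.χ₈_nat_eq_if_mod_eight,
    if_neg (by omega), if_neg (by omega)]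

theorem odd_of_two_pow_modEq_one_add {m : ℕ} {e : ℤ} {y : ℕ} (hm : m % 8 = 5)
    (he : e ≡ 1 [ZMOD m] ∨ e ≡ -1 [ZMOD m]) (h : 2 ^ y ≡ 1 + e [ZMOD m]) : Odd y := by
  have htwo := jacobiSym_two_eq_neg_one_of_mod_eight_eq_five hm
  have hpow {r : ℤ} (her : e ≡ r [ZMOD m]) : (-1) ^ y = jacobiSym (1 + r) m := by
    rw [← htwo, ← jacobiSym.pow_left]
    exact jacobiSym.mod_left' (h.trans (her.add_left 1))
  rcases he with he | he
  · exact (pow_eq_neg_one_iff.mp ((hpow he).trans htwo)).2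
  · have hzero : (-1 : ℤ) ^ y = 0 := (hpow he).trans (jacobiSym.zero_left (by omega))
    exact absurd hzero (pow_ne_zero y (by decide))

theorem pow_modEq_one_or_neg_one {c m : ℤ} (hc : c ≡ 1 [ZMOD m] ∨ c ≡ -1 [ZMOD m]) (z : ℕ) :
    c ^ z ≡ 1 [ZMOD m] ∨ c ^ z ≡ -1 [ZMOD m] := by
  rcases hc with hc | hc
  · exact .inl (by simpa only [one_pow] using hc.pow z)
  · rcases neg_one_pow_eq_or ℤ z with hz | hz
    · exact .inl (hz ▸ hc.pow z)
    · exact .inr (hz ▸ hc.pow z)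

theorem odd_right_exponent_of_mod_eight_eq_five {a b c : ℤ} {m x y z : ℕ} (hm : m % 8 = 5)
    (ha : a ≡ -1 [ZMOD m]) (hb : b ≡ 2 [ZMOD m]) (hc : c ≡ 1 [ZMOD m] ∨ c ≡ -1 [ZMOD m])
    (hx : Odd x) (h : a ^ x + b ^ y = c ^ z) : Odd y := by
  refine odd_of_two_pow_modEq_one_add hm (pow_modEq_one_or_neg_one hc z) ?_
  calc (2 : ℤ) ^ y ≡ b ^ y [ZMOD m] := (hb.pow y).symm
    _ = c ^ z - a ^ x := eq_sub_of_add_eq' h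
    _ ≡ c ^ z - (-1) ^ x [ZMOD m] := (ha.pow x).sub_left _
    _ = 1 + c ^ z := by rw [hx.neg_one_pow, sub_neg_eq_add, add_comm]

theorem odd_and_mod_four_eq_three_of_pow_mod_four_eq_three {c z : ℕ} (h : c ^ z % 4 = 3) :
    Odd z ∧ c % 4 = 3 := by
  have hχ : ZMod.χ₄ c ^ z = -1 := by
    rw [← map_pow, ← Nat.cast_pow, ZMod.χ₄_nat_three_mod_four h]
  obtain ⟨hc, hz⟩ := pow_eq_neg_one_iff.mp hχ
  refine ⟨hz, ?_⟩
  rw [ZMod.χ₄_nat_eq_if_mod_four] at hc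
  split_ifs at hc
  omega

theorem add_pow_mod_four_eq_three {a b x y : ℕ} (ha : Even a) (hx : 2 ≤ x) (hb : b % 4 = 3)
    (hy : Odd y) : (a ^ x + b ^ y) % 4 = 3 := by
  have hax : 4 ∣ a ^ x := (pow_dvd_pow_of_dvd ha.two_dvd 2).trans (pow_dvd_pow a hx)
  have hb' : (b : ℤ) ≡ -1 [ZMOD 4] := by simp only [Int.ModEq]; omega
  have hby : (b : ℤ) ^ y ≡ -1 [ZMOD 4] := by simpa only [hy.neg_one_pow] using hb'.pow y
  rw [← Nat.cast_pow, Int.ModEq] at hby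
  omega

theorem even_sum_exponent_of_mod_four_eq_three {a : ℤ} {b c x y z : ℕ} (hab : a + b = c ^ 2)
    (hbc : b ≡ 1 [ZMOD c]) (hb : b % 4 = 3) (hc : c % 4 = 3) (hy : y ≠ 0)
    (h : a ^ x + b ^ y = c ^ z) : Even z := by
  have hcb : jacobiSym c b = -1 := by
    rw [jacobiSym.quadratic_reciprocity_three_mod_four hc hb, jacobiSym.mod_left' hbc,
      jacobiSym.one_left]
  have hpow : (c : ℤ) ^ z ≡ c ^ (2 * x) [ZMOD b] :=
    calc (c : ℤ) ^ z = a ^ x + b ^ y := h.symm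
      _ ≡ a ^ x [ZMOD b] := Int.add_modEq_left_iff.mpr (dvd_pow_self _ hy)
      _ ≡ (a + b) ^ x [ZMOD b] := (Int.left_modEq_add_iff.mpr dvd_rfl).pow x
      _ = c ^ (2 * x) := by rw [hab, pow_mul]
  have hsign : (-1 : ℤ) ^ z = 1 := by
    rw [← hcb, ← jacobiSym.pow_left, jacobiSym.mod_left' hpow, jacobiSym.pow_left, hcb,
      (even_two_mul x).neg_one_pow]
  exact (neg_one_pow_eq_one_iff_even (by decide)).mp hsign

theorem left_exponent_eq_one_of_add_eq_sq {a b c m x y z : ℕ} (hab : a + b = c ^ 2) (hc : 2 < c)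
    (hcodd : Odd c) (hb : b % 4 = 3) (hac : c ∣ a + 1) (hm : m % 8 = 5) (ham : m ∣ a + 1)
    (hcm : c ≡ 1 [ZMOD m] ∨ c ≡ -1 [ZMOD m]) (hz : z ≠ 0) (h : a ^ x + b ^ y = c ^ z) :
    x = 1 := by
  have hℤ : (a : ℤ) ^ x + b ^ y = c ^ z := mod_cast h
  have hb_eq : (b : ℤ) = c ^ 2 - a := eq_sub_of_add_eq' (mod_cast hab)
  have neg_one {d : ℕ} (hd : d ∣ a + 1) : a ≡ -1 [ZMOD d] :=
    (Int.modEq_iff_dvd.mpr (by simpa using Int.natCast_dvd_natCast.mpr hd)).symm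
  have hbc : b ≡ 1 [ZMOD c] := by
    simpa [hb_eq] using
      (Int.modEq_zero_iff_dvd.mpr (dvd_pow_self (c : ℤ) two_ne_zero)).sub (neg_one hac)
  have hbm : b ≡ 2 [ZMOD m] := by
    have hc2 : (c : ℤ) ^ 2 ≡ 1 [ZMOD m] := by rcases hcm with h | h <;> simpa using h.pow 2
    simpa [hb_eq] using hc2.sub (neg_one ham)
  have hx : Odd x := odd_left_exponent_of_modEq_neg_one (mod_cast hc) (neg_one hac) hbc hz hℤ
  have hy : Odd y :=
    odd_right_exponent_of_mod_eight_eq_five hm (neg_one ham) hbm hcm hx hℤ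
  by_contra hx1
  have ha : Even a := by
    have : Odd (a + b) := hab ▸ hcodd.pow
    exact (Nat.odd_add'.mp this).mp (Nat.odd_iff.mpr (by omega))
  have hx2 : 2 ≤ x := by have := hx.pos; omega
  obtain ⟨hzodd, hc4⟩ := odd_and_mod_four_eq_three_of_pow_mod_four_eq_three
    (h ▸ add_pow_mod_four_eq_three ha hx2 hb hy)
  exact Nat.not_even_iff_odd.mpr hzodd
    (even_sum_exponent_of_mod_four_eq_three (mod_cast hab) hbc hb hc4 hy.pos.ne' hℤ)

theorem stmt_3_general {p n m x y z : ℕ} (hm : m % 8 = 5) (hmp : m ≤ p) (hp : p % 4 = 3)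
    (hn : Odd n) (hpn : p * n ≡ 1 [ZMOD m] ∨ p * n ≡ -1 [ZMOD m]) (hz : z ≠ 0)
    (h : (m * p * n ^ 2 - 1) ^ x + (p * (p - m) * n ^ 2 + 1) ^ y = (p * n) ^ z) :
    x = 1 := by
  have ha : m * p * n ^ 2 - 1 + 1 = m * p * n ^ 2 :=
    Nat.sub_add_cancel (Nat.mul_pos (Nat.mul_pos (by omega) (by omega)) (pow_pos hn.pos 2))
  have hsum : m * p * n ^ 2 - 1 + (p * (p - m) * n ^ 2 + 1) = (p * n) ^ 2 := by
    obtain ⟨q, rfl⟩ := Nat.exists_eq_add_of_le hmp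
    rw [Nat.add_sub_cancel_left, ← add_assoc, add_right_comm, ha]
    ring
  have hc : 2 < p * n := (show 2 < p by omega).trans_le (Nat.le_mul_of_pos_right p hn.pos)
  have hcodd : Odd (p * n) := (Nat.odd_iff.mpr (Nat.odd_of_mod_four_eq_three hp)).mul hn
  have hb : p * (p - m) * n ^ 2 + 1 ≡ 3 * 2 * 1 + 1 [MOD 4] := by
    have hpm : p - m ≡ 2 [MOD 4] := show (p - m) % 4 = 2 by omega
    have hn2 : n ^ 2 ≡ 1 [MOD 4] := mod_cast
      (Int.sq_mod_four_eq_one_of_odd (mod_cast hn) : (n : ℤ) ^ 2 ≡ 1 [ZMOD 4])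
    exact (((show p ≡ 3 [MOD 4] from hp).mul hpm).mul hn2).add_right 1
  have hac : p * n ∣ m * p * n ^ 2 - 1 + 1 := by
    rw [ha]
    exact ⟨m * n, by ring⟩
  have ham : m ∣ m * p * n ^ 2 - 1 + 1 := by
    rw [ha]
    exact ⟨p * n ^ 2, by ring⟩
  exact left_exponent_eq_one_of_add_eq_sq hsum hc hcodd hb hac hm ham (mod_cast hpn) hz h

theorem stmt_3 (p n : ℕ) (hp : p.Prime) (hp3 : 3 < p) (hp4 : p % 4 = 3)
    (hn : 0 < n) (hodd : Odd n) (h5 : p * n % 5 = 1 ∨ p * n % 5 = 4)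
    (x y z : ℕ) (hx : 0 < x) (hy : 0 < y) (hz : 0 < z)
    (heq : (5 * p * n ^ 2 - 1) ^ x + (p * (p - 5) * n ^ 2 + 1) ^ y = (p * n) ^ z) :
    x = 1 :=
  stmt_3_general (m := 5) rfl (by omega) hp4 hodd (by simp only [Int.ModEq]; omega) hz.ne' heq
end

section
/- Let p be a prime with p > 3 and p ≡ 3 (mod 4), and let n be an even positive integer. If positive integers x, y, z satisfy (5pn² − 1)^x + (p(p−5)n² + 1)^y = (pn)^z, then (x, y, z) = (1, 1, 2). -/
/-! Write `a = 5p`, `b = p(p - 5)`, `c = p`: only `a + b = c²`, `a` odd and `b > 0` even matter. Put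
`m = n²`, an even number. Modulo `2m` the bases are `am - 1 ≡ m - 1`, whose square is `1`, and
`bm + 1 ≡ 1`. So the left-hand side is `2` or `m` modulo `2m`, never `0`, whereas `2m` divides
`(cn) ^ z` as soon as `z ≥ 3`. As the bases add up to `(cn)²`, only `z = 2` remains, and then
`x = y = 1`. -/

lemma sub_one_sq_modEq_one {m : ℤ} (hm : Even m) : (m - 1) ^ 2 ≡ 1 [ZMOD 2 * m] := by
  obtain ⟨k, rfl⟩ := hm
  exact Int.modEq_iff_dvd.mpr ⟨1 - k, by ring⟩

lemma mul_sub_one_modEq_sub_one {a : ℤ} (ha : Odd a) (m : ℤ) :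
    a * m - 1 ≡ m - 1 [ZMOD 2 * m] := by
  obtain ⟨k, rfl⟩ := ha
  exact Int.modEq_iff_dvd.mpr ⟨-k, by ring⟩

lemma mul_add_one_modEq_one {b : ℤ} (hb : Even b) (m : ℤ) : b * m + 1 ≡ 1 [ZMOD 2 * m] := by
  obtain ⟨k, rfl⟩ := hb
  exact Int.modEq_iff_dvd.mpr ⟨-k, by ring⟩

lemma mul_sub_one_pow_modEq_of_even {a m : ℤ} (ha : Odd a) (hm : Even m) {x : ℕ} (hx : Even x) :
    (a * m - 1) ^ x ≡ 1 [ZMOD 2 * m] := by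
  obtain ⟨k, rfl⟩ := hx
  calc (a * m - 1) ^ (k + k) ≡ (m - 1) ^ (k + k) [ZMOD 2 * m] :=
        (mul_sub_one_modEq_sub_one ha m).pow _
    _ = ((m - 1) ^ 2) ^ k := by rw [← two_mul, pow_mul]
    _ ≡ 1 ^ k [ZMOD 2 * m] := (sub_one_sq_modEq_one hm).pow k
    _ = 1 := one_pow k

lemma mul_sub_one_pow_modEq_of_odd {a m : ℤ} (ha : Odd a) (hm : Even m) {x : ℕ} (hx : Odd x) :
    (a * m - 1) ^ x ≡ m - 1 [ZMOD 2 * m] := by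
  obtain ⟨k, rfl⟩ := hx
  simpa only [pow_succ, one_mul] using
    (mul_sub_one_pow_modEq_of_even ha hm (even_two_mul k)).mul (mul_sub_one_modEq_sub_one ha m)

lemma not_two_mul_dvd_sub_one_pow_add_add_one_pow {a b m : ℤ} (ha : Odd a) (hb : Even b)
    (hm : Even m) (hm0 : m ≠ 0) (x y : ℕ) : ¬ 2 * m ∣ (a * m - 1) ^ x + (b * m + 1) ^ y := by
  intro hdvd
  have hright : (b * m + 1) ^ y ≡ 1 [ZMOD 2 * m] := by
    simpa only [one_pow] using (mul_add_one_modEq_one hb m).pow y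
  rcases Nat.even_or_odd x with hx | hx
  · have hmod := (mul_sub_one_pow_modEq_of_even ha hm hx).add hright
    have hdvd_two : 2 * m ∣ 2 * 1 := hmod.dvd_iff.mp hdvd
    have hm_dvd_one : m ∣ 1 := (mul_dvd_mul_iff_left two_ne_zero).mp hdvd_two
    exact absurd (hm.two_dvd.trans hm_dvd_one) (by decide)
  · have hmod := (mul_sub_one_pow_modEq_of_odd ha hm hx).add hright
    have hdvd_m : 2 * m ∣ 1 * m := by
      simpa only [sub_add_cancel, one_mul] using hmod.dvd_iff.mp hdvd
    exact absurd ((mul_dvd_mul_iff_right hm0).mp hdvd_m) (by decide)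

lemma two_mul_sq_dvd_mul_pow {R : Type*} [CommSemiring R] {n : R} (hn : Even n) (c : R) {z : ℕ}
    (hz : 3 ≤ z) : 2 * n ^ 2 ∣ (c * n) ^ z :=
  calc 2 * n ^ 2 ∣ n * n ^ 2 := mul_dvd_mul_right hn.two_dvd _
    _ = n ^ 3 := (pow_succ' n 2).symm
    _ ∣ (c * n) ^ 3 := pow_dvd_pow_of_dvd (dvd_mul_left n c) 3
    _ ∣ (c * n) ^ z := pow_dvd_pow _ hz

lemma exponent_le_two_of_sub_one_pow_add_add_one_pow_eq {a b c n : ℤ} {x y z : ℕ} (ha : Odd a)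
    (hb : Even b) (hn : Even n) (hn0 : n ≠ 0)
    (h : (a * n ^ 2 - 1) ^ x + (b * n ^ 2 + 1) ^ y = (c * n) ^ z) : z ≤ 2 := by
  by_contra! hz
  refine not_two_mul_dvd_sub_one_pow_add_add_one_pow ha hb (hn.pow_of_ne_zero two_ne_zero)
    (pow_ne_zero 2 hn0) x y ?_
  exact h ▸ two_mul_sq_dvd_mul_pow hn c hz

lemma eq_one_and_eq_one_of_pow_add_pow_eq_add {A B x y : ℕ} (hA : 1 < A) (hB : 1 < B)
    (hx : x ≠ 0) (hy : y ≠ 0) (h : A ^ x + B ^ y = A + B) : x = 1 ∧ y = 1 := by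
  have hAx : A ≤ A ^ x := Nat.le_self_pow hx A
  have hBy : B ≤ B ^ y := Nat.le_self_pow hy B
  exact ⟨(Nat.pow_eq_self_iff hA).mp (by omega), (Nat.pow_eq_self_iff hB).mp (by omega)⟩

theorem stmt_4_general {a b c n x y z : ℕ} (habc : a + b = c ^ 2) (ha : Odd a) (hb : Even b)
    (hb0 : b ≠ 0) (hn : Even n) (hn0 : n ≠ 0) (hx : x ≠ 0) (hy : y ≠ 0)
    (heq : (a * n ^ 2 - 1) ^ x + (b * n ^ 2 + 1) ^ y = (c * n) ^ z) :
    x = 1 ∧ y = 1 ∧ z = 2 := by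
  have hn2 : 2 ≤ n := Nat.le_of_dvd (Nat.pos_of_ne_zero hn0) hn.two_dvd
  have hleft : 2 < a * n ^ 2 := by nlinarith [ha.pos]
  have hright : 0 < b * n ^ 2 := by positivity
  have hsum : (a * n ^ 2 - 1) + (b * n ^ 2 + 1) = (c * n) ^ 2 := by
    rw [mul_pow, ← habc, add_mul]
    omega
  have hz_le : z ≤ 2 := by
    zify [(by omega : 1 ≤ a * n ^ 2)] at heq
    exact exponent_le_two_of_sub_one_pow_add_add_one_pow_eq (mod_cast ha) (mod_cast hb)
      (mod_cast hn) (mod_cast hn0) heq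
  have hle_z : 2 ≤ z := by
    have hbase : 1 < c * n := (one_lt_sq_iff₀ (Nat.zero_le _)).mp (by omega)
    rw [← Nat.pow_le_pow_iff_right hbase, ← hsum, ← heq]
    exact add_le_add (Nat.le_self_pow hx _) (Nat.le_self_pow hy _)
  obtain rfl : z = 2 := le_antisymm hz_le hle_z
  obtain ⟨rfl, rfl⟩ := eq_one_and_eq_one_of_pow_add_pow_eq_add (by omega) (by omega) hx hy
    (heq.trans hsum.symm)
  exact ⟨rfl, rfl, rfl⟩

theorem stmt_4 (p n : ℕ) (hp : p.Prime) (hp3 : 3 < p) (hp4 : p % 4 = 3)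
    (hn : 0 < n) (heven : Even n)
    (x y z : ℕ) (hx : 0 < x) (hy : 0 < y) (hz : 0 < z)
    (heq : (5 * p * n ^ 2 - 1) ^ x + (p * (p - 5) * n ^ 2 + 1) ^ y = (p * n) ^ z) :
    x = 1 ∧ y = 1 ∧ z = 2 := by
  have hsum : 5 * p + p * (p - 5) = p ^ 2 := by
    rw [mul_comm 5, ← mul_add, Nat.add_sub_cancel' (by omega), sq]
  have hodd : Odd p := Nat.odd_iff.mpr (by omega)
  have hfive : Odd 5 := by decide
  exact stmt_4_general hsum (hfive.mul hodd) ((hodd.tsub_odd hfive).mul_left p)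
    (mul_ne_zero (by omega) (by omega)) heven hn.ne' hx.ne' hy.ne' heq
end

section
/- Let p be a prime with p > 3 and p ≡ 3 (mod 4), and let n be a positive integer with n ≡ 1 (mod 4). Then the Jacobi symbol (5pn² − 1 / p(p−5)n² + 1) equals 1. -/
/-!
Write `m = p (p - c) n² + 1`. The numerator `c p n² - 1` and the modulus `m` add up to the square
`(p n)²`, and `p n` is a unit modulo `m` because it divides `m - 1`.
-/

theorem jacobiSym_eq_one_of_modEq_sq {a x : ℤ} {b : ℕ} (hx : IsCoprime x b)
    (h : a ≡ x ^ 2 [ZMOD b]) : jacobiSym a b = 1 :=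
  (jacobiSym.mod_left' h).trans (jacobiSym.sq_one' (Int.isCoprime_iff_gcd_eq_one.mp hx))

theorem stmt_5_general {c p : ℕ} (hcp : c ≤ p) (n : ℕ) :
    jacobiSym (c * (p : ℤ) * (n : ℤ) ^ 2 - 1) (p * (p - c) * n ^ 2 + 1) = 1 := by
  have cast_modulus : ((p * (p - c) * n ^ 2 + 1 : ℕ) : ℤ) = p * (p - c) * n ^ 2 + 1 := by
    simp only [Nat.cast_add, Nat.cast_mul, Nat.cast_sub hcp, Nat.cast_pow, Nat.cast_one]
  have coprime_root : IsCoprime ((p : ℤ) * n) (p * (p - c) * n ^ 2 + 1 : ℕ) :=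
    ⟨-((p - c) * n), 1, by rw [cast_modulus]; ring⟩
  have modEq_sq :
      c * (p : ℤ) * (n : ℤ) ^ 2 - 1 ≡ ((p : ℤ) * n) ^ 2 [ZMOD (p * (p - c) * n ^ 2 + 1 : ℕ)] :=
    Int.modEq_iff_dvd.mpr ⟨1, by rw [cast_modulus]; ring⟩
  exact jacobiSym_eq_one_of_modEq_sq coprime_root modEq_sq

theorem stmt_5 (p n : ℕ) (hp : p.Prime) (hp3 : 3 < p) (hp4 : p % 4 = 3)
    (hn : 0 < n) (hn4 : n % 4 = 1) :
    jacobiSym (5 * (p : ℤ) * (n : ℤ) ^ 2 - 1) (p * (p - 5) * n ^ 2 + 1) = 1 := by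
  have five_le_p : 5 ≤ p := by omega
  exact stmt_5_general five_le_p n
end

section
/- Let p be a prime with p > 3 and p ≡ 3 (mod 4), and let n be a positive integer with n ≡ 1 (mod 4). Then the Jacobi symbol (pn / p(p−5)n² + 1) equals −1. -/
/-!
The modulus `b = p(p-5)n² + 1` is congruent to `1` modulo `a = pn`, so the Jacobi symbol `(b / a)`
is `1` and reciprocity leaves only its sign in `(a / b)`. Since `b ≡ 3 (mod 4)` for odd `n`, that
sign is `(-1 / a) = χ₄(p) χ₄(n) = -χ₄(n)`.
-/

open ZMod
open scoped NumberTheorySymbols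

theorem jacobiSym_eq_one_of_modEq_one {a : ℤ} {b : ℕ} (h : a ≡ 1 [ZMOD b]) : J(a | b) = 1 :=
  (jacobiSym.mod_left' h).trans (jacobiSym.one_left b)

theorem jacobiSym_eq_qrSign_of_modEq_one {a b : ℕ} (ha : Odd a) (hb : Odd b)
    (h : b ≡ 1 [MOD a]) : J(a | b) = qrSign b a := by
  have hba : J(b | a) = 1 := jacobiSym_eq_one_of_modEq_one (by exact_mod_cast h)
  rw [jacobiSym.quadratic_reciprocity' ha hb, hba, mul_one]

theorem qrSign_eq_χ₄_of_three_mod_four {m n : ℕ} (hm : m % 4 = 3) (hn : Odd n) :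
    qrSign m n = χ₄ n := by
  rw [qrSign, χ₄_nat_three_mod_four hm, jacobiSym.at_neg_one hn]

theorem mul_sub_five_mul_sq_add_one_mod_four {p n : ℕ} (hp3 : 3 < p) (hp4 : p % 4 = 3)
    (hn : Odd n) : (p * (p - 5) * n ^ 2 + 1) % 4 = 3 := by
  have hp5 : p - 5 ≡ 2 [MOD 4] := by
    unfold Nat.ModEq
    lia
  have hn2 : n ^ 2 ≡ 1 [MOD 4] := by
    have hn2_int : (n : ℤ) ^ 2 % 4 = 1 := Int.sq_mod_four_eq_one_of_odd hn.natCast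
    exact_mod_cast hn2_int
  exact (((show p ≡ 3 [MOD 4] from hp4).mul hp5).mul hn2).add_right 1

theorem mul_sub_five_mul_sq_add_one_modEq_one (p n : ℕ) :
    p * (p - 5) * n ^ 2 + 1 ≡ 1 [MOD p * n] := by
  have hdvd : p * n ∣ p * (p - 5) * n ^ 2 := ⟨(p - 5) * n, by ring⟩
  simpa only [zero_add] using (Nat.modEq_zero_iff_dvd.mpr hdvd).add_right 1

theorem stmt_6_general {p n : ℕ} (hp3 : 3 < p) (hp4 : p % 4 = 3) (hn : Odd n) :
    J((p : ℤ) * (n : ℤ) | p * (p - 5) * n ^ 2 + 1) = -χ₄ n := by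
  have hpn : Odd (p * n) := (Nat.odd_iff.mpr (Nat.odd_of_mod_four_eq_three hp4)).mul hn
  have hb4 := mul_sub_five_mul_sq_add_one_mod_four hp3 hp4 hn
  have hb : Odd (p * (p - 5) * n ^ 2 + 1) := Nat.odd_iff.mpr (Nat.odd_of_mod_four_eq_three hb4)
  calc J((p : ℤ) * (n : ℤ) | p * (p - 5) * n ^ 2 + 1)
      = qrSign (p * (p - 5) * n ^ 2 + 1) (p * n) := by
        rw [← Nat.cast_mul]
        exact jacobiSym_eq_qrSign_of_modEq_one hpn hb (mul_sub_five_mul_sq_add_one_modEq_one p n)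
    _ = χ₄ (p * n : ℕ) := qrSign_eq_χ₄_of_three_mod_four hb4 hpn
    _ = χ₄ p * χ₄ n := by rw [Nat.cast_mul, map_mul]
    _ = -χ₄ n := by rw [χ₄_nat_three_mod_four hp4, neg_one_mul]

theorem stmt_6 (p n : ℕ) (hp : p.Prime) (hp3 : 3 < p) (hp4 : p % 4 = 3)
    (hn : 0 < n) (hn4 : n % 4 = 1) :
    jacobiSym ((p : ℤ) * (n : ℤ)) (p * (p - 5) * n ^ 2 + 1) = -1 := by
  have hn_odd : Odd n := Nat.odd_iff.mpr (Nat.odd_of_mod_four_eq_one hn4)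
  rw [stmt_6_general hp3 hp4 hn_odd, χ₄_nat_one_mod_four hn4]
end

section
/- Let p be a prime with p > 3 and p ≡ 3 (mod 4), and let n be a positive integer. Set u = 5pn² − 1, v = p(p−5)n² + 1 and w = pn. If positive integers y, z with y ≥ 3 satisfy w^z − v^y = u, then y < 2521·log(pn), where log denotes the natural logarithm. -/
/-! Since `u + v = w ^ 2` and `v ≡ 1 [MOD w]`, a solution gives `w ^ y ∣ v ^ y - (-u)`, and this is
bounded by an interpolation determinant, as in Laurent's and Bugeaud's work on linear forms in two
`p`-adic logarithms. For `a = v` and `b = -u`, take the values of the functions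
`x ↦ x.choose k * (a ^ x) ^ l` at the points `x = r + s * y`, with `a ^ y` replaced by `b`.
* A zero estimate for exponential polynomials makes some maximal minor of this matrix nonzero.
* As `a ≡ 1` modulo `w`, each function multiplied by `w ^ k` has `m`-th differences divisible by
  `w ^ m`, so a minor of size `N` gains a factor `w ^ (0 + 1 + ⋯ + (N - 1))`.
* As `|a|` and `|b|` are at most `w ^ 2`, the minor is too small for this unless `y` is at most a
  constant multiple of `log w`.
-/

section Determinant

open Finset

variable {ι κ R : Type*} [CommRing R]

lemma choose_two_card_le_sum (s : Finset ι) (r : ι → ℕ)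
    (h : ∀ i ∈ s, ∀ j ∈ s, i ≠ j → r i = r j → #s ≤ r i + 1) :
    (#s).choose 2 ≤ ∑ i ∈ s, r i := by
  classical
  induction hn : #s generalizing s with
  | zero => simp
  | succ n ih =>
    obtain ⟨i, hi, hri⟩ : ∃ i ∈ s, n ≤ r i := by
      by_contra! hlt
      obtain ⟨i, hi, j, hj, hij, hr⟩ := exists_ne_map_eq_of_card_lt_of_maps_to
        (t := range n) (by rw [card_range, hn]; omega) fun i hi => mem_range.2 (hlt i hi)
      have := h i hi j hj hij hr
      have := hlt i hi
      omega
    have hcard : #(s.erase i) = n := by rw [card_erase_of_mem hi, hn, Nat.add_sub_cancel]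
    have hrest := ih (s.erase i) (fun j hj k hk hjk hr => by
      have := h j (mem_of_mem_erase hj) k (mem_of_mem_erase hk) hjk hr
      omega) hcard
    rw [← add_sum_erase s r hi, Nat.choose_succ_succ', Nat.choose_one_right]
    exact add_le_add hri hrest

variable [Fintype ι] [DecidableEq ι]

lemma det_mul_eq_sum_prod_mul_det_submatrix [Fintype κ] (X : Matrix ι κ R) (Y : Matrix κ ι R) :
    (X * Y).det = ∑ f : ι → κ, (∏ i, X i (f i)) * (Y.submatrix f id).det := by
  classical
  have hrows : X * Y = fun i => ∑ x, X i x • Y x := by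
    ext i j
    simp [Matrix.mul_apply, Finset.sum_apply]
  calc (X * Y).det = Matrix.detRowAlternating.toMultilinearMap fun i => ∑ x, X i x • Y x := by
        rw [hrows]; rfl
    _ = _ := by
        rw [MultilinearMap.map_sum]
        exact sum_congr rfl fun f _ =>
          MultilinearMap.map_smul_univ _ (fun i => X i (f i)) fun i => Y (f i)

-- Expand along `A = ∑ₘ c⁽ᵐ⁾ gₘ + q ^ (N - 1) H`: a term survives only if no `gₘ` is chosen twice,
-- so the chosen powers of `q` add up to at least `0 + 1 + ⋯ + (N - 1)`.
lemma pow_choose_two_dvd_det (A : Matrix ι ι R) (q : R) (c : ι → ℕ → R) (g : ℕ → ι → R)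
    (hc : ∀ i m, q ^ m ∣ c i m)
    (hA : ∀ i j, q ^ (Fintype.card ι - 1) ∣
      A i j - ∑ m ∈ range (Fintype.card ι - 1), c i m * g m j) :
    q ^ (Fintype.card ι).choose 2 ∣ A.det := by
  set N := Fintype.card ι with hN
  choose H hH using hA
  let X : Matrix ι (Fin (N - 1) ⊕ ι) R :=
    Matrix.of fun i => Sum.elim (fun m => c i m) fun i' => if i = i' then q ^ (N - 1) else 0
  let Y : Matrix (Fin (N - 1) ⊕ ι) ι R := Matrix.of (Sum.elim (fun m => g m) H)
  let weight : Fin (N - 1) ⊕ ι → ℕ := Sum.elim (fun m => m) fun _ => N - 1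
  have hXY : A = X * Y := by
    ext i j
    rw [Matrix.mul_apply, Fintype.sum_sum_type]
    simp [X, Y, ← hH, Finset.sum_range]
  have hX : ∀ i x, q ^ weight x ∣ X i x := by
    rintro i (m | i')
    · exact hc i m
    · by_cases h : i = i' <;> simp [X, weight, h]
  rw [hXY, det_mul_eq_sum_prod_mul_det_submatrix]
  refine dvd_sum fun f _ => ?_
  by_cases hf : Function.Injective f
  · have hweight : N.choose 2 ≤ ∑ i, weight (f i) := by
      refine choose_two_card_le_sum univ _ fun i _ j _ hij hw => ?_
      have hne := hf.ne hij
      rw [card_univ, ← hN]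
      rcases hi : f i with m | i' <;> rcases hj : f j with m' | j' <;>
        simp only [hi, hj, weight, Sum.elim_inl, Sum.elim_inr, ne_eq, Sum.inl.injEq,
          Fin.ext_iff] at hne hw ⊢ <;> omega
    refine Dvd.dvd.mul_right ((pow_dvd_pow q hweight).trans ?_) _
    rw [← prod_pow_eq_pow_sum]
    exact prod_dvd_prod_of_dvd _ _ fun i _ => hX i (f i)
  · obtain ⟨i, j, hij, hne⟩ := Function.not_injective_iff.1 hf
    rw [Matrix.det_zero_of_row_eq hne (by ext k; simp [hij]), mul_zero]
    exact dvd_zero _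

end Determinant

section ForwardDifference

open Finset fwdDiff

variable {ι R : Type*} [CommRing R]

lemma pow_dvd_sub_sum_choose_mul_fwdDiff {q : R} {φ : ℕ → R} (hφ : ∀ m, q ^ m ∣ Δ_[1] ^[m] φ 0)
    (M x : ℕ) : q ^ M ∣ φ x - ∑ m ∈ range M, Δ_[1] ^[m] φ 0 * x.choose m := by
  have hnewton : φ x = ∑ m ∈ range (M + (x + 1)), Δ_[1] ^[m] φ 0 * x.choose m := by
    have := shift_eq_sum_fwdDiff_iter 1 φ x 0
    simp only [zero_add, smul_eq_mul, mul_one, nsmul_eq_mul, mul_comm (Nat.cast _)] at this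
    rw [this]
    refine sum_subset (range_mono (by omega)) fun m _ hm => ?_
    rw [Nat.choose_eq_zero_of_lt (by simpa using hm), Nat.cast_zero, mul_zero]
  rw [hnewton, sum_range_add, add_sub_cancel_left]
  exact dvd_sum fun m _ => ((pow_dvd_pow q (Nat.le_add_right M m)).trans (hφ _)).mul_right _

lemma pow_choose_two_dvd_det_of_pow_dvd_fwdDiff [Fintype ι] [DecidableEq ι] (A : Matrix ι ι R)
    (q : R) (φ : ι → ℕ → R) (x : ι → ℕ) (hφ : ∀ i m, q ^ m ∣ Δ_[1] ^[m] (φ i) 0)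
    (hA : ∀ i j, q ^ (Fintype.card ι - 1) ∣ A i j - φ i (x j)) :
    q ^ (Fintype.card ι).choose 2 ∣ A.det := by
  refine pow_choose_two_dvd_det A q (fun i m => Δ_[1] ^[m] (φ i) 0) (fun m j => (x j).choose m)
    hφ fun i j => ?_
  rw [← sub_add_sub_cancel (A i j) (φ i (x j))]
  exact (hA i j).add (pow_dvd_sub_sum_choose_mul_fwdDiff (hφ i) _ _)

lemma pow_dvd_fwdDiff_iter_choose_mul_pow {q Z : R} (hZ : q ∣ Z - 1) (k m x : ℕ) :
    q ^ m ∣ Δ_[1] ^[m] (fun x : ℕ => q ^ k * (x.choose k * Z ^ x)) x := by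
  obtain ⟨f, hf⟩ := hZ
  obtain rfl : Z = 1 + q * f := by rw [← hf]; ring
  set ψ : ℕ → ℕ → R := fun k x => q ^ k * (x.choose k * (1 + q * f) ^ x)
  have hzero : Δ_[1] (ψ 0) = q • f • ψ 0 := by
    ext x
    simp only [fwdDiff, ψ, Pi.smul_apply, smul_eq_mul, Nat.choose_zero_right]
    ring
  have hsucc : ∀ k, Δ_[1] (ψ (k + 1)) = q • (f • ψ (k + 1) + (1 + q * f) • ψ k) := by
    intro k
    ext x
    simp only [fwdDiff, ψ, Pi.smul_apply, Pi.add_apply, smul_eq_mul, Nat.choose_succ_succ',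
      Nat.cast_add]
    ring
  change q ^ m ∣ Δ_[1] ^[m] (ψ k) x
  induction m generalizing k with
  | zero => simp
  | succ m ih =>
    rw [Function.iterate_succ_apply, pow_succ']
    cases k with
    | zero =>
      rw [hzero, fwdDiff_iter_const_smul, fwdDiff_iter_const_smul]
      exact mul_dvd_mul_left q ((ih 0).mul_left f)
    | succ k =>
      rw [hsucc, fwdDiff_iter_const_smul, fwdDiff_iter_add, fwdDiff_iter_const_smul,
        fwdDiff_iter_const_smul]
      exact mul_dvd_mul_left q (((ih (k + 1)).mul_left f).add ((ih k).mul_left _))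

end ForwardDifference

section ZeroEstimate

open Finset Polynomial

lemma coeff_prod_sum_of_natDegree_le {ι R : Type*} [CommSemiring R] (s : Finset ι) (f : ι → R[X])
    (d : ι → ℕ) (h : ∀ i ∈ s, (f i).natDegree ≤ d i) :
    (∏ i ∈ s, f i).coeff (∑ i ∈ s, d i) = ∏ i ∈ s, (f i).coeff (d i) := by
  classical
  induction s using Finset.induction_on with
  | empty => simp
  | insert a s ha ih =>
    have hs : ∀ i ∈ s, (f i).natDegree ≤ d i := fun i hi => h i (mem_insert_of_mem hi)
    rw [prod_insert ha, sum_insert ha, prod_insert ha,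
      coeff_mul_add_eq_of_natDegree_le (h a (mem_insert_self a s))
        ((natDegree_prod_le s f).trans (sum_le_sum hs)), ih hs]

section

variable {ι R : Type*} [Fintype ι] [DecidableEq ι] [CommRing R] (M : Matrix ι ι R[X]) (d : ι → ℕ)
  (h : ∀ i j, (M i j).natDegree ≤ d j)
include h

lemma natDegree_det_le_sum : M.det.natDegree ≤ ∑ j, d j := by
  rw [Matrix.det_apply]
  refine natDegree_sum_le_of_forall_le _ _ fun σ _ => (natDegree_smul_le _ _).trans ?_
  exact (natDegree_prod_le _ _).trans (sum_le_sum fun j _ => h (σ j) j)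

lemma coeff_det_sum :
    M.det.coeff (∑ j, d j) = (Matrix.of fun i j => (M i j).coeff (d j)).det := by
  rw [Matrix.det_apply, Matrix.det_apply, finsetSum_coeff]
  refine sum_congr rfl fun σ _ => ?_
  rw [coeff_smul, coeff_prod_sum_of_natDegree_le _ _ _ fun j _ => h (σ j) j]
  rfl

end

variable {F : Type*} [Field F] {L : ℕ}

/-- The Casorati matrix of the exponential polynomials `x ↦ P j x * c j ^ x`: row `i` is the shift
of these functions by `i`, with the common factor `c j ^ x` removed from column `j`. -/
noncomputable def casorati (P : Fin L → F[X]) (c : Fin L → F) : Matrix (Fin L) (Fin L) F[X] :=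
  Matrix.of fun i j => C (c j ^ (i : ℕ)) * taylor (i : F) (P j)

lemma natDegree_casorati_le (P : Fin L → F[X]) (c : Fin L → F) (i j : Fin L) :
    (casorati P c i j).natDegree ≤ (P j).natDegree :=
  (natDegree_C_mul_le _ _).trans (natDegree_taylor _ _).le

-- The coefficient of degree `∑ deg (P j)` is a Vandermonde determinant up to a nonzero factor.
lemma det_casorati_ne_zero {P : Fin L → F[X]} {c : Fin L → F} (hP : ∀ j, P j ≠ 0)
    (hc : Function.Injective c) : (casorati P c).det ≠ 0 := by
  intro hzero
  have hlead : (Matrix.of fun i j => (casorati P c i j).coeff (P j).natDegree) =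
      Matrix.of fun i j => (P j).leadingCoeff * (Matrix.vandermonde c).transpose i j := by
    ext i j
    simp only [casorati, Matrix.of_apply, coeff_C_mul, coeff_taylor_natDegree,
      Matrix.transpose_apply, Matrix.vandermonde_apply, mul_comm]
  have hcoeff := coeff_det_sum (casorati P c) _ (natDegree_casorati_le P c)
  rw [hzero, coeff_zero, hlead, Matrix.det_mul_row, Matrix.det_transpose, eq_comm,
    mul_eq_zero, prod_eq_zero_iff] at hcoeff
  rcases hcoeff with ⟨j, _, hj⟩ | hvandermonde
  · exact hP j (leadingCoeff_eq_zero.1 hj)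
  · exact Matrix.det_vandermonde_ne_zero_iff.2 hc hvandermonde

lemma eval_det_casorati_eq_zero {P : Fin L → F[X]} {c v : Fin L → F} {x : F} (hv : v ≠ 0)
    (h : ∀ i < L, ∑ j, (P j).eval (x + i) * (c j ^ i * v j) = 0) :
    (casorati P c).det.eval x = 0 := by
  rw [← coe_evalRingHom, RingHom.map_det]
  refine Matrix.exists_mulVec_eq_zero_iff.1 ⟨v, hv, ?_⟩
  ext i
  rw [Pi.zero_apply, ← h i i.2, Matrix.mulVec, dotProduct]
  refine sum_congr rfl fun j _ => ?_
  simp only [casorati, RingHom.mapMatrix_apply, Matrix.map_apply, Matrix.of_apply, coe_evalRingHom,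
    eval_mul, eval_C, taylor_eval]
  ring

theorem eq_zero_of_sum_eval_mul_pow_eq_zero {σ : Type*} {K : ℕ} {P : Fin L → F[X]} {c : Fin L → F}
    {s : Finset σ} {x : σ → F} {v : σ → Fin L → F} (hP : ∀ l, (P l).degree < K)
    (hc : Function.Injective c) (hs : K * L ≤ #s) (hx : Set.InjOn x s)
    (hv : ∀ p ∈ s, ∀ l, v p l ≠ 0)
    (h : ∀ p ∈ s, ∀ i < L, ∑ l, (P l).eval (x p + i) * (c l ^ i * v p l) = 0) : P = 0 := by
  classical
  by_contra hne
  obtain ⟨l₀, hl₀⟩ := Function.ne_iff.1 hne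
  -- Trading `P l = 0` for `Q l = 1` and `v p l` for `0` keeps the relations `h`.
  let Q : Fin L → F[X] := fun l => if P l = 0 then 1 else P l
  have hQ : ∀ l, Q l ≠ 0 := fun l => by
    by_cases hl : P l = 0 <;> simp [Q, hl]
  have hQdeg : ∀ l, (Q l).natDegree ≤ K - 1 := fun l => by
    by_cases hl : P l = 0
    · simp [Q, hl]
    · simpa only [Q, hl, if_false] using
        Nat.le_sub_one_of_lt ((natDegree_lt_iff_degree_lt hl).2 (hP l))
  have hK : 0 < K := Nat.zero_lt_of_lt ((natDegree_lt_iff_degree_lt hl₀).2 (hP l₀))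
  refine det_casorati_ne_zero hQ hc ?_
  refine eq_zero_of_natDegree_lt_card_of_eval_eq_zero' _ (s.image x) ?_ ?_
  · simp only [forall_mem_image]
    intro p hp
    refine eval_det_casorati_eq_zero (v := fun l => if P l = 0 then 0 else v p l)
      (Function.ne_iff.2 ⟨l₀, by simpa [show P l₀ ≠ 0 from hl₀] using hv p hp l₀⟩) fun i hi => ?_
    refine (sum_congr rfl fun l _ => ?_).trans (h p hp i hi)
    by_cases hl : P l = 0 <;> simp [Q, hl]
  · calc (casorati Q c).det.natDegree
        ≤ ∑ j, (Q j).natDegree := natDegree_det_le_sum _ _ (natDegree_casorati_le Q c)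
      _ ≤ ∑ _j : Fin L, (K - 1) := sum_le_sum fun j _ => hQdeg j
      _ = (K - 1) * L := by simp [mul_comm]
      _ < K * L := Nat.mul_lt_mul_of_pos_right (Nat.sub_lt hK one_pos) (Fin.pos l₀)
      _ ≤ #(s.image x) := by rwa [card_image_of_injOn hx]

end ZeroEstimate

section Minor

lemma exists_det_submatrix_ne_zero {ι κ F : Type*} [Field F] [Fintype ι] [DecidableEq ι] [Finite κ]
    {B : Matrix ι κ F} (hB : LinearIndependent F B.row) :
    ∃ f : ι → κ, Function.Injective f ∧ (B.submatrix id f).det ≠ 0 := by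
  have := Fintype.ofFinite κ
  have hspan : Submodule.span F (Set.range B.col) = ⊤ := by
    apply Submodule.eq_top_of_finrank_eq
    rw [← Matrix.rank_eq_finrank_span_cols, hB.rank_matrix, Module.finrank_fintype_fun_eq_card]
  obtain ⟨κ', a, ha, hspan', hli⟩ := exists_linearIndependent' F B.col
  rw [hspan] at hspan'
  let e := (Module.Basis.mk hli hspan'.ge).indexEquiv (Pi.basisFun F ι)
  refine ⟨a ∘ e.symm, ha.comp e.symm.injective, ?_⟩
  have hcols : LinearIndependent F (B.submatrix id (a ∘ e.symm)).col :=
    hli.comp e.symm e.symm.injective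
  rw [Matrix.linearIndependent_cols_iff_isUnit, Matrix.isUnit_iff_isUnit_det] at hcols
  exact hcols.ne_zero

end Minor

section Interpolation

open Finset Polynomial

/-- The binomial polynomials `X (X - 1) ⋯ (X - k + 1) / k!`. -/
noncomputable def binomialSequence (F : Type*) [Field F] [CharZero F] : Polynomial.Sequence F where
  elems' k := C ((k.factorial : F)⁻¹) * descPochhammer F k
  degree_eq' k := by
    rw [degree_C_mul (inv_ne_zero (Nat.cast_ne_zero.2 k.factorial_ne_zero)),
      degree_eq_natDegree (monic_descPochhammer F k).ne_zero, descPochhammer_natDegree]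

lemma eval_binomialSequence {F : Type*} [Field F] [CharZero F] (k x : ℕ) :
    (binomialSequence F k).eval (x : F) = x.choose k := by
  have hk : (k.factorial : F) ≠ 0 := Nat.cast_ne_zero.2 k.factorial_ne_zero
  change (C ((k.factorial : F)⁻¹) * descPochhammer F k).eval (x : F) = _
  rw [eval_mul, eval_C, descPochhammer_eval_eq_descFactorial,
    Nat.descFactorial_eq_factorial_mul_choose, Nat.cast_mul, inv_mul_cancel_left₀ hk]

/-- The values of the functions `x ↦ x.choose k * (a ^ x) ^ l`, with `k < K` and `l < L`, at the
points `x = r + s * y`, in columns indexed by `(r, s)`, except that `a ^ y` is replaced by `b`. -/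
def interpolationMatrix {A : Type*} [CommRing A] (a b : A) (y K L : ℕ) :
    Matrix (Fin K × Fin L) (ℕ × ℕ) A :=
  Matrix.of fun i j => ((j.1 + j.2 * y).choose i.1 : A) * (a ^ j.1 * b ^ j.2) ^ (i.2 : ℕ)

lemma injOn_add_mul (y : ℕ) : Set.InjOn (fun p : ℕ × ℕ => p.1 + p.2 * y) {p | p.1 < y} := by
  rintro ⟨r, s⟩ (hr : r < y) ⟨r', s'⟩ (hr' : r' < y) (h : r + s * y = r' + s' * y)
  obtain rfl : r = r' := by
    simpa [Nat.mod_eq_of_lt hr, Nat.mod_eq_of_lt hr'] using congrArg (· % y) h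
  simpa [(Nat.zero_lt_of_lt hr).ne'] using h

lemma linearIndependent_row_interpolationMatrix {F : Type*} [Field F] [CharZero F] {a b : F}
    (ha : Function.Injective fun i : ℕ => a ^ i) (hb : b ≠ 0) {y K L R S : ℕ}
    (hRS : K * L ≤ R * S) (hRy : R ≤ y) :
    LinearIndependent F ((interpolationMatrix a b y K L).submatrix id
      (Subtype.val : ↥(range (R + L) ×ˢ range S) → ℕ × ℕ)).row := by
  have ha0 : a ≠ 0 := fun h => absurd (@ha 1 2 (by simp [h])) (by decide)
  rw [Fintype.linearIndependent_iff]
  intro c hc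
  let P : Fin L → F[X] := fun l => ∑ k : Fin K, c (k, l) • binomialSequence F k
  have hdeg : ∀ l, (P l).degree < K := fun l =>
    mem_degreeLT.1 <| Submodule.sum_mem _ fun k _ => Submodule.smul_mem _ _ <|
      mem_degreeLT.2 <| by simp
  have hinj : Set.InjOn (fun p : ℕ × ℕ => ((p.1 + p.2 * y : ℕ) : F)) ↑(range R ×ˢ range S) :=
    Nat.cast_injective.comp_injOn <| (injOn_add_mul y).mono fun p hp =>
      (mem_range.1 (mem_product.1 hp).1).trans_le hRy
  have hP : P = 0 := by
    refine eq_zero_of_sum_eval_mul_pow_eq_zero (c := fun l => a ^ (l : ℕ))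
      (v := fun p l => (a ^ p.1 * b ^ p.2) ^ (l : ℕ)) hdeg (ha.comp Fin.val_injective)
      (by simpa using hRS) hinj (by simp [ha0, hb]) ?_
    rintro ⟨r, s⟩ hp i hi
    simp only [mem_product, mem_range] at hp
    have hcol := congrFun hc ⟨(r + i, s), by simp only [mem_product, mem_range]; omega⟩
    rw [Finset.sum_apply, Fintype.sum_prod_type_right] at hcol
    refine Eq.trans (sum_congr rfl fun l _ => ?_) hcol
    rw [← Nat.cast_add, eval_finsetSum, sum_mul]
    refine sum_congr rfl fun k _ => ?_
    rw [eval_smul, eval_binomialSequence]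
    simp only [interpolationMatrix, Matrix.row, Pi.smul_apply, Matrix.submatrix_apply, id,
      Matrix.of_apply, smul_eq_mul]
    rw [add_right_comm]
    ring
  rintro ⟨k, l⟩
  exact Fintype.linearIndependent_iff.1
    ((binomialSequence F).linearIndependent.comp _ Fin.val_injective) (fun k => c (k, l))
    (congrFun hP l) k

lemma exists_det_interpolationMatrix_submatrix_ne_zero {A : Type*} [CommRing A] [IsDomain A]
    [CharZero A] {a b : A} (ha : Function.Injective fun i : ℕ => a ^ i) (hb : b ≠ 0)
    {y K L R S : ℕ} (hRS : K * L ≤ R * S) (hRy : R ≤ y) :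
    ∃ f : Fin K × Fin L → ℕ × ℕ, Function.Injective f ∧
      (∀ i, f i ∈ range (R + L) ×ˢ range S) ∧
      ((interpolationMatrix a b y K L).submatrix id f).det ≠ 0 := by
  let φ := algebraMap A (FractionRing A)
  have hφ : Function.Injective φ := IsFractionRing.injective A (FractionRing A)
  have := charZero_of_injective_algebraMap hφ
  obtain ⟨f, hf, hdet⟩ := exists_det_submatrix_ne_zero <|
    linearIndependent_row_interpolationMatrix (a := φ a) (b := φ b) (K := K) (L := L)
      (fun i j h => ha (hφ (by simpa using h))) (by simpa [φ] using hb) hRS hRy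
  refine ⟨fun i => (f i).1, Subtype.val_injective.comp hf, fun i => (f i).2, fun h0 => hdet ?_⟩
  rw [← map_zero φ, ← h0, RingHom.map_det]
  congr 1
  ext i j
  simp [interpolationMatrix]

lemma sum_val_fst_eq_mul_choose_two (K L : ℕ) :
    ∑ i : Fin K × Fin L, (i.1 : ℕ) = L * K.choose 2 := by
  rw [Fintype.sum_prod_type_right]
  simp only [Fin.sum_univ_eq_sum_range fun k => k, sum_range_id, Nat.choose_two_right, sum_const,
    card_univ, Fintype.card_fin, smul_eq_mul]

lemma pow_choose_two_dvd_pow_mul_det_interpolationMatrix {A : Type*} [CommRing A] {a b q : A}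
    {y K L : ℕ} (hq : q ∣ a - 1) (hab : q ^ (K * L) ∣ a ^ y - b) (f : Fin K × Fin L → ℕ × ℕ) :
    q ^ (K * L).choose 2 ∣
      q ^ (L * K.choose 2) * ((interpolationMatrix a b y K L).submatrix id f).det := by
  have hpow : q ^ (L * K.choose 2) = ∏ i : Fin K × Fin L, q ^ (i.1 : ℕ) := by
    rw [prod_pow_eq_pow_sum, sum_val_fst_eq_mul_choose_two]
  rw [hpow, ← Matrix.det_mul_column]
  convert pow_choose_two_dvd_det_of_pow_dvd_fwdDiff _ q
    (fun i x => q ^ (i.1 : ℕ) * (x.choose i.1 * (a ^ (i.2 : ℕ)) ^ x))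
    (fun j => (f j).1 + (f j).2 * y) (fun i m => pow_dvd_fwdDiff_iter_choose_mul_pow
      (hq.trans (sub_one_dvd_pow_sub_one a i.2)) i.1 m 0) fun i j => ?_ using 2
  · simp
  · obtain ⟨k, l⟩ := i
    rcases hj : f j with ⟨r, s⟩
    have hsub : q ^ (Fintype.card (Fin K × Fin L) - 1) ∣ b - a ^ y := by
      rw [dvd_sub_comm]
      exact (pow_dvd_pow q (by simp)).trans hab
    have hpow : q ^ (Fintype.card (Fin K × Fin L) - 1) ∣
        (a ^ r * b ^ s) ^ (l : ℕ) - (a ^ r * (a ^ y) ^ s) ^ (l : ℕ) := by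
      refine Dvd.dvd.trans ?_ (sub_dvd_pow_sub_pow _ _ _)
      rw [← mul_sub]
      exact (hsub.trans (sub_dvd_pow_sub_pow b (a ^ y) s)).mul_left _
    convert hpow.mul_left (q ^ (k : ℕ) * (r + s * y).choose k) using 1
    simp only [interpolationMatrix, Matrix.of_apply, Matrix.submatrix_apply, id, hj]
    ring

end Interpolation

section UpperBound

open Finset
open scoped Nat

lemma abs_det_le_factorial_mul {ι R : Type*} [Fintype ι] [DecidableEq ι] [CommRing R]
    [LinearOrder R] [IsStrictOrderedRing R] {M : Matrix ι ι R} {B : R}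
    (h : ∀ σ : Equiv.Perm ι, ∏ i, |M (σ i) i| ≤ B) : |M.det| ≤ (Fintype.card ι)! * B := by
  rw [Matrix.det_apply']
  refine (abs_sum_le_sum_abs _ _).trans ((sum_le_card_nsmul _ _ B fun σ _ => ?_).trans_eq ?_)
  · rcases Int.units_eq_one_or (Equiv.Perm.sign σ) with hσ | hσ <;>
      simpa [hσ, abs_prod] using h σ
  · rw [card_univ, Fintype.card_perm, nsmul_eq_mul]

lemma exp_seven_div_four_le_seven : Real.exp (7 / 4) ≤ 7 := by
  refine le_of_pow_le_pow_left₀ (n := 4) (by norm_num) (by norm_num) ?_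
  calc Real.exp (7 / 4) ^ 4 = Real.exp 1 ^ 7 := by
        rw [← Real.exp_nat_mul, ← Real.exp_nat_mul]
        norm_num
    _ ≤ 3 ^ 7 := pow_le_pow_left₀ (Real.exp_pos 1).le Real.exp_one_lt_three.le 7
    _ ≤ 7 ^ 4 := by norm_num

lemma succ_pow_choose_two_le (K : ℕ) :
    (K + 1) ^ (K + 1).choose 2 ≤ K ^ K.choose 2 * (7 ^ K * K !) := by
  obtain hK | hK : K ≤ 1 ∨ 2 ≤ K := by omega
  · interval_cases K <;> decide
  have hK0 : (0 : ℝ) < K := by positivity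
  have hchoose : (((K + 1).choose 2 : ℕ) : ℝ) = K * (K + 1) / 2 := by
    rw [Nat.cast_choose_two]
    push_cast
    ring
  have hbase : (K + 1 : ℝ) ≤ K * Real.exp (1 / K) := by
    calc (K + 1 : ℝ) = K * (1 / K + 1) := by field_simp; ring
      _ ≤ K * Real.exp (1 / K) := by gcongr; exact Real.add_one_le_exp _
  have hexp : Real.exp (1 / K) ^ (K + 1).choose 2 ≤ Real.exp (3 / 4) ^ K := by
    have : (2 : ℝ) ≤ K := by exact_mod_cast hK
    rw [← Real.exp_nat_mul, ← Real.exp_nat_mul, Real.exp_le_exp, hchoose]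
    field_simp
    nlinarith
  have hfactorial : (K : ℝ) ^ K ≤ Real.exp 1 ^ K * K ! := by
    rw [← Real.exp_nat_mul, mul_one, ← div_le_iff₀ (by positivity)]
    exact Real.pow_div_factorial_le_exp _ hK0.le K
  have hreal : (K + 1 : ℝ) ^ (K + 1).choose 2 ≤ K ^ K.choose 2 * (7 ^ K * K !) := by
    calc (K + 1 : ℝ) ^ (K + 1).choose 2
        ≤ (K * Real.exp (1 / K)) ^ (K + 1).choose 2 := by gcongr
      _ = K ^ K.choose 2 * K ^ K * Real.exp (1 / K) ^ (K + 1).choose 2 := by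
        rw [mul_pow, Nat.choose_succ_succ' K 1, Nat.choose_one_right]
        ring
      _ ≤ K ^ K.choose 2 * (Real.exp 1 ^ K * K !) * Real.exp (3 / 4) ^ K := by gcongr
      _ = K ^ K.choose 2 * (Real.exp (7 / 4) ^ K * K !) := by
        rw [show (7 / 4 : ℝ) = 1 + 3 / 4 by norm_num, Real.exp_add]
        ring
      _ ≤ K ^ K.choose 2 * (7 ^ K * K !) := by gcongr; exact exp_seven_div_four_le_seven
  exact_mod_cast hreal

lemma pow_choose_two_le_pow_mul_prod_factorial (K : ℕ) :
    K ^ K.choose 2 ≤ 7 ^ K.choose 2 * ∏ k ∈ range K, k ! := by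
  induction K with
  | zero => simp
  | succ K ih =>
    calc (K + 1) ^ (K + 1).choose 2 ≤ K ^ K.choose 2 * (7 ^ K * K !) := succ_pow_choose_two_le K
      _ ≤ 7 ^ K.choose 2 * (∏ k ∈ range K, k !) * (7 ^ K * K !) := by gcongr
      _ = 7 ^ (K + 1).choose 2 * ∏ k ∈ range (K + 1), k ! := by
        rw [prod_range_succ, Nat.choose_succ_succ' K 1, Nat.choose_one_right]
        ring

lemma prod_choose_le_pow {K L T y : ℕ} (hTK : 7 * T ≤ K) {x : Fin K × Fin L → ℕ}
    (hx : ∀ i, x i ≤ T * y) :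
    ∏ i : Fin K × Fin L, (x i).choose i.1 ≤ y ^ (L * K.choose 2) := by
  have hT : T ^ K.choose 2 ≤ ∏ k ∈ range K, k ! := by
    refine Nat.le_of_mul_le_mul_left (c := 7 ^ K.choose 2) ?_ (by positivity)
    rw [← mul_pow]
    exact (Nat.pow_le_pow_left hTK _).trans (pow_choose_two_le_pow_mul_prod_factorial K)
  have hfactorial : ∏ i : Fin K × Fin L, (i.1 : ℕ)! = (∏ k ∈ range K, k !) ^ L := by
    rw [Fintype.prod_prod_type_right, prod_range]
    simp
  refine Nat.le_of_mul_le_mul_left (c := (∏ k ∈ range K, k !) ^ L) ?_ (by positivity)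
  calc (∏ k ∈ range K, k !) ^ L * ∏ i : Fin K × Fin L, (x i).choose i.1
      = ∏ i : Fin K × Fin L, (x i).descFactorial i.1 := by
        simp only [← hfactorial, ← prod_mul_distrib, Nat.descFactorial_eq_factorial_mul_choose]
    _ ≤ ∏ i : Fin K × Fin L, (T * y) ^ (i.1 : ℕ) := prod_le_prod' fun i _ =>
        (Nat.descFactorial_le_pow _ _).trans (Nat.pow_le_pow_left (hx i) _)
    _ = (T ^ K.choose 2) ^ L * y ^ (L * K.choose 2) := by
        rw [prod_pow_eq_pow_sum, sum_val_fst_eq_mul_choose_two, mul_pow, ← pow_mul, mul_comm L]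
    _ ≤ (∏ k ∈ range K, k !) ^ L * y ^ (L * K.choose 2) := by gcongr

lemma three_mul_sum_range_sq_le (n : ℕ) : 3 * ∑ k ∈ range n, k ^ 2 ≤ n ^ 3 := by
  induction n with
  | zero => simp
  | succ n ih =>
    rw [sum_range_succ]
    linarith [show (n + 1) ^ 3 = n ^ 3 + 3 * n ^ 2 + 3 * n + 1 by ring]

lemma six_mul_sum_range_product_add_sq_le (R S : ℕ) :
    6 * ∑ j ∈ range R ×ˢ range S, (j.1 + j.2) ^ 2 ≤
      R * S * (2 * R ^ 2 + 3 * R * S + 2 * S ^ 2) := by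
  have hR := three_mul_sum_range_sq_le R
  have hS := three_mul_sum_range_sq_le S
  have hmul : (2 * ∑ r ∈ range R, r) * (2 * ∑ s ∈ range S, s) ≤ R ^ 2 * S ^ 2 := by
    have h (n : ℕ) : 2 * ∑ k ∈ range n, k ≤ n ^ 2 := by
      rw [mul_comm, sum_range_id_mul_two, sq]
      exact Nat.mul_le_mul_left n (n.sub_le 1)
    exact Nat.mul_le_mul (h R) (h S)
  have hexpand : ∑ j ∈ range R ×ˢ range S, (j.1 + j.2) ^ 2 = S * ∑ r ∈ range R, r ^ 2 +
      2 * ((∑ r ∈ range R, r) * ∑ s ∈ range S, s) + R * ∑ s ∈ range S, s ^ 2 := by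
    rw [sum_mul_sum]
    simp only [sum_product, add_sq, sum_add_distrib, sum_const, card_range, smul_eq_mul, mul_assoc,
      ← mul_sum]
  rw [hexpand]
  nlinarith [Nat.mul_le_mul_left S hR, Nat.mul_le_mul_left R hS]

-- Optimising the weight `c` in `2 * c * l * t ≤ c ^ 2 * l ^ 2 + t ^ 2` is Cauchy–Schwarz.
lemma twelve_mul_sum_mul_add_le {K L R S : ℕ} (c : ℕ) (σ : Equiv.Perm (Fin K × Fin L))
    {f : Fin K × Fin L → ℕ × ℕ} (hf : Function.Injective f)
    (hfRS : ∀ i, f i ∈ range R ×ˢ range S) :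
    12 * c * ∑ i, ((σ i).2 : ℕ) * ((f i).1 + (f i).2) ≤
      2 * c ^ 2 * (K * L ^ 3) + R * S * (2 * R ^ 2 + 3 * R * S + 2 * S ^ 2) := by
  have hamgm : 2 * c * ∑ i, ((σ i).2 : ℕ) * ((f i).1 + (f i).2) ≤
      c ^ 2 * ∑ i, ((σ i).2 : ℕ) ^ 2 + ∑ i, ((f i).1 + (f i).2) ^ 2 := by
    rw [mul_sum, mul_sum, ← sum_add_distrib]
    refine sum_le_sum fun i _ => ?_
    have := two_mul_le_add_sq (c * ((σ i).2 : ℕ)) ((f i).1 + (f i).2)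
    linarith
  have hrows : 3 * ∑ i, ((σ i).2 : ℕ) ^ 2 ≤ K * L ^ 3 := by
    rw [Equiv.sum_comp σ fun i => (i.2 : ℕ) ^ 2, Fintype.sum_prod_type]
    simp only [Fin.sum_univ_eq_sum_range fun k => k ^ 2]
    simpa [mul_left_comm] using Nat.mul_le_mul_left K (three_mul_sum_range_sq_le L)
  have hcols : ∑ i, ((f i).1 + (f i).2) ^ 2 ≤ ∑ j ∈ range R ×ˢ range S, (j.1 + j.2) ^ 2 := by
    rw [← sum_image (f := fun j : ℕ × ℕ => (j.1 + j.2) ^ 2) hf.injOn]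
    exact sum_le_sum_of_subset (image_subset_iff.2 fun i _ => hfRS i)
  have := six_mul_sum_range_product_add_sq_le R S
  have := Nat.mul_le_mul_left (c ^ 2) hrows
  linarith

lemma abs_det_interpolationMatrix_submatrix_le {R : Type*} [CommRing R] [LinearOrder R]
    [IsStrictOrderedRing R] {a b W : R} (hW : 1 ≤ W) (ha : |a| ≤ W) (hb : |b| ≤ W)
    {y K L M S E : ℕ} (hSK : 7 * S ≤ K) (hMy : M ≤ y) {f : Fin K × Fin L → ℕ × ℕ}
    (hf : ∀ i, f i ∈ range M ×ˢ range S)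
    (hE : ∀ σ : Equiv.Perm (Fin K × Fin L), ∑ i, ((σ i).2 : ℕ) * ((f i).1 + (f i).2) ≤ E) :
    |((interpolationMatrix a b y K L).submatrix id f).det| ≤
      (K * L)! * (y ^ (L * K.choose 2) * W ^ E) := by
  have hx : ∀ i, (f i).1 + (f i).2 * y ≤ S * y := fun i => by
    obtain ⟨hr, hs⟩ := mem_product.1 (hf i)
    calc (f i).1 + (f i).2 * y ≤ ((f i).2 + 1) * y := by linarith [mem_range.1 hr]
      _ ≤ S * y := Nat.mul_le_mul_right y (mem_range.1 hs)
  have hentry : ∀ i j, |(interpolationMatrix a b y K L).submatrix id f i j| ≤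
      ((f j).1 + (f j).2 * y).choose i.1 * W ^ ((i.2 : ℕ) * ((f j).1 + (f j).2)) := fun i j => by
    simp only [interpolationMatrix, Matrix.submatrix_apply, id, Matrix.of_apply, abs_mul,
      Nat.abs_cast, abs_pow]
    rw [mul_comm (i.2 : ℕ), pow_mul, pow_add]
    gcongr
  have hprod (σ : Equiv.Perm (Fin K × Fin L)) :
      ∏ i, |(interpolationMatrix a b y K L).submatrix id f (σ i) i| ≤
        y ^ (L * K.choose 2) * W ^ E := by
    have hchoose := prod_choose_le_pow hSK fun i => hx (σ.symm i)
    rw [← Equiv.prod_comp σ] at hchoose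
    simp only [Equiv.symm_apply_apply] at hchoose
    refine (prod_le_prod (fun _ _ => abs_nonneg _) fun i _ => hentry (σ i) i).trans ?_
    rw [prod_mul_distrib, prod_pow_eq_pow_sum]
    gcongr
    · exact_mod_cast hchoose
    · exact hE σ
  simpa using abs_det_le_factorial_mul hprod

end UpperBound

section MainInequality

open Finset
open scoped Nat

-- With `K = 49ℓ`, `L = ℓ` and an `8ℓ × 7ℓ` grid of columns, `15` is the integer closest to the
-- optimal weight `c`, which bounds the exponent by about `245.1ℓ⁴`. What the argument rests on is
-- `2 * 246 < 49 ^ 2 / 2`.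
lemma pow_choose_two_le_of_pow_dvd_pow_sub {a b : ℤ} {w y ℓ : ℕ} (hw : 0 < w) (hℓ : 0 < ℓ)
    (ha : 1 < a) (ha' : |a| ≤ (w : ℤ) ^ 2) (hb : b ≠ 0) (hb' : |b| ≤ (w : ℤ) ^ 2)
    (hwa : (w : ℤ) ∣ a - 1) (hab : (w : ℤ) ^ (49 * ℓ * ℓ) ∣ a ^ y - b) (hy : 49 * ℓ * ℓ ≤ y) :
    w ^ (49 * ℓ * ℓ).choose 2 ≤ w ^ (ℓ * (49 * ℓ).choose 2) *
      ((49 * ℓ * ℓ)! * (y ^ (ℓ * (49 * ℓ).choose 2) * (w ^ 2) ^ (246 * ℓ ^ 4))) := by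
  have hgrid : 7 * ℓ + ℓ ≤ y := by nlinarith
  obtain ⟨f, hf, hfgrid, hdet⟩ := exists_det_interpolationMatrix_submatrix_ne_zero (y := y)
    (K := 49 * ℓ) (L := ℓ) (R := 7 * ℓ) (S := 7 * ℓ)
    (pow_right_injective₀ (by positivity) ha.ne') hb (by linarith) (by omega)
  have hdvd := pow_choose_two_dvd_pow_mul_det_interpolationMatrix hwa hab f
  have hexp (σ : Equiv.Perm (Fin (49 * ℓ) × Fin ℓ)) :
      ∑ i, ((σ i).2 : ℕ) * ((f i).1 + (f i).2) ≤ 246 * ℓ ^ 4 := by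
    have := twelve_mul_sum_mul_add_le 15 σ hf hfgrid
    have : 0 < ℓ ^ 4 := by positivity
    nlinarith
  have hupper := abs_det_interpolationMatrix_submatrix_le (W := (w : ℤ) ^ 2)
    (one_le_pow₀ (by exact_mod_cast hw)) ha' hb' (by omega) hgrid hfgrid hexp
  set D := ((interpolationMatrix a b y (49 * ℓ) ℓ).submatrix id f).det
  zify
  calc (w : ℤ) ^ (49 * ℓ * ℓ).choose 2 ≤ |(w : ℤ) ^ (ℓ * (49 * ℓ).choose 2) * D| :=
        Int.le_of_dvd (abs_pos.2 (mul_ne_zero (by positivity) hdet)) ((dvd_abs _ _).2 hdvd)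
    _ = (w : ℤ) ^ (ℓ * (49 * ℓ).choose 2) * |D| := by rw [abs_mul, abs_pow, Nat.abs_cast]
    _ ≤ _ := by gcongr

lemma mul_log_le_of_pow_dvd_pow_sub {a b : ℤ} {w y ℓ : ℕ} (hw : 0 < w) (hℓ : 0 < ℓ)
    (ha : 1 < a) (ha' : |a| ≤ (w : ℤ) ^ 2) (hb : b ≠ 0) (hb' : |b| ≤ (w : ℤ) ^ 2)
    (hwa : (w : ℤ) ∣ a - 1) (hab : (w : ℤ) ^ (49 * ℓ * ℓ) ∣ a ^ y - b) (hy : 49 * ℓ * ℓ ≤ y) :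
    28 * (ℓ : ℝ) ^ 2 * Real.log w ≤ (49 * ℓ + 1) * (Real.log w + Real.log y) := by
  have hy0 : 0 < y := by nlinarith
  have hnat : w ^ (49 * ℓ * ℓ).choose 2 ≤ w ^ (ℓ * (49 * ℓ).choose 2) *
      (y ^ (49 * ℓ * ℓ) * (y ^ (ℓ * (49 * ℓ).choose 2) * (w ^ 2) ^ (246 * ℓ ^ 4))) :=
    (pow_choose_two_le_of_pow_dvd_pow_sub hw hℓ ha ha' hb hb' hwa hab hy).trans <| by
      gcongr
      exact (Nat.factorial_le_pow _).trans (Nat.pow_le_pow_left hy _)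
  have hlog := Real.log_le_log (by positivity) (Nat.cast_le (α := ℝ).2 hnat)
  push_cast at hlog
  rw [Real.log_mul (by positivity) (by positivity), Real.log_mul (by positivity) (by positivity),
    Real.log_mul (by positivity) (by positivity)] at hlog
  simp only [Real.log_pow] at hlog
  push_cast [Nat.cast_choose_two] at hlog
  have : 0 ≤ (ℓ : ℝ) ^ 2 * Real.log w := by positivity
  have : 0 ≤ (ℓ : ℝ) ^ 4 * Real.log w := by positivity
  refine le_of_mul_le_mul_left ?_ (show 0 < 49 / 2 * (ℓ : ℝ) ^ 2 by positivity)
  linarith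

lemma mul_one_add_half_log_lt {y ℓ : ℕ} (hℓ : 10 ≤ ℓ) (hy : 0 < y) (hyℓ : y ≤ 49 * (ℓ + 1) ^ 2) :
    (49 * ℓ + 1) * (1 + Real.log y / 2) < 28 * (ℓ : ℝ) ^ 2 := by
  have hexp : (54 : ℝ) ≤ Real.exp 4 := by
    calc (54 : ℝ) ≤ 2.718 ^ 4 := by norm_num
      _ ≤ Real.exp 1 ^ 4 := by
        have := Real.exp_one_gt_d9
        gcongr
        linarith
      _ = Real.exp 4 := by rw [← Real.exp_nat_mul]; norm_num
  have hlog : Real.log (7 * (ℓ + 1)) ≤ 3 + 7 * (ℓ + 1) / 54 := by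
    have htangent := Real.log_le_sub_one_of_pos
      (show (0 : ℝ) < 7 * (ℓ + 1) / Real.exp 4 by positivity)
    rw [Real.log_div (by positivity) (Real.exp_pos 4).ne', Real.log_exp] at htangent
    have : 7 * ((ℓ : ℝ) + 1) / Real.exp 4 ≤ 7 * (ℓ + 1) / 54 := by gcongr
    linarith
  have hlogy : Real.log y ≤ 2 * Real.log (7 * (ℓ + 1)) := by
    have hcast : (y : ℝ) ≤ (7 * (ℓ + 1)) ^ 2 := by
      have : (y : ℝ) ≤ 49 * (ℓ + 1) ^ 2 := by exact_mod_cast hyℓ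
      linarith
    refine (Real.log_le_log (by positivity) hcast).trans_eq ?_
    rw [Real.log_pow, Nat.cast_ofNat]
  have hℓ' : (10 : ℝ) ≤ ℓ := by exact_mod_cast hℓ
  calc (49 * ℓ + 1) * (1 + Real.log y / 2)
      ≤ (49 * ℓ + 1) * (1 + (3 + 7 * ((ℓ : ℝ) + 1) / 54)) := by gcongr; linarith
    _ < 28 * (ℓ : ℝ) ^ 2 := by nlinarith

lemma exists_mul_sq_le_and_le_mul_succ_sq {y : ℕ} (hy : 4900 ≤ y) :
    ∃ ℓ, 10 ≤ ℓ ∧ 49 * ℓ * ℓ ≤ y ∧ y ≤ 49 * (ℓ + 1) ^ 2 := by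
  refine ⟨(y / 49).sqrt, Nat.le_sqrt.2 (by omega), ?_, ?_⟩
  · have := Nat.sqrt_le (y / 49)
    rw [mul_assoc]
    omega
  · have := Nat.sqrt_lt'.1 (Nat.lt_succ_self (y / 49).sqrt)
    rw [Nat.succ_eq_add_one] at this
    omega

theorem lt_mul_log_of_pow_dvd_pow_sub {a b : ℤ} {w y : ℕ} (hw : 8 ≤ w)
    (ha : 1 < a) (ha' : |a| ≤ (w : ℤ) ^ 2) (hb : b ≠ 0) (hb' : |b| ≤ (w : ℤ) ^ 2)
    (hwa : (w : ℤ) ∣ a - 1) (hab : (w : ℤ) ^ y ∣ a ^ y - b) :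
    (y : ℝ) < 2521 * Real.log w := by
  have hlogw : 2 ≤ Real.log w := by
    rw [Real.le_log_iff_exp_le (by positivity)]
    calc Real.exp 2 = Real.exp 1 ^ 2 := by rw [← Real.exp_nat_mul]; norm_num
      _ ≤ 2.8 ^ 2 := by
        have := Real.exp_one_lt_d9
        gcongr
        linarith
      _ ≤ 8 := by norm_num
      _ ≤ w := by exact_mod_cast hw
  by_contra! hy
  have hy4900 : 4900 ≤ y := by
    have : (4900 : ℝ) ≤ y := by linarith
    exact_mod_cast this
  obtain ⟨ℓ, hℓ, hℓy, hyℓ⟩ := exists_mul_sq_le_and_le_mul_succ_sq hy4900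
  have hmain := mul_log_le_of_pow_dvd_pow_sub (by omega) (by omega) ha ha' hb hb' hwa
    ((pow_dvd_pow _ hℓy).trans hab) hℓy
  have hlog := mul_one_add_half_log_lt hℓ (by omega) hyℓ
  have hlogy : 0 ≤ Real.log y := Real.log_natCast_nonneg y
  have : 28 * (ℓ : ℝ) ^ 2 * Real.log w < 28 * (ℓ : ℝ) ^ 2 * Real.log w := by
    calc 28 * (ℓ : ℝ) ^ 2 * Real.log w
        ≤ (49 * ℓ + 1) * (Real.log w + Real.log y) := hmain
      _ ≤ (49 * ℓ + 1) * (1 + Real.log y / 2) * Real.log w := by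
        rw [mul_assoc]
        gcongr
        nlinarith
      _ < 28 * (ℓ : ℝ) ^ 2 * Real.log w := by gcongr
  exact this.false

theorem lt_mul_log_of_pow_add_eq_pow {u v w y z : ℕ} (hw : 8 ≤ w) (hv : 1 < v)
    (hvw : v ≡ 1 [MOD w]) (huv : u + v = w ^ 2) (h : v ^ y + u = w ^ z) :
    (y : ℝ) < 2521 * Real.log w := by
  have hwv : w ∣ v - 1 := (Nat.modEq_iff_dvd' hv.le).1 hvw.symm
  have hwlt : w < v := by
    have := Nat.le_of_dvd (by omega) hwv
    omega
  have hyz : y ≤ z := by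
    refine (Nat.pow_le_pow_iff_right (show 1 < w by omega)).1 ?_
    exact (Nat.pow_le_pow_left hwlt.le y).trans (h ▸ Nat.le_add_right _ _)
  have hu : u ≠ 0 := by
    rintro rfl
    have hdvd : w ∣ v := ⟨w, by linarith [sq w]⟩
    have := Nat.le_of_dvd one_pos ((Nat.dvd_sub_iff_right hv.le hdvd).1 hwv)
    omega
  have huvZ : (u : ℤ) + v = w ^ 2 := by exact_mod_cast huv
  refine lt_mul_log_of_pow_dvd_pow_sub (a := v) (b := -u) hw (by exact_mod_cast hv) ?_ ?_ ?_ ?_ ?_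
  · rw [Nat.abs_cast]
    omega
  · simpa using hu
  · rw [abs_neg, Nat.abs_cast]
    omega
  · exact_mod_cast (Nat.modEq_iff_dvd.1 hvw.symm)
  · rw [sub_neg_eq_add]
    exact_mod_cast h ▸ pow_dvd_pow w hyz

end MainInequality

section SmallCases

lemma seven_pow_add_ne_six_pow {y z : ℕ} (hy : 2 ≤ y) : 7 ^ y + 29 ≠ 6 ^ z := by
  intro h
  have hz : 3 ≤ z := by
    by_contra! hz
    have := Nat.pow_le_pow_right (show 0 < 7 by norm_num) hy
    have := Nat.pow_le_pow_right (show 0 < 6 by norm_num) (Nat.le_of_lt_succ hz)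
    omega
  have hsix : 6 ^ z % 8 = 0 := Nat.mod_eq_zero_of_dvd <|
    (show 8 ∣ 6 ^ 3 by norm_num).trans (pow_dvd_pow 6 hz)
  have hseven (y : ℕ) : 7 ^ y % 8 = 1 ∨ 7 ^ y % 8 = 7 := by
    induction y with
    | zero => simp
    | succ y ih => rw [pow_succ]; omega
  have := hseven y
  omega

lemma fifteen_pow_add_ne_seven_pow {y z : ℕ} (hy : 2 ≤ y) : 15 ^ y + 34 ≠ 7 ^ z := by
  intro h
  have hfifteen : 15 ^ y % 25 = 0 := Nat.mod_eq_zero_of_dvd <|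
    (show 25 ∣ 15 ^ 2 by norm_num).trans (pow_dvd_pow 15 hy)
  have hseven (z : ℕ) :
      7 ^ z % 25 = 1 ∨ 7 ^ z % 25 = 7 ∨ 7 ^ z % 25 = 24 ∨ 7 ^ z % 25 = 18 := by
    induction z with
    | zero => simp
    | succ z ih => rw [pow_succ]; omega
  have := hseven z
  omega

lemma le_one_of_mul_lt_eight {p n y z : ℕ} (hp : 5 < p) (hn : 0 < n) (hpn : p * n < 8)
    (h : (p * (p - 5) * n ^ 2 + 1) ^ y + (5 * p * n ^ 2 - 1) = (p * n) ^ z) : y ≤ 1 := by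
  by_contra! hy
  obtain rfl : n = 1 := by nlinarith
  obtain rfl | rfl : p = 6 ∨ p = 7 := by omega
  · exact seven_pow_add_ne_six_pow hy (by simpa using h)
  · exact fifteen_pow_add_ne_seven_pow hy (by simpa using h)

end SmallCases

theorem stmt_9_general (p n : ℕ) (hp : 5 < p) (hn : 0 < n) (u v w : ℕ)
    (hu : u = 5 * p * n ^ 2 - 1) (hv : v = p * (p - 5) * n ^ 2 + 1) (hw : w = p * n)
    (y z : ℕ) (heq : w ^ z - v ^ y = u) :
    (y : ℝ) < 2521 * Real.log (p * n) := by
  have hn2 : 0 < n ^ 2 := by positivity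
  have hu1 : 1 < 5 * p * n ^ 2 := by nlinarith
  have hpow : v ^ y + u = w ^ z := by omega
  rw [← Nat.cast_mul, ← hw]
  rcases le_or_gt 8 w with hw8 | hw8
  · obtain ⟨m, rfl⟩ : ∃ m, p = m + 5 + 1 := ⟨p - 6, by omega⟩
    have hv' : v = w * ((m + 1) * n) + 1 := by
      rw [hv, hw, show m + 5 + 1 - 5 = m + 1 by omega]
      ring
    refine lt_mul_log_of_pow_add_eq_pow hw8 ?_ ?_ ?_ hpow
    · rw [hv', lt_add_iff_pos_left]
      positivity
    · rw [hv']
      simp [Nat.ModEq]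
    · have : u + 1 + v = w ^ 2 + 1 := by
        rw [hu, Nat.sub_add_cancel hu1.le, hv', hw]
        ring
      omega
  · have hy : (y : ℝ) ≤ 1 := by
      exact_mod_cast le_one_of_mul_lt_eight hp hn (hw ▸ hw8) (hu ▸ hv ▸ hw ▸ hpow)
    have hlog : 1 ≤ Real.log w := by
      rw [Real.le_log_iff_exp_le (by rw [hw]; positivity)]
      have : (3 : ℝ) ≤ w := by exact_mod_cast (by nlinarith : 3 ≤ w)
      linarith [Real.exp_one_lt_three]
    linarith

theorem stmt_9 (p n : ℕ) (hp : p.Prime) (hp3 : 3 < p) (hp4 : p % 4 = 3)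
    (hn : 0 < n)
    (u v w : ℕ) (hu : u = 5 * p * n ^ 2 - 1) (hv : v = p * (p - 5) * n ^ 2 + 1)
    (hw : w = p * n)
    (y z : ℕ) (hy : 3 ≤ y) (hz : 0 < z)
    (heq : w ^ z - v ^ y = u) :
    (y : ℝ) < 2521 * Real.log (p * n) :=
  stmt_9_general p n (by omega) hn u v w hu hv hw y z heq
end

section
/- Let p be a prime with p > 3 and p ≡ 3 (mod 4), and let n be a positive integer. Set u = 5pn² − 1, v = p(p−5)n² + 1 and w = pn. If positive integers y, z with y ≥ 3 satisfy w^z − v^y = u, then y > n² − 2. -/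
/-!
The number `5` can be replaced by any `a` with `0 < a < p`. Put `M = p n²`, so that `w² = p M`,
`u = a M - 1` and `v = (p - a) M + 1`. Modulo `M²` the binomial theorem gives
`v ^ y + u ≡ M (y (p - a) + a)`, hence every divisor `d` of `M` with `M d ∣ w ^ z` divides
`y (p - a) + a`. As `u + v = w²`, a solution with `y > 1` has `z ≥ 3`, and `d = w` rules out
`y = 2`. For `y ≥ 3` one has `w ≤ v`, so `z ≥ 4`, and `d = M` yields `p n² ≤ y (p - a) + a`,
which is impossible for `y < n²`.
-/

theorem dvd_natCast_mul_add_of_mul_dvd {R : Type*} [CommRing R] [IsDomain R] {a b d M : R}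
    (hM : M ≠ 0) (hdM : d ∣ M) {y : ℕ} (h : M * d ∣ (b * M + 1) ^ y + a * M - 1) :
    d ∣ y * b + a := by
  have h_sq : M * d ∣ (b * M) ^ 2 :=
    (mul_dvd_mul_left M hdM).trans ⟨b ^ 2, by ring⟩
  have h_binomial : M * d ∣ (1 + b * M) ^ y - 1 ^ (y - 1) * (b * M) * y - 1 ^ y :=
    h_sq.trans (sq_dvd_add_pow_sub_sub (b * M) 1 y)
  refine (mul_dvd_mul_iff_left hM).1 ?_
  convert dvd_sub h h_binomial using 1
  ring

/-- `(y, z)` solves Pillai's equation `w ^ z - v ^ y = u`, where `u = a p n² - 1`,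
`v = b p n² + 1`, `w = p n` and `p = a + b`. The terms are moved so that no truncated subtraction
of natural numbers occurs. -/
def IsPillaiSolution (a b n y z : ℕ) : Prop :=
  (b * ((a + b) * n ^ 2) + 1) ^ y + a * ((a + b) * n ^ 2) = ((a + b) * n) ^ z + 1

namespace IsPillaiSolution

variable {a b n y z : ℕ}

theorem dvd_mul_add (h : IsPillaiSolution a b n y z) (ha : 0 < a) (hn : 0 < n) {d : ℕ}
    (hd : d ∣ (a + b) * n ^ 2) (hdvd : (a + b) * n ^ 2 * d ∣ ((a + b) * n) ^ z) :
    d ∣ y * b + a := by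
  have hM : (a + b) * n ^ 2 ≠ 0 := by positivity
  unfold IsPillaiSolution at h
  generalize (a + b) * n ^ 2 = M at h hM hd hdvd
  have h_int : (b * M + 1 : ℤ) ^ y + a * M - 1 = (((a + b) * n) ^ z : ℕ) := by
    rw [sub_eq_iff_eq_add]
    exact_mod_cast h
  have hd_int : (d : ℤ) ∣ y * b + a := by
    refine dvd_natCast_mul_add_of_mul_dvd (M := (M : ℤ)) (mod_cast hM) (mod_cast hd) ?_
    rw [h_int]
    exact_mod_cast hdvd
  exact_mod_cast hd_int

theorem two_lt_right (h : IsPillaiSolution a b n y z) (ha : 0 < a) (hb : 0 < b) (hn : 0 < n)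
    (hy : 1 < y) : 2 < z := by
  have h_base : 1 < b * ((a + b) * n ^ 2) + 1 := by
    have : 0 < b * ((a + b) * n ^ 2) := by positivity
    omega
  have h_pow : ((a + b) * n) ^ 2 < ((a + b) * n) ^ z := by
    have h_sq : ((a + b) * n) ^ 2 + 1 =
        (b * ((a + b) * n ^ 2) + 1) + a * ((a + b) * n ^ 2) := by ring
    have h_v := lt_self_pow₀ h_base hy
    unfold IsPillaiSolution at h
    omega
  exact (pow_right_mono₀ (Nat.one_le_iff_ne_zero.2 (by positivity))).reflect_lt h_pow

theorem left_ne_two (h : IsPillaiSolution a b n y z) (ha : 0 < a) (hb : 0 < b) (hn : 0 < n) :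
    y ≠ 2 := by
  rintro rfl
  have hz : 3 ≤ z := h.two_lt_right ha hb hn one_lt_two
  have h_dvd : (a + b) * n ∣ 2 * b + a :=
    h.dvd_mul_add ha hn ⟨n, by ring⟩
      (Dvd.dvd.trans ⟨a + b, by ring⟩ (pow_dvd_pow _ hz))
  have h_dvd_add : a + b ∣ (a + b) + b := by
    rw [show (a + b) + b = 2 * b + a by ring]
    exact (dvd_mul_right (a + b) n).trans h_dvd
  have h_le : a + b ≤ b := Nat.le_of_dvd hb ((Nat.dvd_add_right dvd_rfl).1 h_dvd_add)
  omega

theorem three_lt_right (h : IsPillaiSolution a b n y z) (ha : 0 < a) (hb : 0 < b) (hn : 0 < n)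
    (hy : 3 ≤ y) : 3 < z := by
  have h_base : (a + b) * n ≤ b * ((a + b) * n ^ 2) + 1 :=
    calc (a + b) * n ≤ (a + b) * n ^ 2 := by gcongr; exact Nat.le_self_pow two_ne_zero n
      _ ≤ b * ((a + b) * n ^ 2) := Nat.le_mul_of_pos_left _ hb
      _ ≤ b * ((a + b) * n ^ 2) + 1 := Nat.le_succ _
  have hu : 1 < a * ((a + b) * n ^ 2) :=
    calc 1 < a + b := by omega
      _ ≤ (a + b) * n ^ 2 := Nat.le_mul_of_pos_right _ (by positivity)
      _ ≤ a * ((a + b) * n ^ 2) := Nat.le_mul_of_pos_left _ ha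
  have h_pow : ((a + b) * n) ^ 3 < ((a + b) * n) ^ z :=
    calc ((a + b) * n) ^ 3 ≤ (b * ((a + b) * n ^ 2) + 1) ^ 3 := by gcongr
      _ ≤ (b * ((a + b) * n ^ 2) + 1) ^ y := by gcongr; omega
      _ < ((a + b) * n) ^ z := by unfold IsPillaiSolution at h; omega
  exact (pow_right_mono₀ (Nat.one_le_iff_ne_zero.2 (by positivity))).reflect_lt h_pow

theorem sq_le_left (h : IsPillaiSolution a b n y z) (ha : 0 < a) (hb : 0 < b) (hn : 0 < n)
    (hy : 1 < y) : n ^ 2 ≤ y := by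
  have hy3 : 3 ≤ y := by
    have := h.left_ne_two ha hb hn
    omega
  have hz : 4 ≤ z := h.three_lt_right ha hb hn hy3
  have h_dvd : (a + b) * n ^ 2 ∣ y * b + a :=
    h.dvd_mul_add ha hn dvd_rfl
      (Dvd.dvd.trans ⟨(a + b) ^ 2, by ring⟩ (pow_dvd_pow _ hz))
  have h_le : (a + b) * n ^ 2 ≤ y * b + a := Nat.le_of_dvd (by positivity) h_dvd
  have h_mul : n ^ 2 * b ≤ y * b := by
    have : a ≤ a * n ^ 2 := Nat.le_mul_of_pos_right _ (by positivity)
    linarith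
  exact Nat.le_of_mul_le_mul_right h_mul hb

end IsPillaiSolution

theorem stmt_10_general {p n a : ℕ} (ha : 0 < a) (hap : a < p) (hn : 0 < n)
    {u v w : ℕ} (hu : u = a * p * n ^ 2 - 1) (hv : v = p * (p - a) * n ^ 2 + 1)
    (hw : w = p * n) {y z : ℕ} (hy : 1 < y) (heq : w ^ z - v ^ y = u) :
    n ^ 2 ≤ y := by
  obtain ⟨b, rfl⟩ := Nat.exists_eq_add_of_le hap.le
  have hb : 0 < b := by omega
  have hu_pos : 0 < u := by
    have : 1 * 2 * 1 ≤ a * (a + b) * n ^ 2 := by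
      gcongr
      · exact ha
      · omega
      · exact Nat.one_le_pow _ _ hn
    omega
  have hu_add : a * ((a + b) * n ^ 2) = u + 1 := by
    rw [← mul_assoc]
    omega
  have hv_eq : b * ((a + b) * n ^ 2) + 1 = v := by
    rw [hv, Nat.add_sub_cancel_left]
    ring
  have h : IsPillaiSolution a b n y z := by
    rw [IsPillaiSolution, hu_add, hv_eq, ← hw]
    omega
  exact h.sq_le_left ha hb hn hy

theorem stmt_10 (p n : ℕ) (hp : p.Prime) (hp3 : 3 < p) (hp4 : p % 4 = 3)
    (hn : 0 < n)
    (u v w : ℕ) (hu : u = 5 * p * n ^ 2 - 1) (hv : v = p * (p - 5) * n ^ 2 + 1)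
    (hw : w = p * n)
    (y z : ℕ) (hy : 3 ≤ y) (hz : 0 < z)
    (heq : w ^ z - v ^ y = u) :
    (n : ℤ) ^ 2 - 2 < (y : ℤ) := by
  have h : n ^ 2 ≤ y := stmt_10_general (by norm_num) (by omega) hn hu hv hw (by omega) heq
  zify at h
  linarith
end

section
/- Let p be a prime with p > 3 and p ≡ 3 (mod 4), and let n be a positive integer. Set u = 5pn² − 1, v = p(p−5)n² + 1 and w = pn. If positive integers y, z with y ≥ 2 satisfy w^z − v^y = u, then z < 2y. -/
/-!
Since `u + v = w ^ 2`, the trivial solution of `w ^ z - v ^ y = u` is `(y, z) = (1, 2)`. For `y ≥ 2`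
expand one factor of `(u + v) ^ y = u * (u + v) ^ (y - 1) + v * (u + v) ^ (y - 1)`: the first
summand exceeds `u` and the second is at least `v ^ y`, so `w ^ (2 * y)` is larger than
`v ^ y + u = w ^ z`.
-/

section OrderedSemiring

variable {R : Type*} [Semiring R] [PartialOrder R] [IsStrictOrderedRing R] {u v w : R} {d y z : ℕ}

theorem pow_add_lt_add_pow (hu : 0 < u) (hv : 0 ≤ v) (huv : 1 < u + v) (hy : 2 ≤ y) :
    v ^ y + u < (u + v) ^ y := by
  obtain ⟨k, rfl⟩ : ∃ k, y = k + 1 := ⟨y - 1, by omega⟩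
  have one_lt_pow : 1 < (u + v) ^ k := one_lt_pow₀ huv (by omega)
  have pow_le_pow : v ^ k ≤ (u + v) ^ k := pow_le_pow_left₀ hv (le_add_of_nonneg_left hu.le) k
  calc v ^ (k + 1) + u = u * 1 + v * v ^ k := by rw [mul_one, pow_succ', add_comm]
    _ < u * (u + v) ^ k + v * (u + v) ^ k :=
      add_lt_add_of_lt_of_le (mul_lt_mul_of_pos_left one_lt_pow hu)
        (mul_le_mul_of_nonneg_left pow_le_pow hv)
    _ = (u + v) ^ (k + 1) := by rw [pow_succ', add_mul]

theorem exponent_lt_mul_of_pow_le_pow_add (hu : 0 < u) (hv : 0 ≤ v) (hw : 1 < w) (hd : d ≠ 0)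
    (huv : u + v = w ^ d) (hy : 2 ≤ y) (h : w ^ z ≤ v ^ y + u) : z < d * y := by
  have one_lt_add : 1 < u + v := huv ▸ one_lt_pow₀ hw hd
  refine (pow_lt_pow_iff_right₀ hw).mp ?_
  calc w ^ z ≤ v ^ y + u := h
    _ < (u + v) ^ y := pow_add_lt_add_pow hu hv one_lt_add hy
    _ = w ^ (d * y) := by rw [huv, pow_mul]

end OrderedSemiring

theorem five_mul_sub_one_add_eq_sq {p n : ℕ} (hp : 5 ≤ p) (hn : 0 < n) :
    (5 * p * n ^ 2 - 1) + (p * (p - 5) * n ^ 2 + 1) = (p * n) ^ 2 := by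
  obtain ⟨q, rfl⟩ := Nat.exists_eq_add_of_le hp
  have one_le : 1 ≤ 5 * (5 + q) * n ^ 2 := Nat.succ_le_of_lt (by positivity)
  rw [Nat.add_sub_cancel_left]
  zify [one_le]
  ring

theorem stmt_12_general {p n u v w y z : ℕ} (hp : 5 ≤ p) (hn : 0 < n)
    (hu : u = 5 * p * n ^ 2 - 1) (hv : v = p * (p - 5) * n ^ 2 + 1) (hw : w = p * n)
    (hy : 2 ≤ y) (heq : w ^ z - v ^ y = u) : z < 2 * y := by
  have one_lt_w : 1 < w := by nlinarith
  have u_pos : 0 < u := by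
    have : 0 < p * n ^ 2 := by positivity
    rw [hu, mul_assoc]
    omega
  have add_eq_sq : u + v = w ^ 2 := by
    rw [hu, hv, hw, five_mul_sub_one_add_eq_sq hp hn]
  exact exponent_lt_mul_of_pow_le_pow_add u_pos v.zero_le one_lt_w two_ne_zero add_eq_sq hy
    (tsub_le_iff_left.mp heq.le)

theorem stmt_12 (p n : ℕ) (hp : p.Prime) (hp3 : 3 < p) (hp4 : p % 4 = 3)
    (hn : 0 < n)
    (u v w : ℕ) (hu : u = 5 * p * n ^ 2 - 1) (hv : v = p * (p - 5) * n ^ 2 + 1)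
    (hw : w = p * n)
    (y z : ℕ) (hy : 2 ≤ y) (hz : 0 < z)
    (heq : w ^ z - v ^ y = u) :
    z < 2 * y :=
  stmt_12_general (by omega) hn hu hv hw hy heq
end

section
/- Let p be a prime with p > 3 and p ≡ 3 (mod 4), and let n be a positive integer. Set u = 5pn² − 1, v = p(p−5)n² + 1 and w = pn. If positive integers y, z with z ≥ 4 satisfy w^z − v^y = u, then pn² divides 5 + (p−5)y. -/
/-!
Put `m = p * n ^ 2`. Then `u = 5 * m - 1` and `v = (p - 5) * m + 1`, while `m ^ 2` divides `w ^ 4`.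
The binomial theorem gives `v ^ y ≡ 1 + (p - 5) * m * y` modulo `m ^ 2`, so reducing
`w ^ z = u + v ^ y` modulo `m ^ 2` yields `m ^ 2 ∣ m * (5 + (p - 5) * y)`, and `m` cancels.
Nothing changes when `5` and `p - 5` are replaced by arbitrary `a` and `b`.
-/

theorem sq_dvd_mul_add_one_pow_sub {R : Type*} [CommRing R] (m b : R) (y : ℕ) :
    m ^ 2 ∣ (b * m + 1) ^ y - (1 + m * (b * y)) := by
  have hbinom : (b * m) ^ 2 ∣ (b * m + 1) ^ y - (1 + m * (b * y)) := by
    convert sq_dvd_add_pow_sub_sub (b * m) 1 y using 1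
    ring
  exact (pow_dvd_pow_of_dvd (dvd_mul_left m b) 2).trans hbinom

section NoZeroDivisors

variable {R : Type*} [CommRing R] [NoZeroDivisors R]

theorem sq_dvd_mul_sub_one_add_mul_add_one_pow_iff {m : R} (hm : m ≠ 0) (a b : R) (y : ℕ) :
    m ^ 2 ∣ (a * m - 1) + (b * m + 1) ^ y ↔ m ∣ a + b * y := by
  have hsplit : (a * m - 1) + (b * m + 1) ^ y =
      m * (a + b * y) + ((b * m + 1) ^ y - (1 + m * (b * y))) := by ring
  rw [hsplit, dvd_add_left (sq_dvd_mul_add_one_pow_sub m b y), sq, mul_dvd_mul_iff_left hm]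

theorem stmt_14_general {p n : R} (hp : p ≠ 0) (hn : n ≠ 0) (a b : R) {y z : ℕ} (hz : 4 ≤ z)
    (heq : (p * n) ^ z - (p * b * n ^ 2 + 1) ^ y = a * p * n ^ 2 - 1) :
    p * n ^ 2 ∣ a + b * y := by
  have hm : p * n ^ 2 ≠ 0 := mul_ne_zero hp (pow_ne_zero 2 hn)
  have hdvd : (p * n ^ 2) ^ 2 ∣ (p * n) ^ z :=
    .trans ⟨p ^ 2, by ring⟩ (pow_dvd_pow (p * n) hz)
  rw [← sq_dvd_mul_sub_one_add_mul_add_one_pow_iff hm]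
  convert hdvd using 1
  linear_combination -heq

end NoZeroDivisors

theorem natCast_sub_eq_sub_one_of_tsub_eq {a b c : ℕ} (hc : 1 < c) (h : a - b = c - 1) :
    (a : ℤ) - b = c - 1 := by
  omega

theorem stmt_14 (p n : ℕ) (hp : p.Prime) (hp3 : 3 < p) (hp4 : p % 4 = 3)
    (hn : 0 < n)
    (u v w : ℕ) (hu : u = 5 * p * n ^ 2 - 1) (hv : v = p * (p - 5) * n ^ 2 + 1)
    (hw : w = p * n)
    (y z : ℕ) (hy : 0 < y) (hz : 4 ≤ z)
    (heq : w ^ z - v ^ y = u) :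
    p * n ^ 2 ∣ 5 + (p - 5) * y := by
  subst hu hv hw
  have one_lt : 1 < 5 * p * n ^ 2 := by nlinarith [pow_pos hn 2]
  exact_mod_cast stmt_14_general (p := (p : ℤ)) (n := n) (by positivity) (by positivity) 5
    (p - 5 : ℕ) hz (mod_cast natCast_sub_eq_sub_one_of_tsub_eq one_lt heq)
end
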